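/- Let G be a finite group whose Sylow 2-subgroup P is isomorphic to a generalized quaternion group, i.e. P ≅ QuaternionGroup(2^{n-2}) of order 2^n for some n ≥ 3. Then for every irreducible complex character χ of G, the restriction χ_P is a sum of characters of the form λ^P induced from irreducible characters λ of subgroups Q ≤ P with χ(1)_2 = |P : Q|. -/

import Mathlib

open scoped Classical

/-- The induced character (as a class function formula): for `f` a function on a
subgroup `H` of a finite group `G`, `inducedChar H f g = (1/|H|) ∑_{x ∈ G, xgx⁻¹ ∈ H} f (xgx⁻¹)`. -/
noncomputable def inducedChar {G : Type*} [Group G] [Fintype G] (H : Subgroup G)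
    (f : H → ℂ) : G → ℂ :=
  fun g => (Fintype.card H : ℂ)⁻¹ *
    ∑ x : G, if h : x * g * x⁻¹ ∈ H then f ⟨x * g * x⁻¹, h⟩ else 0

/-- `χ` is the character of an irreducible complex representation of `G`. -/
def IsIrreducibleCharacter {G : Type} [Group G] (χ : G → ℂ) : Prop :=
  ∃ V : FDRep ℂ G, CategoryTheory.Simple V ∧ χ = FDRep.character V

/-- The restriction of `χ` (a character of degree `d` of the ambient group `G`) to the
subgroup `P` is a sum of characters `λ^P` induced from irreducible characters `λ` of
subgroups `Q ≤ P` satisfying `d_p = |P : Q|` (the `p`-part of the degree equals the index). -/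
def SumInducedProperty (p : ℕ) {G : Type} [Group G] [Fintype G] (P : Subgroup G)
    (χ : G → ℂ) (d : ℕ) : Prop :=
  ∃ (n : ℕ) (Q : Fin n → Subgroup ↥P) (lam : (i : Fin n) → ↥(Q i) → ℂ),
    (∀ i, IsIrreducibleCharacter (lam i)) ∧
    (∀ i, p ^ (d.factorization p) = (Q i).index) ∧
    (∀ x : ↥P, χ ↑x = ∑ i, inducedChar (Q i) (lam i) x)

section
/-- Schur-type irreducibility. -/
def SchurIrr {G : Type} [Group G] {V : Type} [AddCommGroup V] [Module ℂ V]
    (ρ : Representation ℂ G V) : Prop :=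
  Nontrivial V ∧ ∀ T : V →ₗ[ℂ] V, (∀ g, ρ g * T = T * ρ g) → ∃ c : ℂ, T = c • 1

/-- trace character -/
noncomputable def tchar {G : Type} [Group G] {V : Type} [AddCommGroup V] [Module ℂ V]
    (ρ : Representation ℂ G V) (g : G) : ℂ := LinearMap.trace ℂ V (ρ g)

lemma schur_of_simple {G : Type} [Group G] (V : FDRep ℂ G) [CategoryTheory.Simple V] :
    SchurIrr V.ρ := by
  have h1 := CategoryTheory.finrank_endomorphism_simple_eq_one ℂ V
  refine ⟨?_, ?_⟩
  · by_contra hn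
    rw [not_nontrivial_iff_subsingleton] at hn
    have : (CategoryTheory.CategoryStruct.id V) = 0 := by
      ext v
      exact Subsingleton.elim (α := V) _ _
    exact CategoryTheory.id_nonzero V this
  · intro T hT
    have hid : CategoryTheory.CategoryStruct.id V ≠ 0 := CategoryTheory.id_nonzero V
    let f : V ⟶ V := ⟨CategoryTheory.InducedCategory.homMk (ModuleCat.ofHom T), fun g ↦ by
      ext v
      exact (LinearMap.congr_fun (hT g) v).symm⟩
    obtain ⟨c, hc⟩ := (finrank_eq_one_iff_of_nonzero' _ hid).mp h1 f
    refine ⟨c, ?_⟩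
    have := congrArg (fun q : V ⟶ V => q.hom.hom.hom) hc
    exact this.symm

lemma simple_of_schur {G : Type} [Group G] [Finite G] {V : Type} [AddCommGroup V] [Module ℂ V]
    [FiniteDimensional ℂ V]
    (ρ : Representation ℂ G V) (h : SchurIrr ρ) : CategoryTheory.Simple (FDRep.of ρ) := by
  have : NeZero (Nat.card G : ℂ) := ⟨by exact_mod_cast Nat.card_pos.ne'⟩
  rw [FDRep.simple_iff_end_is_rank_one]
  have hid : CategoryTheory.CategoryStruct.id (FDRep.of ρ) ≠ 0 := by
    intro h0
    obtain ⟨v, hv⟩ := @exists_ne V h.1 0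
    have := congrArg (fun q : FDRep.of ρ ⟶ FDRep.of ρ => q.hom.hom.hom v) h0
    exact hv this
  refine (finrank_eq_one_iff_of_nonzero' _ hid).mpr ?_
  intro w
  obtain ⟨c, hc⟩ := h.2 w.hom.hom.hom (fun g => by
    have := congrArg (fun q => q.hom.hom) (w.comm g)
    exact this.symm)
  refine ⟨c, ?_⟩
  ext v
  exact (LinearMap.congr_fun hc v).symm

lemma irrchar_of_schur {G : Type} [Group G] [Finite G] {V : Type} [AddCommGroup V] [Module ℂ V]
    [FiniteDimensional ℂ V]
    (ρ : Representation ℂ G V) (h : SchurIrr ρ) : IsIrreducibleCharacter (tchar ρ) :=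
  ⟨FDRep.of ρ, simple_of_schur ρ h, rfl⟩

lemma irrchar_exists {G : Type} [Group G] {φ : G → ℂ} (h : IsIrreducibleCharacter φ) :
    ∃ V : FDRep ℂ G, SchurIrr V.ρ ∧ φ = tchar V.ρ := by
  obtain ⟨V, hV, rfl⟩ := h
  exact ⟨V, schur_of_simple V, rfl⟩

lemma irrchar_orth {G : Type} [Group G] [Fintype G] {φ ψ : G → ℂ}
    (h : IsIrreducibleCharacter φ) (h' : IsIrreducibleCharacter ψ) :
    ∑ g, φ g * ψ g⁻¹ = if φ = ψ then (Fintype.card G : ℂ) else 0 := by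
  obtain ⟨V, hV, rfl⟩ := h
  obtain ⟨W, hW, rfl⟩ := h'
  have hc : (Nat.card G : ℂ) ≠ 0 := by exact_mod_cast Nat.card_pos.ne'
  let _ : Invertible (Nat.card G : ℂ) := invertibleOfNonzero hc
  have h1 := FDRep.char_orthonormal V W
  have h0 := FDRep.char_orthonormal V V
  rw [if_pos ⟨CategoryTheory.Iso.refl _⟩] at h0
  have h1' : ∑ g, V.character g * W.character g⁻¹ =
      Nat.card G * (if Nonempty (V ≅ W) then 1 else 0) := by
    rw [← h1]; field_simp
  rw [h1']
  by_cases hi : Nonempty (V ≅ W)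
  · have := FDRep.char_iso hi.some
    rw [if_pos hi, if_pos this]; simp
  · rw [if_neg hi, if_neg]
    · simp
    · intro he
      rw [← he, h0, if_neg hi] at h1
      norm_num at h1

lemma trace_idem_nat {V : Type} [AddCommGroup V] [Module ℂ V] [FiniteDimensional ℂ V]
    (e : V →ₗ[ℂ] V) (he : e * e = e) : ∃ N : ℕ, LinearMap.trace ℂ V e = N := by
  have : LinearMap.IsProj (LinearMap.range e) e := ⟨fun x => ⟨x, rfl⟩, by
    rintro _ ⟨y, rfl⟩
    exact LinearMap.congr_fun he y⟩
  exact ⟨_, this.trace⟩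

lemma idem_group {G : Type} [Group G] [Fintype G] {V : Type} [AddCommGroup V] [Module ℂ V]
    (ρ : Representation ℂ G V) :
    ((Fintype.card G : ℂ)⁻¹ • ∑ g, ρ g) * ((Fintype.card G : ℂ)⁻¹ • ∑ g, ρ g) =
      ((Fintype.card G : ℂ)⁻¹ • ∑ g, ρ g) := by
  have h1 : (∑ g, ρ g) * (∑ g, ρ g) = (Fintype.card G : ℂ) • ∑ g, ρ g := by
    rw [Finset.sum_mul]
    have : ∀ g : G, ρ g * ∑ h, ρ h = ∑ h, ρ h := by
      intro g
      rw [Finset.mul_sum]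
      simp_rw [← map_mul]
      exact Fintype.sum_equiv (Equiv.mulLeft g) _ _ (fun _ => rfl)
    simp [this, Finset.sum_const, Nat.cast_smul_eq_nsmul]
  have hc : (Fintype.card G : ℂ) ≠ 0 := by exact_mod_cast Fintype.card_ne_zero
  rw [smul_mul_smul_comm, h1, smul_smul]
  congr 1
  field_simp

lemma idem_cyc {V : Type} [AddCommGroup V] [Module ℂ V] (m : ℕ) (hm : 0 < m)
    (Y : V →ₗ[ℂ] V) (hY : Y ^ m = 1) :
    ((m : ℂ)⁻¹ • ∑ i ∈ Finset.range m, Y ^ i) * ((m : ℂ)⁻¹ • ∑ i ∈ Finset.range m, Y ^ i) =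
      ((m : ℂ)⁻¹ • ∑ i ∈ Finset.range m, Y ^ i) := by
  have hs : Y * ∑ i ∈ Finset.range m, Y ^ i = ∑ i ∈ Finset.range m, Y ^ i := by
    rw [Finset.mul_sum]
    have h1 := Finset.sum_range_succ (fun i => Y ^ i) m
    rw [Finset.sum_range_succ'] at h1
    simp only [pow_zero, hY] at h1
    simp_rw [← pow_succ']
    exact add_right_cancel h1
  have hs' : ∀ k : ℕ, Y ^ k * ∑ i ∈ Finset.range m, Y ^ i = ∑ i ∈ Finset.range m, Y ^ i := by
    intro k
    induction k with
    | zero => simp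
    | succ k ih => rw [pow_succ, mul_assoc, hs, ih]
  have h1 : (∑ i ∈ Finset.range m, Y ^ i) * (∑ i ∈ Finset.range m, Y ^ i) =
      (m : ℂ) • ∑ i ∈ Finset.range m, Y ^ i := by
    rw [Finset.sum_mul]
    simp [hs', Nat.cast_smul_eq_nsmul]
  have hc : (m : ℂ) ≠ 0 := by exact_mod_cast hm.ne'
  rw [smul_mul_smul_comm, h1, smul_smul]
  congr 1
  field_simp

lemma idem_mul {R : Type*} [Ring R] {a b : R} (ha : a * a = a) (hb : b * b = b)
    (h : a * b = b * a) : (a * b) * (a * b) = a * b := by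
  rw [mul_assoc, ← mul_assoc b, ← h, mul_assoc, hb, ← mul_assoc, ha]
end

section
lemma geom_dual (m : ℕ) (hm : 0 < m) (ζ : ℂ) (hζ : IsPrimitiveRoot ζ m) (i i' : ℕ)
    (hi : i < m) (hi' : i' < m) :
    ∑ j ∈ Finset.range m, ζ ^ (i * j) * ζ⁻¹ ^ (i' * j) = if i = i' then (m : ℂ) else 0 := by
  have hz : ζ ≠ 0 := hζ.ne_zero hm.ne'
  have h1 : ∀ j, ζ ^ (i * j) * ζ⁻¹ ^ (i' * j) = (ζ ^ i * ζ⁻¹ ^ i') ^ j := by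
    intro j; rw [pow_mul, pow_mul, mul_pow]
  simp_rw [h1]
  split_ifs with h
  · subst h
    have : ζ ^ i * ζ⁻¹ ^ i = 1 := by rw [← mul_pow, mul_inv_cancel₀ hz, one_pow]
    simp only [this, one_pow, Finset.sum_const, Finset.card_range, nsmul_eq_mul, mul_one]
  · have hne : ζ ^ i * ζ⁻¹ ^ i' ≠ 1 := by
      intro h2
      apply h
      apply hζ.pow_inj hi hi'
      rw [inv_pow, ← div_eq_mul_inv, div_eq_one_iff_eq (pow_ne_zero _ hz)] at h2
      exact h2
    have := mul_geom_sum (ζ ^ i * ζ⁻¹ ^ i') m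
    have h3 : (ζ ^ i * ζ⁻¹ ^ i') ^ m = 1 := by
      rw [mul_pow, ← pow_mul, ← pow_mul, mul_comm i, mul_comm i', pow_mul, pow_mul, inv_pow,
        hζ.pow_eq_one]
      simp
    rw [h3, sub_self] at this
    exact (mul_eq_zero.mp this).resolve_left (sub_ne_zero.mpr hne)

/-- Fourier inversion -/
lemma fourier_inv (m : ℕ) (hm : 0 < m) (ζ : ℂ) (hζ : IsPrimitiveRoot ζ m) (F : ℕ → ℂ)
    (hF : ∀ i, F (i % m) = F i) (N : ℕ → ℂ)
    (hN : ∀ j < m, (m : ℂ) * N j = ∑ i ∈ Finset.range m, ζ⁻¹ ^ (i * j) * F i) (i : ℕ) :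
    F i = ∑ j ∈ Finset.range m, N j * ζ ^ (i * j) := by
  have hc : (m : ℂ) ≠ 0 := by exact_mod_cast hm.ne'
  have hper : ∀ j, ζ ^ (i * j) = ζ ^ ((i % m) * j) := by
    intro j
    rw [pow_mul, pow_mul, ← pow_mod_orderOf ζ i, hζ.eq_orderOf]
  simp_rw [hper]
  rw [← hF i]
  have hlt := Nat.mod_lt i hm
  generalize i % m = k at *
  apply mul_left_cancel₀ hc
  rw [Finset.mul_sum]
  have : ∀ j ∈ Finset.range m, (m : ℂ) * (N j * ζ ^ (k * j)) =
      ∑ i ∈ Finset.range m, F i * (ζ ^ (k * j) * ζ⁻¹ ^ (i * j)) := by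
    intro j hj
    rw [← mul_assoc, hN j (Finset.mem_range.mp hj), Finset.sum_mul]
    exact Finset.sum_congr rfl (fun i _ => by ring)
  rw [Finset.sum_congr rfl this, Finset.sum_comm]
  simp_rw [← Finset.mul_sum]
  rw [Finset.sum_congr rfl (fun i hi => by
    rw [geom_dual m hm ζ hζ k i hlt (Finset.mem_range.mp hi)])]
  simp [hlt, mul_comm]

lemma spectral {V : Type} [AddCommGroup V] [Module ℂ V] [FiniteDimensional ℂ V]
    (m : ℕ) (hm : 0 < m) (X e : V →ₗ[ℂ] V) (hX : X ^ m = 1) (he : e * e = e)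
    (hXe : X * e = e * X) (ζ : ℂ) (hζ : IsPrimitiveRoot ζ m) :
    ∃ N : ℕ → ℕ,
      (∀ j, (m : ℂ) * N j = ∑ i ∈ Finset.range m, ζ⁻¹ ^ (i * j) * LinearMap.trace ℂ V (X ^ i * e)) ∧
      ∀ i, LinearMap.trace ℂ V (X ^ i * e) = ∑ j ∈ Finset.range m, (N j : ℂ) * ζ ^ (i * j) := by
  have hc : (m : ℂ) ≠ 0 := by exact_mod_cast hm.ne'
  have key : ∀ j : ℕ, ∃ N : ℕ, (m : ℂ) * N =
      ∑ i ∈ Finset.range m, ζ⁻¹ ^ (i * j) * LinearMap.trace ℂ V (X ^ i * e) := by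
    intro j
    set Y := (ζ⁻¹ ^ j) • X with hYd
    have hY : Y ^ m = 1 := by
      rw [hYd, smul_pow, hX, ← pow_mul, mul_comm, pow_mul, inv_pow, hζ.pow_eq_one]; simp
    have hYe : Y * e = e * Y := by
      rw [hYd, smul_mul_assoc, mul_smul_comm, hXe]
    have hcomm : ((m : ℂ)⁻¹ • ∑ i ∈ Finset.range m, Y ^ i) * e =
        e * ((m : ℂ)⁻¹ • ∑ i ∈ Finset.range m, Y ^ i) := by
      rw [smul_mul_assoc, mul_smul_comm, Finset.sum_mul, Finset.mul_sum]
      congr 1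
      exact Finset.sum_congr rfl (fun i _ => (Commute.pow_left (show Commute Y e from hYe) i).eq)
    obtain ⟨N, hN⟩ := trace_idem_nat _ (idem_mul (idem_cyc m hm Y hY) he hcomm)
    refine ⟨N, ?_⟩
    rw [← hN, smul_mul_assoc, Finset.sum_mul, map_smul, map_sum, smul_eq_mul, ← mul_assoc,
      mul_inv_cancel₀ hc, one_mul]
    refine Finset.sum_congr rfl (fun i _ => ?_)
    rw [hYd, smul_pow, smul_mul_assoc, map_smul, smul_eq_mul, ← pow_mul, mul_comm j i]
  choose N hN using key
  refine ⟨N, hN, ?_⟩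
  refine fourier_inv m hm ζ hζ (fun i => LinearMap.trace ℂ V (X ^ i * e)) ?_ (fun j => N j)
    (fun j _ => hN j)
  intro i
  have : X ^ i = X ^ (i % m) := by
    conv_lhs => rw [← Nat.mod_add_div i m, pow_add, pow_mul, hX, one_pow, mul_one]
  simp only [this]

section
variable {G : Type} [Group G] {V : Type} [AddCommGroup V] [Module ℂ V]
    (ρ : Representation ℂ G V)

lemma tchar_mul_comm (g h : G) : tchar ρ (g * h) = tchar ρ (h * g) := by
  simp only [tchar, map_mul, LinearMap.trace_mul_comm]

lemma tchar_conj (g h : G) : tchar ρ (h * g * h⁻¹) = tchar ρ g := by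
  rw [tchar_mul_comm, ← mul_assoc, inv_mul_cancel, one_mul]

lemma tchar_conj' (g h : G) : tchar ρ (h⁻¹ * g * h) = tchar ρ g := by
  rw [tchar_mul_comm, ← mul_assoc, mul_inv_cancel, one_mul]

lemma tchar_one [FiniteDimensional ℂ V] : tchar ρ 1 = Module.finrank ℂ V := by
  simp [tchar]

lemma tchar_spec [Finite G] [FiniteDimensional ℂ V] (g : G) : ∃ (m : ℕ) (_ : 0 < m) (ζ : ℂ) (N : ℕ → ℕ),
    IsPrimitiveRoot ζ m ∧ g ^ m = 1 ∧
      ∀ i, tchar ρ (g ^ i) = ∑ j ∈ Finset.range m, (N j : ℂ) * ζ ^ (i * j) := by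
  have hm := orderOf_pos g
  obtain ⟨N, -, hN⟩ := spectral (orderOf g) hm (ρ g) 1 (by rw [← map_pow, pow_orderOf_eq_one, map_one])
    (by simp) (by simp) _ (Complex.isPrimitiveRoot_exp _ hm.ne')
  refine ⟨_, hm, _, N, Complex.isPrimitiveRoot_exp _ hm.ne', pow_orderOf_eq_one g, ?_⟩
  intro i
  rw [← hN i, mul_one, ← map_pow]; rfl

lemma tchar_inv [Finite G] [FiniteDimensional ℂ V] (g : G) : tchar ρ g⁻¹ = star (tchar ρ g) := by
  obtain ⟨m, hm, ζ, N, hζ, hg, h⟩ := tchar_spec ρ g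
  have h1 := h 1
  have h2 := h (m - 1)
  have : g ^ (m - 1) = g⁻¹ := by
    rw [eq_inv_iff_mul_eq_one, ← pow_succ, Nat.sub_add_cancel hm, hg]
  rw [this] at h2
  rw [pow_one] at h1
  rw [h1, h2, star_sum]
  refine Finset.sum_congr rfl (fun j _ => ?_)
  have hn : ‖ζ‖ = 1 := hζ.norm'_eq_one hm.ne'
  have hs : star ζ = ζ ^ (m - 1) := by
    have hz : ζ ≠ 0 := hζ.ne_zero hm.ne'
    have : ζ ^ (m - 1) = ζ⁻¹ := by
      apply eq_inv_of_mul_eq_one_left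
      rw [ ← pow_succ, Nat.sub_add_cancel hm, hζ.pow_eq_one]
    rw [this, Complex.inv_def, Complex.normSq_eq_norm_sq, hn]; simp
  simp only [star_mul', star_pow, star_natCast, hs, pow_mul, one_mul, pow_one]

lemma tchar_int [Finite G] [FiniteDimensional ℂ V] (g : G) : IsIntegral ℤ (tchar ρ g) := by
  obtain ⟨m, hm, ζ, N, hζ, hg, h⟩ := tchar_spec ρ g
  have h1 := h 1
  rw [pow_one] at h1
  rw [h1]
  refine IsIntegral.sum _ (fun j _ => ?_)
  have h2 := (isIntegral_algebraMap (R := ℤ) (A := ℂ) (x := (N j : ℤ)))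
  have h3 := h2.mul ((hζ.isIntegral hm).pow (1 * j))
  simpa using h3
end

lemma maschke {G : Type} [Group G] [Fintype G] {V : Type} [AddCommGroup V] [Module ℂ V]
    (ρ : Representation ℂ G V) (W : Submodule ℂ V) (hW : ∀ g, ∀ w ∈ W, ρ g w ∈ W) :
    ∃ W' : Submodule ℂ V, IsCompl W W' ∧ ∀ g, ∀ w ∈ W', ρ g w ∈ W' := by
  obtain ⟨U, hU⟩ := W.exists_isCompl
  let π : V →ₗ[ℂ] V := W.subtype ∘ₗ (W.projectionOnto U hU)
  have hπW : ∀ v, π v ∈ W := fun v => (W.projectionOnto U hU v).2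
  have hπ : ∀ w ∈ W, π w = w := fun w hw => by
    have := Submodule.projectionOnto_apply_left hU ⟨w, hw⟩
    simp [π, this]
  have hc : (Fintype.card G : ℂ) ≠ 0 := by exact_mod_cast Fintype.card_ne_zero
  let p : V →ₗ[ℂ] V := (Fintype.card G : ℂ)⁻¹ • ∑ g, ρ g * π * ρ g⁻¹
  have hp : ∀ v, p v = (Fintype.card G : ℂ)⁻¹ • ∑ g, ρ g (π (ρ g⁻¹ v)) := by
    intro v; simp [p, LinearMap.sum_apply]
  have hpW : ∀ v, p v ∈ W := fun v => by
    rw [hp]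
    exact W.smul_mem _ (W.sum_mem (fun g _ => hW g _ (hπW _)))
  have hpi : ∀ w ∈ W, p w = w := fun w hw => by
    rw [hp]
    have : ∀ g, ρ g (π (ρ g⁻¹ w)) = w := by
      intro g
      rw [hπ _ (hW _ _ hw), ← Module.End.mul_apply, ← map_mul]; simp
    simp [this, ← Nat.cast_smul_eq_nsmul ℂ, smul_smul, hc]
  have hcomm : ∀ g v, p (ρ g v) = ρ g (p v) := by
    intro g v
    rw [hp, hp, map_smul, map_sum]
    congr 1
    refine Fintype.sum_equiv (Equiv.mulLeft g⁻¹) _ _ (fun h => ?_)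
    simp only [Equiv.coe_mulLeft, ← Module.End.mul_apply, ← mul_assoc, ← map_mul]
    simp [mul_assoc]
  refine ⟨LinearMap.ker p, ?_, ?_⟩
  · let q : V →ₗ[ℂ] W := p.codRestrict W hpW
    have : LinearMap.ker p = LinearMap.ker q := by
      simp [q, LinearMap.ker_codRestrict]
    rw [this]
    exact LinearMap.isCompl_of_proj (fun w => Subtype.ext (hpi w w.2))
  · intro g w hw
    rw [LinearMap.mem_ker] at *
    rw [hcomm, hw, map_zero]

lemma trace_compl {V : Type} [AddCommGroup V] [Module ℂ V] [FiniteDimensional ℂ V]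
    (W W' : Submodule ℂ V) (h : IsCompl W W') (f : V →ₗ[ℂ] V) (h1 : ∀ w ∈ W, f w ∈ W)
    (h2 : ∀ w ∈ W', f w ∈ W') :
    LinearMap.trace ℂ V f = LinearMap.trace ℂ W (f.restrict h1) + LinearMap.trace ℂ W' (f.restrict h2) := by
  let e := Submodule.prodEquivOfIsCompl W W' h
  have : f = e.conj ((f.restrict h1).prodMap (f.restrict h2)) := by
    ext v
    obtain ⟨⟨a, b⟩, rfl⟩ := e.surjective v
    simp [LinearEquiv.conj_apply, e]
  have h3 := congrArg (LinearMap.trace ℂ V) this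
  rw [LinearMap.trace_conj', LinearMap.trace_prodMap'] at h3
  exact h3

/-- restriction of representation -/
noncomputable def resRep {G : Type} [Group G] {V : Type} [AddCommGroup V] [Module ℂ V]
    (ρ : Representation ℂ G V) (W : Submodule ℂ V) (hW : ∀ g, ∀ w ∈ W, ρ g w ∈ W) :
    Representation ℂ G W where
  toFun g := (ρ g).restrict (hW g)
  map_one' := by ext; simp
  map_mul' g h := by ext; simp

theorem char_mem_closure {G : Type} [Group G] [Fintype G] (n : ℕ) : ∀ {V : Type} [AddCommGroup V]
    [Module ℂ V] [FiniteDimensional ℂ V] (ρ : Representation ℂ G V), Module.finrank ℂ V = n →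
    tchar ρ ∈ AddSubmonoid.closure {φ : G → ℂ | IsIrreducibleCharacter φ} := by
  induction n using Nat.strong_induction_on with
  | _ n ih =>
  intro V _ _ _ ρ hn
  by_cases hs : SchurIrr ρ
  · exact AddSubmonoid.subset_closure (irrchar_of_schur ρ hs)
  by_cases hV : Nontrivial V
  swap
  · rw [not_nontrivial_iff_subsingleton] at hV
    have : tchar ρ = 0 := by
      funext g
      have : ρ g = 0 := Subsingleton.elim _ _
      simp [tchar, this]
    rw [this]; exact zero_mem _
  have : ∃ T : V →ₗ[ℂ] V, (∀ g, ρ g * T = T * ρ g) ∧ ∀ c : ℂ, T ≠ c • 1 := by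
    by_contra hh
    push Not at hh
    exact hs ⟨hV, hh⟩
  obtain ⟨T, hT, hTc⟩ := this
  obtain ⟨c, hc⟩ := Module.End.exists_eigenvalue T
  let W := Module.End.eigenspace T c
  have hWb : W ≠ ⊥ := hc
  have hW : ∀ g, ∀ w ∈ W, ρ g w ∈ W := by
    intro g w hw
    rw [Module.End.mem_eigenspace_iff] at *
    rw [← Module.End.mul_apply, ← hT, Module.End.mul_apply, hw, map_smul]
  have hWt : W ≠ ⊤ := by
    intro ht
    apply hTc c
    ext v
    have : v ∈ W := ht ▸ Submodule.mem_top
    simpa using Module.End.mem_eigenspace_iff.mp this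
  obtain ⟨W', hcompl, hW'⟩ := maschke ρ W hW
  have hsum : tchar ρ = tchar (resRep ρ W hW) + tchar (resRep ρ W' hW') := by
    funext g
    exact trace_compl W W' hcompl (ρ g) (hW g) (hW' g)
  have hd := Submodule.finrank_add_eq_of_isCompl hcompl
  have h1 : Module.finrank ℂ W < n := hn ▸ Submodule.finrank_lt hWt
  have h2 : 0 < Module.finrank ℂ W := by
    rw [Module.finrank_pos_iff]; exact Submodule.nontrivial_iff_ne_bot.mpr hWb
  rw [hsum]
  exact add_mem (ih _ h1 _ rfl) (ih _ (by omega) _ rfl)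
end

section
lemma nat_integral (n : ℕ) : IsIntegral ℤ (n : ℂ) := by
  have := isIntegral_algebraMap (R := ℤ) (A := ℂ) (x := (n : ℤ))
  simpa using this

/-- complex numbers integral at two -/
noncomputable def RR : Subring ℂ where
  carrier := {z | ∃ m : ℕ, Odd m ∧ IsIntegral ℤ ((m : ℂ) * z)}
  mul_mem' := by
    rintro a b ⟨m, hm, h⟩ ⟨m', hm', h'⟩
    refine ⟨m * m', hm.mul hm', ?_⟩
    have := h.mul h'
    rw [show ((m * m' : ℕ) : ℂ) * (a * b) = (m * a) * (m' * b) by push_cast; ring]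
    exact this
  one_mem' := ⟨1, odd_one, by simpa using isIntegral_one⟩
  add_mem' := by
    rintro a b ⟨m, hm, h⟩ ⟨m', hm', h'⟩
    refine ⟨m * m', hm.mul hm', ?_⟩
    have h1 : IsIntegral ℤ (m' : ℂ) := nat_integral m'
    have h2 : IsIntegral ℤ (m : ℂ) := nat_integral m
    have := (h1.mul h).add (h2.mul h')
    rw [show ((m * m' : ℕ) : ℂ) * (a + b) = m' * (m * a) + m * (m' * b) by push_cast; ring]
    exact this
  zero_mem' := ⟨1, odd_one, by simpa using isIntegral_zero⟩
  neg_mem' := by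
    rintro a ⟨m, hm, h⟩
    exact ⟨m, hm, by simpa using h.neg⟩

lemma RR_of_int {z : ℂ} (h : IsIntegral ℤ z) : z ∈ RR := ⟨1, odd_one, by simpa using h⟩

lemma RR_oddinv {m : ℕ} (h : Odd m) : (m : ℂ)⁻¹ ∈ RR := ⟨m, h, by
  rw [mul_inv_cancel₀]
  · exact isIntegral_one
  · have := h.pos; exact_mod_cast this.ne'⟩

lemma RR_div {k : ℤ} {t : ℕ} (h : (k : ℂ) / 2 ^ t ∈ RR) : (2 : ℤ) ^ t ∣ k := by
  obtain ⟨m, hm, h⟩ := h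
  have h1 : ((m : ℂ) * (k / 2 ^ t)) = algebraMap ℚ ℂ ((m : ℚ) * (k / 2 ^ t)) := by simp
  rw [h1, isIntegral_algebraMap_iff (algebraMap ℚ ℂ).injective] at h
  obtain ⟨j, hj⟩ := IsIntegrallyClosed.algebraMap_eq_of_integral h
  have h2 : (m : ℤ) * k = 2 ^ t * j := by
    have : (m : ℚ) * k = 2 ^ t * j := by
      have hj' : (j : ℚ) = m * (k / 2 ^ t) := by simpa using hj
      rw [hj']; field_simp
    exact_mod_cast this
  have hcop : IsCoprime ((2 : ℤ) ^ t) (m : ℤ) := by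
    apply IsCoprime.pow_left
    have : Nat.Coprime 2 m := Nat.coprime_two_left.mpr hm
    exact_mod_cast Nat.isCoprime_iff_coprime.mpr this
  exact hcop.dvd_of_dvd_mul_left ⟨j, h2⟩

lemma RR_div_nat {k : ℕ} {t : ℕ} (h : (k : ℂ) / 2 ^ t ∈ RR) : 2 ^ t ∣ k := by
  have := RR_div (k := (k : ℤ)) (t := t) (by simpa using h)
  exact_mod_cast this

lemma common_odd {ι : Type} (s : Finset ι) (B : ι → ℂ) (hB : ∀ g, B g ∈ RR) :
    ∃ M : ℕ, Odd M ∧ ∀ g ∈ s, IsIntegral ℤ ((M : ℂ) * B g) := by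
  induction s using Finset.induction_on with
  | empty => exact ⟨1, odd_one, by simp⟩
  | insert a s _ ih =>
    obtain ⟨M, hM, h⟩ := ih
    obtain ⟨m, hm, h'⟩ := hB a
    refine ⟨M * m, hM.mul hm, ?_⟩
    intro g hg
    rcases Finset.mem_insert.mp hg with rfl | hg
    · have := (nat_integral M).mul h'
      rw [show ((M * m : ℕ) : ℂ) * B g = M * (m * B g) by push_cast; ring]
      exact this
    · have := (nat_integral m).mul (h g hg)
      rw [show ((M * m : ℕ) : ℂ) * B g = m * (M * B g) by push_cast; ring]
      exact this

section
variable {G : Type} [Group G] [Fintype G] {V : Type} [AddCommGroup V] [Module ℂ V]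
    (ρ : Representation ℂ G V)

lemma scalar_integral [Nontrivial V] (B : G → ℂ) (hB : ∀ g, IsIntegral ℤ (B g)) (σ : ℂ)
    (h : ∑ g, B g • ρ g = σ • 1) : IsIntegral ℤ σ := by
  let O := integralClosure ℤ ℂ
  obtain ⟨v, hv⟩ := exists_ne (0 : V)
  let N : Submodule O V := Submodule.span O (Set.range fun g => ρ g v)
  have hmem : ∀ g, ρ g v ∈ N := fun g => Submodule.subset_span ⟨g, rfl⟩
  have : IsIntegral O σ := by
    refine isIntegral_of_smul_mem_submodule N ?_ ?_ σ ?_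
    · intro hN
      have h1 := hmem 1
      rw [hN, map_one] at h1
      exact hv (by simpa using h1)
    · exact Submodule.fg_span (Set.finite_range _)
    · intro n hn
      induction hn using Submodule.span_induction with
      | mem x hx =>
        obtain ⟨k, rfl⟩ := hx
        have h2 : σ • ρ k v = ∑ g, (⟨B g, hB g⟩ : O) • ρ (g * k) v := by
          have := LinearMap.congr_fun h (ρ k v)
          simp only [LinearMap.sum_apply, LinearMap.smul_apply, Module.End.one_apply] at this
          rw [← this]
          refine Finset.sum_congr rfl (fun g _ => ?_)
          rw [map_mul]; rfl
        rw [h2]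
        exact N.sum_mem (fun g _ => N.smul_mem _ (hmem _))
      | zero => simp
      | add x y _ _ hx hy => rw [smul_add]; exact N.add_mem hx hy
      | smul a x _ hx => rw [smul_comm]; exact N.smul_mem _ hx
  exact isIntegral_trans (R := ℤ) σ this

lemma scalar_RR [Nontrivial V] (B : G → ℂ) (hB : ∀ g, B g ∈ RR) (σ : ℂ)
    (h : ∑ g, B g • ρ g = σ • 1) : σ ∈ RR := by
  obtain ⟨M, hM, hMB⟩ := common_odd Finset.univ B hB
  refine ⟨M, hM, ?_⟩
  refine scalar_integral ρ (fun g => M * B g) (fun g => hMB g (Finset.mem_univ _)) _ ?_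
  rw [mul_smul, ← h, Finset.smul_sum]
  simp_rw [mul_smul]

lemma central_scalar [FiniteDimensional ℂ V] (hρ : SchurIrr ρ) (B : G → ℂ) (hB : ∀ g h, B (h * g * h⁻¹) = B g) :
    ∃ σ : ℂ, ∑ g, B g • ρ g = σ • 1 ∧ σ * tchar ρ 1 = ∑ g, B g * tchar ρ g := by
  obtain ⟨σ, hσ⟩ := hρ.2 (∑ g, B g • ρ g) (by
    intro h
    rw [Finset.mul_sum, Finset.sum_mul]
    refine Fintype.sum_equiv (MulAut.conj h).toEquiv _ _ (fun g => ?_)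
    have : (MulAut.conj h).toEquiv g = h * g * h⁻¹ := rfl
    rw [this, hB]
    rw [mul_smul_comm, smul_mul_assoc, ← map_mul, ← map_mul]
    simp)
  refine ⟨σ, hσ, ?_⟩
  have := congrArg (LinearMap.trace ℂ V) hσ
  rw [map_sum, map_smul] at this
  simp only [map_smul, smul_eq_mul] at this
  rw [tchar, map_one, ← this]; rfl

lemma tchar_one_ne [FiniteDimensional ℂ V] (hρ : SchurIrr ρ) : tchar ρ 1 ≠ 0 := by
  rw [tchar_one]
  have := hρ.1
  exact_mod_cast Module.finrank_pos.ne'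

lemma lemmaI [FiniteDimensional ℂ V] (hρ : SchurIrr ρ) (Q : Subgroup G) (b : G → ℂ)
    (hb : ∀ g, b g ∈ RR) (hinv : ∀ q ∈ Q, ∀ g, b (q * g * q⁻¹) = b g) :
    (∑ g, b g * tchar ρ g) * Q.index / tchar ρ 1 ∈ RR := by
  let B : G → ℂ := fun g => ∑ c : G ⧸ Q, b (c.out⁻¹ * g * c.out)
  have hlift : ∀ g x : G, b ((QuotientGroup.mk x : G ⧸ Q).out⁻¹ * g * (QuotientGroup.mk x : G ⧸ Q).out) =
      b (x⁻¹ * g * x) := by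
    intro g x
    obtain ⟨q, hq⟩ := QuotientGroup.mk_out_eq_mul Q x
    rw [hq]
    rw [← hinv q q.2]
    congr 1; group
  have hBc : ∀ g h, B (h * g * h⁻¹) = B g := by
    intro g h
    refine Fintype.sum_equiv (MulAction.toPerm h⁻¹) _ _ (fun c => ?_)
    obtain ⟨x, rfl⟩ := QuotientGroup.mk_surjective c
    have : (MulAction.toPerm h⁻¹ : Equiv.Perm (G ⧸ Q)) (QuotientGroup.mk x) = QuotientGroup.mk (h⁻¹ * x) := rfl
    rw [this, hlift, hlift]
    congr 1; group
  obtain ⟨σ, h1, h2⟩ := central_scalar ρ hρ B hBc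
  have hN := hρ.1
  have h3 := scalar_RR ρ B (fun g => RR.sum_mem (fun c _ => hb _)) σ h1
  have h4 : ∑ g, B g * tchar ρ g = (∑ g, b g * tchar ρ g) * Q.index := by
    simp_rw [B, Finset.sum_mul]
    rw [Finset.sum_comm]
    have : ∀ c : G ⧸ Q, ∑ g, b (c.out⁻¹ * g * c.out) * tchar ρ g = ∑ g, b g * tchar ρ g := by
      intro c
      refine Fintype.sum_equiv (MulAut.conj c.out⁻¹).toEquiv _ _ (fun g => ?_)
      have : (MulAut.conj c.out⁻¹).toEquiv g = c.out⁻¹ * g * c.out := by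
        simp
      rw [this, tchar_conj']
    rw [Finset.sum_congr rfl (fun c _ => this c)]
    rw [Finset.sum_const, nsmul_eq_mul, mul_comm]
    simp only [Subgroup.index, Nat.card_eq_fintype_card, Finset.card_univ, Finset.sum_mul]
  rw [← h4, ← h2, mul_div_assoc, div_self (tchar_one_ne ρ hρ), mul_one]
  exact h3

lemma norm_one [FiniteDimensional ℂ V] (hρ : SchurIrr ρ) :
    ∑ g, tchar ρ g * tchar ρ g⁻¹ = Fintype.card G := by
  have := irrchar_orth (irrchar_of_schur ρ hρ) (irrchar_of_schur ρ hρ)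
  simpa using this

lemma norm_one_sq [FiniteDimensional ℂ V] (hρ : SchurIrr ρ) :
    ∑ g, ‖tchar ρ g‖ ^ 2 = Fintype.card G := by
  have := norm_one ρ hρ
  have h2 : ((∑ g, ‖tchar ρ g‖ ^ 2 : ℝ) : ℂ) = (Fintype.card G : ℝ) := by
    push_cast
    rw [← this]
    refine Finset.sum_congr rfl (fun g _ => ?_)
    rw [tchar_inv]; exact (Complex.mul_conj' _).symm
  exact_mod_cast h2

lemma card_div_deg [FiniteDimensional ℂ V] (hρ : SchurIrr ρ) :
    (Fintype.card G : ℂ) / Module.finrank ℂ V ∈ RR := by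
  have := lemmaI ρ hρ ⊤ (fun g => tchar ρ g⁻¹) (fun g => RR_of_int (tchar_int ρ _)) (by
    intro q _ g
    simp only [mul_inv_rev, inv_inv]
    rw [← mul_assoc, tchar_conj])
  simp only [Subgroup.index_top, Nat.cast_one, mul_one] at this
  rw [← norm_one ρ hρ, ← tchar_one ρ]
  convert this using 3
  exact mul_comm _ _
end
end

section
open QuaternionGroup in
lemma qa_inv {n : ℕ} (i : ZMod (2 * n)) : (a i : QuaternionGroup n)⁻¹ = a (-i) := by
  apply inv_eq_of_mul_eq_one_right; rw [a_mul_a, add_neg_cancel, a_zero]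

open QuaternionGroup in
lemma qxa_inv {n : ℕ} (i : ZMod (2 * n)) : (xa i : QuaternionGroup n)⁻¹ = xa ((n : ZMod (2 * n)) + i) := by
  apply inv_eq_of_mul_eq_one_right
  rw [xa_mul_xa, ← a_zero]
  congr 1
  have : ((2 * n : ℕ) : ZMod (2 * n)) = 0 := ZMod.natCast_self _
  push_cast at this
  linear_combination this

lemma zmod_two_mul {m : ℕ} [NeZero m] (j : ZMod (2 * m)) (h : 2 * j = 0) : j = 0 ∨ j = m := by
  obtain ⟨v, hv, rfl⟩ : ∃ v : ℕ, v < 2 * m ∧ (v : ZMod (2 * m)) = j :=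
    ⟨j.val, ZMod.val_lt j, ZMod.natCast_zmod_val j⟩
  have h1 : ((2 * v : ℕ) : ZMod (2 * m)) = 0 := by push_cast; exact h
  rw [ZMod.natCast_eq_zero_iff] at h1
  have h2 : m ∣ v := Nat.dvd_of_mul_dvd_mul_left two_pos h1
  obtain ⟨c, rfl⟩ := h2
  have hc : c < 2 := by
    have hm := NeZero.pos m
    by_contra hc
    push Not at hc
    have := Nat.mul_le_mul_left m hc
    omega
  interval_cases c
  · left; simp
  · right; simp

open QuaternionGroup in
lemma quat_cent {m : ℕ} [NeZero m] (v : QuaternionGroup m) (hv : v ^ 2 ≠ 1) :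
    ∃ c : QuaternionGroup m, ∀ w, w * v = v * w → w ∈ Subgroup.zpowers c := by
  have hpow : ∀ j : ZMod (2 * m), (a j : QuaternionGroup m) ∈ Subgroup.zpowers (a 1) := by
    intro j
    have : (a j : QuaternionGroup m) = (a 1) ^ j.val := by
      rw [a_one_pow, ZMod.natCast_zmod_val]
    rw [this]
    exact pow_mem (Subgroup.mem_zpowers _) _
  rcases v with i | i
  · refine ⟨a 1, ?_⟩
    rintro (j | j) h
    · exact hpow j
    · exfalso
      apply hv
      rw [xa_mul_a, a_mul_xa, xa.injEq] at h
      rw [sq, a_mul_a, ← a_zero]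
      congr 1
      linear_combination h
  · refine ⟨xa i, ?_⟩
    have key : ∀ j : ZMod (2 * m), 2 * j = 0 → a j ∈ Subgroup.zpowers (xa i) := by
      intro j hj
      rcases zmod_two_mul j hj with rfl | rfl
      · rw [a_zero]; exact one_mem _
      · rw [← xa_sq i]; exact pow_mem (Subgroup.mem_zpowers _) 2
    rintro (j | j) h
    · rw [xa_mul_a, a_mul_xa, xa.injEq] at h
      exact key j (by linear_combination -h)
    · rw [xa_mul_xa, xa_mul_xa, a.injEq] at h
      have h2 := key (j - i) (by linear_combination -h)
      have : xa j = xa i * a (j - i) := by rw [xa_mul_a]; congr 1; ring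
      rw [this]
      exact mul_mem (Subgroup.mem_zpowers _) h2

open QuaternionGroup in
lemma quat_norm {m : ℕ} [NeZero m] (v w : QuaternionGroup m)
    (h : w * v * w⁻¹ ∈ Subgroup.zpowers v) : w * v * w⁻¹ = v ∨ w * v * w⁻¹ = v⁻¹ := by
  rcases v with i | i
  · rcases w with j | j
    · left; rw [qa_inv, a_mul_a, a_mul_a]; congr 1; ring
    · right; rw [qa_inv, qxa_inv, xa_mul_a, xa_mul_xa]; congr 1
      have : ((2 * m : ℕ) : ZMod (2 * m)) = 0 := ZMod.natCast_self _
      push_cast at this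
      linear_combination this
  · have hx : ∃ l, w * xa i * w⁻¹ = xa l := by
      rcases w with j | j
      · exact ⟨_, by rw [qa_inv, a_mul_xa, xa_mul_a]⟩
      · exact ⟨_, by rw [qxa_inv, xa_mul_xa, a_mul_xa]⟩
    obtain ⟨z, hz⟩ := h
    obtain ⟨l, hl⟩ := hx
    simp only at hz
    rw [← hz] at hl ⊢
    have h4 : (xa i : QuaternionGroup m) ^ (4 : ℤ) = 1 := by exact_mod_cast xa_pow_four i
    have hm : (xa i : QuaternionGroup m) ^ z = xa i ^ (z % 4) := by
      conv_lhs => rw [← Int.emod_add_mul_ediv z 4, zpow_add, zpow_mul, h4, one_zpow, mul_one]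
    rw [hm] at hl ⊢
    have h0 : 0 ≤ z % 4 := by omega
    have h1 : z % 4 < 4 := by omega
    generalize z % 4 = t at *
    interval_cases t
    · rw [zpow_zero, one_def] at hl; cases hl
    · left; simp
    · exfalso
      have : (xa i : QuaternionGroup m) ^ (2 : ℤ) = a m := by exact_mod_cast xa_sq i
      rw [this] at hl; cases hl
    · right
      rw [eq_inv_iff_mul_eq_one, ← zpow_add_one]; exact h4

open QuaternionGroup in
lemma quat_exp {k : ℕ} (hk : 1 ≤ k) (g : QuaternionGroup (2 ^ k)) : g ^ (2 ^ (k + 1)) = 1 := by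
  rcases g with i | i
  · rw [← orderOf_dvd_iff_pow_eq_one, orderOf_a, pow_succ']
    exact Nat.div_dvd_of_dvd (Nat.gcd_dvd_left _ _)
  · obtain ⟨c, rfl⟩ := Nat.exists_eq_add_of_le hk
    rw [show 2 ^ (1 + c + 1) = 4 * 2 ^ c by ring, pow_mul, xa_pow_four, one_pow]

/-- setting of the theorem -/
structure Setup (G : Type) [Group G] [Fintype G] where
  k : ℕ
  hk : 1 ≤ k
  o : ℕ
  ho : Odd o
  card : Fintype.card G = 2 ^ (k + 2) * o
  ψ : QuaternionGroup (2 ^ k) →* G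
  ψinj : Function.Injective ψ
  emb : ∀ S : Subgroup G, IsPGroup 2 S → ∃ f : S →* QuaternionGroup (2 ^ k), Function.Injective f
  E : ℕ
  F : ℕ
  E1 : E ≡ 1 [MOD 2 ^ (k + 2)]
  E0 : o ∣ E
  F0 : 2 ^ (k + 2) ∣ F
  F1 : F ≡ 1 [MOD o]

namespace Setup
variable {G : Type} [Group G] [Fintype G] (s : Setup G)

lemma pow_card (g : G) : g ^ (2 ^ (s.k + 2) * s.o) = 1 := by
  rw [← s.card]; exact pow_card_eq_one

lemma pow_eq_of_modEq (g : G) {a b n : ℕ} (h : a ≡ b [MOD n]) (hg : g ^ n = 1) : g ^ a = g ^ b := by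
  rw [pow_eq_pow_iff_modEq]
  exact h.of_dvd (orderOf_dvd_of_pow_eq_one hg)

lemma split (g : G) : g ^ s.E * g ^ s.F = g := by
  rw [← pow_add]
  conv_rhs => rw [← pow_one g]
  refine pow_eq_of_modEq g (n := 2 ^ (s.k + 2) * s.o) ?_ (s.pow_card g)
  have hcop : Nat.Coprime (2 ^ (s.k + 2)) s.o := (Nat.coprime_two_left.mpr s.ho).pow_left _
  rw [← Nat.modEq_and_modEq_iff_modEq_mul hcop]
  constructor
  · have := s.E1.add ((Nat.modEq_zero_iff_dvd).mpr s.F0)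
    simpa using this
  · have := ((Nat.modEq_zero_iff_dvd).mpr s.E0).add s.F1
    simpa using this

lemma E_two (g : G) : (g ^ s.E) ^ (2 ^ (s.k + 2)) = 1 := by
  obtain ⟨c, hc⟩ := s.E0
  rw [← pow_mul, hc, show s.o * c * 2 ^ (s.k + 2) = 2 ^ (s.k + 2) * s.o * c by ring, pow_mul, s.pow_card,
    one_pow]

lemma F_odd (g : G) : (g ^ s.F) ^ s.o = 1 := by
  obtain ⟨c, hc⟩ := s.F0
  rw [← pow_mul, hc, show 2 ^ (s.k + 2) * c * s.o = 2 ^ (s.k + 2) * s.o * c by ring, pow_mul, s.pow_card,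
    one_pow]

lemma two_E {g : G} (hg : g ^ (2 ^ (s.k + 2)) = 1) : g ^ s.E = g := by
  conv_rhs => rw [← pow_one g]
  exact pow_eq_of_modEq g s.E1 hg

lemma odd_E {g : G} (hg : g ^ s.o = 1) : g ^ s.E = 1 := by
  obtain ⟨c, hc⟩ := s.E0
  rw [hc, pow_mul, hg, one_pow]

lemma two_pow {v : G} {r : ℕ} (hv : orderOf v = 2 ^ r) : v ^ (2 ^ (s.k + 2)) = 1 := by
  have h1 : 2 ^ r ∣ 2 ^ (s.k + 2) * s.o := by
    rw [← hv, ← s.card]; exact orderOf_dvd_card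
  have h2 : 2 ^ r ∣ 2 ^ (s.k + 2) :=
    Nat.Coprime.dvd_of_dvd_mul_right ((Nat.coprime_two_left.mpr s.ho).pow_left _) h1
  rw [← orderOf_dvd_iff_pow_eq_one, hv]; exact h2

lemma odd_two {g : G} (h1 : g ^ s.o = 1) (h2 : g ^ (2 ^ (s.k + 2)) = 1) : g = 1 := by
  rw [← s.two_E h2, s.odd_E h1]

lemma isPGroup_zpowers {w : G} (hw : w ^ (2 ^ (s.k + 2)) = 1) : IsPGroup 2 (Subgroup.zpowers w) := by
  intro ⟨g, z, hz⟩
  refine ⟨s.k + 2, ?_⟩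
  ext
  simp only at hz
  simp only [Subgroup.coe_pow, ← hz, Subgroup.coe_one]
  rw [← zpow_natCast, ← zpow_mul, mul_comm, zpow_mul, zpow_natCast, hw, one_zpow]

lemma norm2 {v w : G} (hv2 : v ^ (2 ^ (s.k + 2)) = 1) (hw : w ^ (2 ^ (s.k + 2)) = 1)
    (h : w * v * w⁻¹ ∈ Subgroup.zpowers v) : w * v * w⁻¹ = v ∨ w * v * w⁻¹ = v⁻¹ := by
  have hn : w ∈ Subgroup.normalizer (Subgroup.zpowers v : Set G) := by
    have hle : (Subgroup.zpowers v).map (MulAut.conj w).toMonoidHom ≤ Subgroup.zpowers v := by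
      rw [MonoidHom.map_zpowers, Subgroup.zpowers_le]; exact h
    have heq : (Subgroup.zpowers v).map (MulAut.conj w).toMonoidHom = Subgroup.zpowers v := by
      apply Subgroup.eq_of_le_of_card_ge hle
      rw [Subgroup.card_map_of_injective (MulAut.conj w).injective]
    rw [Subgroup.mem_normalizer_iff]
    intro x
    constructor
    · intro hx
      exact hle ⟨x, hx, rfl⟩
    · intro hx
      rw [← SetLike.mem_coe, ← heq] at hx
      obtain ⟨y, hy, hxy⟩ := hx
      have : y = x := by
        have : w * y * w⁻¹ = w * x * w⁻¹ := hxy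
        simpa using this
      exact this ▸ hy
  have hle : Subgroup.zpowers w ≤ Subgroup.normalizer (Subgroup.zpowers v : Set G) := by
    rw [Subgroup.zpowers_le]; exact hn
  have hp := IsPGroup.to_sup_of_normal_right' (s.isPGroup_zpowers hw) (s.isPGroup_zpowers hv2) hle
  obtain ⟨f, hf⟩ := s.emb _ hp
  let v' : ↥(Subgroup.zpowers w ⊔ Subgroup.zpowers v) :=
    ⟨v, (le_sup_right : Subgroup.zpowers v ≤ _) (Subgroup.mem_zpowers v)⟩
  let w' : ↥(Subgroup.zpowers w ⊔ Subgroup.zpowers v) :=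
    ⟨w, (le_sup_left : Subgroup.zpowers w ≤ _) (Subgroup.mem_zpowers w)⟩
  obtain ⟨z, hz⟩ := h
  simp only at hz
  have hz' : v' ^ z = w' * v' * w'⁻¹ := Subtype.ext (by simpa [v', w'] using hz)
  have : NeZero (2 ^ s.k) := ⟨by positivity⟩
  rcases quat_norm (f v') (f w') ⟨z, by
    simp only [← map_zpow, ← map_mul, ← map_inv]; rw [hz']⟩ with h1 | h1
  · left
    rw [← map_inv, ← map_mul, ← map_mul] at h1
    exact congrArg Subtype.val (hf h1)
  · right
    rw [← map_inv, ← map_inv, ← map_mul, ← map_mul] at h1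
    exact congrArg Subtype.val (hf h1)

lemma pow_conj_mem {v h : G} (hh : h * v * h⁻¹ ∈ Subgroup.zpowers v) (t : ℕ) :
    h ^ t * v * (h ^ t)⁻¹ ∈ Subgroup.zpowers v := by
  induction t with
  | zero => simp
  | succ t ih =>
    obtain ⟨z, hz⟩ := ih
    simp only at hz
    have : h ^ (t + 1) * v * (h ^ (t + 1))⁻¹ = (h * v * h⁻¹) ^ z := by
      rw [conj_zpow, hz, pow_succ']; group
    rw [this]
    exact zpow_mem hh z

lemma odd_norm {v h : G} {r : ℕ} (hv : orderOf v = 2 ^ r) (ho : h ^ s.o = 1)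
    (hh : h * v * h⁻¹ ∈ Subgroup.zpowers v) : h * v * h⁻¹ = v := by
  obtain ⟨z, hz⟩ := hh
  simp only at hz
  have hpow : ∀ t : ℕ, h ^ t * v * (h ^ t)⁻¹ = v ^ (z ^ t) := by
    intro t
    induction t with
    | zero => simp
    | succ t ih =>
      have : h ^ (t + 1) * v * (h ^ (t + 1))⁻¹ = h * (h ^ t * v * (h ^ t)⁻¹) * h⁻¹ := by
        rw [pow_succ']; group
      rw [this, ih, ← conj_zpow, ← hz, ← zpow_mul, pow_succ']
  have h1 := hpow s.o
  rw [ho] at h1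
  simp only [one_mul, inv_one, mul_one] at h1
  have h2 : ((z : ℤ) : ZMod (2 ^ r)) ^ s.o = 1 := by
    have h3 : v ^ (1 : ℤ) = v ^ (z ^ s.o) := by rw [zpow_one]; exact h1
    rw [zpow_eq_zpow_iff_modEq, hv] at h3
    have := (ZMod.intCast_eq_intCast_iff _ _ _).mpr h3
    push_cast at this
    rw [← this]
  have : NeZero (2 ^ r) := ⟨by positivity⟩
  let u : (ZMod (2 ^ r))ˣ := Units.ofPowEqOne _ s.o h2 s.ho.pos.ne'
  have hu : u ^ s.o = 1 := Units.pow_ofPowEqOne _ _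
  have hu2 : u ^ (2 ^ r) = 1 := by
    rcases r with _ | r
    · have : Subsingleton (ZMod (2 ^ 0)) := by rw [pow_zero]; infer_instance
      exact Subsingleton.elim _ _
    · have := ZMod.pow_totient u
      rw [Nat.totient_prime_pow_succ Nat.prime_two] at this
      have e : u ^ (2 ^ (r + 1)) = (u ^ (2 ^ r * (2 - 1))) ^ 2 := by
        rw [← pow_mul]; congr 1; simp [pow_succ]
      rw [e, this, one_pow]
  have hu1 : u = 1 := by
    rw [← orderOf_eq_one_iff]
    have hcop : Nat.Coprime (2 ^ r) s.o := (Nat.coprime_two_left.mpr s.ho).pow_left _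
    exact Nat.eq_one_of_dvd_coprimes hcop (orderOf_dvd_of_pow_eq_one hu2) (orderOf_dvd_of_pow_eq_one hu)
  have hz1 : ((z : ℤ) : ZMod (2 ^ r)) = ((1 : ℤ) : ZMod (2 ^ r)) := by
    have := congrArg Units.val hu1
    simpa [u] using this
  rw [ZMod.intCast_eq_intCast_iff, ← hv, ← zpow_eq_zpow_iff_modEq] at hz1
  rw [← hz, hz1, zpow_one]

lemma norm_all (s : Setup G) {v h : G} {r : ℕ} (hv : orderOf v = 2 ^ r)
    (hh : h * v * h⁻¹ ∈ Subgroup.zpowers v) : h * v * h⁻¹ = v ∨ h * v * h⁻¹ = v⁻¹ := by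
  have h1 := s.odd_norm hv (s.F_odd h) (pow_conj_mem hh _)
  have h2 := s.norm2 (s.two_pow hv) (s.E_two h) (pow_conj_mem hh _)
  have h3 : h * v * h⁻¹ = h ^ s.E * v * (h ^ s.E)⁻¹ := by
    conv_lhs => rw [← s.split h]
    conv_rhs => rw [← h1]
    group
  rw [h3]; exact h2
end Setup
end

section
namespace Setup
variable {G : Type} [Group G] [Fintype G] 

lemma exists_K (s : Setup G) {v : G} {r : ℕ} (hr : 2 ≤ r) (hv : orderOf v = 2 ^ r) :
    ∃ (K : Subgroup G) (q : ℕ), (∀ g, g ∈ K ↔ g * v = v * g ∧ g ^ s.o = 1) ∧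
      Nat.card (Subgroup.centralizer {v}) = Nat.card K * 2 ^ q ∧ q ≤ s.k + 1 ∧ r ≤ q ∧
      Odd (Nat.card K) := by
  let C := Subgroup.centralizer ({v} : Set G)
  have hvC : v ∈ C := by
    rw [Subgroup.mem_centralizer_iff]; rintro h rfl; rfl
  let v' : C := ⟨v, hvC⟩
  have hv' : orderOf v' = 2 ^ r := by rw [← hv]; exact Subgroup.orderOf_mk v hvC
  have hcomm : ∀ g : C, g * v' = v' * g := by
    intro g
    ext
    exact ((Subgroup.mem_centralizer_iff.mp g.2) v rfl).symm
  have : Fact (Nat.Prime 2) := ⟨Nat.prime_two⟩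
  have hpv : IsPGroup 2 (Subgroup.zpowers v') := by
    rw [IsPGroup.iff_card]; exact ⟨r, by rw [Nat.card_zpowers, hv']⟩
  obtain ⟨S, hS⟩ := hpv.exists_le_sylow
  have hvS : v' ∈ S := hS (Subgroup.mem_zpowers v')
  -- S is cyclic
  have hSp : IsPGroup 2 ((S : Subgroup C).map C.subtype) := S.isPGroup'.map _
  obtain ⟨f, hf⟩ := s.emb _ hSp
  let f' : S →* QuaternionGroup (2 ^ s.k) :=
    f.comp ((S : Subgroup C).equivMapOfInjective C.subtype C.subtype_injective).toMonoidHom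
  have hf' : Function.Injective f' :=
    hf.comp ((S : Subgroup C).equivMapOfInjective C.subtype C.subtype_injective).injective
  let v'' : S := ⟨v', hvS⟩
  have hv2 : (f' v'') ^ 2 ≠ 1 := by
    rw [← map_pow, ← map_one f']
    intro h
    have h1 := congrArg (fun x : S => (x : C)) (hf' h)
    have h2 : v' ^ 2 = 1 := h1
    rw [← orderOf_dvd_iff_pow_eq_one, hv'] at h2
    have := Nat.le_of_dvd two_pos h2
    have h3 : 2 ^ 2 ≤ 2 ^ r := Nat.pow_le_pow_right two_pos hr
    omega
  have : NeZero (2 ^ s.k) := ⟨by positivity⟩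
  obtain ⟨c, hc⟩ := quat_cent _ hv2
  have hrange : f'.range ≤ Subgroup.zpowers c := by
    rintro _ ⟨g, rfl⟩
    apply hc
    rw [← map_mul, ← map_mul]
    congr 1
    exact Subtype.ext (hcomm g)
  have hcyc : IsCyclic S := by
    have h1 : IsCyclic (Subgroup.zpowers c) := inferInstance
    have h2 : IsCyclic f'.range :=
      isCyclic_of_injective (Subgroup.inclusion hrange) (Subgroup.inclusion_injective hrange)
    exact isCyclic_of_injective (MonoidHom.rangeRestrict f') (by
      intro a b h; exact hf' (congrArg Subtype.val h))
  obtain ⟨q, hq⟩ := S.isPGroup'.exists_card_eq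
  have hdvd : ∀ x : S, x ^ (2 ^ (s.k + 1)) = 1 := by
    intro x
    apply hf'
    rw [map_pow, map_one, quat_exp s.hk]
  have hqk : q ≤ s.k + 1 := by
    obtain ⟨g, hg⟩ := IsCyclic.exists_ofOrder_eq_natCard (α := S)
    have := orderOf_dvd_of_pow_eq_one (hdvd g)
    rw [hg, hq] at this
    exact (Nat.pow_dvd_pow_iff_le_right (by norm_num)).mp this
  have hrq : r ≤ q := by
    have h1 : orderOf v'' ∣ Nat.card S := orderOf_dvd_natCard v''
    have h2 : orderOf v'' = 2 ^ r := by rw [← hv']; exact Subgroup.orderOf_mk v' hvS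
    rw [h2, hq] at h1
    exact (Nat.pow_dvd_pow_iff_le_right (by norm_num)).mp h1
  have hmin : (Nat.card C).minFac = 2 := by
    rw [Nat.minFac_eq_two_iff]
    have h1 : 2 ^ r ∣ Nat.card C := by rw [← hv']; exact orderOf_dvd_natCard v'
    exact (dvd_pow_self 2 (by omega)).trans h1
  let hP := IsCyclic.normalizer_le_centralizer hmin hcyc
  let N := (MonoidHom.transferSylow S hP).ker
  have hcompl := MonoidHom.ker_transferSylow_isComplement' S hP
  have hodd : ¬ 2 ∣ Nat.card N := MonoidHom.not_dvd_card_ker_transferSylow S hP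
  have hcard := hcompl.card_mul
  refine ⟨N.map C.subtype, q, ?_, ?_, hqk, hrq, ?_⟩
  · intro g
    constructor
    · rintro ⟨n, hn, rfl⟩
      refine ⟨congrArg Subtype.val (hcomm n), ?_⟩
      have h1 : Nat.card N ∣ s.o := by
        have h2 : Nat.card N ∣ 2 ^ (s.k + 2) * s.o := by
          rw [← s.card, ← Nat.card_eq_fintype_card]
          exact (Subgroup.card_subgroup_dvd_card N).trans (Subgroup.card_subgroup_dvd_card C)
        have h3 : Nat.Coprime (Nat.card N) (2 ^ (s.k + 2)) :=
          (((Nat.Prime.coprime_iff_not_dvd Nat.prime_two).mpr hodd).symm).pow_right _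
        exact h3.dvd_of_dvd_mul_left h2
      have h4 : (⟨n, hn⟩ : N) ^ s.o = 1 := by
        obtain ⟨c, hc⟩ := h1
        rw [hc, pow_mul, pow_card_eq_one', one_pow]
      exact congrArg (fun x : N => ((x : C) : G)) h4
    · rintro ⟨h1, h2⟩
      have hgC : g ∈ C := by
        rw [Subgroup.mem_centralizer_iff]; rintro h rfl; exact h1.symm
      refine ⟨⟨g, hgC⟩, ?_, rfl⟩
      change MonoidHom.transferSylow S hP ⟨g, hgC⟩ = 1
      set t := MonoidHom.transferSylow S hP ⟨g, hgC⟩ with ht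
      have h3 : t ^ s.o = 1 := by
        rw [ht, ← map_pow]
        have : (⟨g, hgC⟩ : C) ^ s.o = 1 := Subtype.ext h2
        rw [this, map_one]
      rw [← orderOf_eq_one_iff]
      have hcop : Nat.Coprime (2 ^ (s.k + 1)) s.o := (Nat.coprime_two_left.mpr s.ho).pow_left _
      exact Nat.eq_one_of_dvd_coprimes hcop (orderOf_dvd_of_pow_eq_one (hdvd t))
        (orderOf_dvd_of_pow_eq_one h3)
  · rw [Subgroup.card_map_of_injective C.subtype_injective, ← hq]
    exact hcard.symm
  · rw [Subgroup.card_map_of_injective C.subtype_injective]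
    rw [← Nat.not_even_iff_odd, even_iff_two_dvd]; exact hodd

lemma norm_card (s : Setup G) {v : G} {r : ℕ} (hv : orderOf v = 2 ^ r) :
    (Finset.univ.filter fun h : G => h * v * h⁻¹ ∈ Subgroup.zpowers v).card ≤
      2 * Nat.card (Subgroup.centralizer {v}) := by
  have hC : (Finset.univ.filter fun h : G => h * v * h⁻¹ = v).card =
      Nat.card (Subgroup.centralizer {v}) := by
    rw [Nat.card_eq_fintype_card, Fintype.card_subtype]
    congr 1
    ext h
    simp only [Finset.mem_filter, Finset.mem_univ, true_and, Subgroup.mem_centralizer_iff,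
      Set.mem_singleton_iff, forall_eq]
    rw [mul_inv_eq_iff_eq_mul]
    exact eq_comm
  have hC' : (Finset.univ.filter fun h : G => h * v * h⁻¹ = v⁻¹).card ≤
      Nat.card (Subgroup.centralizer {v}) := by
    rw [← hC]
    rcases Finset.eq_empty_or_nonempty (Finset.univ.filter fun h : G => h * v * h⁻¹ = v⁻¹) with h0 | ⟨h0, hh0⟩
    · rw [h0]; simp
    · refine Finset.card_le_card_of_injOn (fun h => h0⁻¹ * h) ?_ ?_
      · intro h hh
        simp only [Finset.coe_filter, Finset.mem_univ, true_and, Set.mem_setOf_eq, Finset.mem_filter] at *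
        have : h0⁻¹ * h * v * (h0⁻¹ * h)⁻¹ = h0⁻¹ * (h * v * h⁻¹) * h0 := by group
        rw [this, hh, ← hh0]; group
      · intro a _ b _ h
        simpa using h
  calc _ ≤ ((Finset.univ.filter fun h : G => h * v * h⁻¹ = v) ∪
        (Finset.univ.filter fun h : G => h * v * h⁻¹ = v⁻¹)).card := by
        apply Finset.card_le_card
        intro h hh
        simp only [Finset.mem_filter, Finset.mem_univ, true_and, Finset.mem_union] at *
        exact s.norm_all hv hh
    _ ≤ _ := Finset.card_union_le _ _
    _ ≤ _ := by omega

lemma pow_mul_E (s : Setup G) {v κ : G} {r : ℕ} (hv : orderOf v = 2 ^ r) (hκ : κ * v = v * κ)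
    (hκo : κ ^ s.o = 1) (i : ℕ) : (v ^ i * κ) ^ s.E = v ^ i := by
  have hc : Commute (v ^ i) κ := ((show Commute κ v from hκ).symm).pow_left i
  rw [hc.mul_pow, s.odd_E hκo, mul_one, ← pow_mul, mul_comm, pow_mul, s.two_E (s.two_pow hv)]

lemma mem_zpowers_pow {v : G} {r : ℕ} (hv : orderOf v = 2 ^ r) {i : ℕ} (hi : Odd i) :
    v ∈ Subgroup.zpowers (v ^ i) := by
  have : Nat.Coprime (orderOf v) i := by
    rw [hv]; exact (Nat.coprime_two_left.mpr hi).pow_left _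
  obtain ⟨m, hm⟩ := exists_pow_eq_self_of_coprime this.symm
  exact ⟨m, by simpa using hm⟩

lemma L2bound (s : Setup G) {V : Type} [AddCommGroup V] [Module ℂ V] [FiniteDimensional ℂ V]
    (ρ : Representation ℂ G V) (hρ : SchurIrr ρ) {v : G} {r : ℕ} (hr : 1 ≤ r)
    (hv : orderOf v = 2 ^ r) (K : Subgroup G) (hK : ∀ g ∈ K, g * v = v * g ∧ g ^ s.o = 1) :
    ∑ i ∈ (Finset.range (2 ^ r)).filter Odd, ∑ κ : K, ‖tchar ρ (v ^ i * κ)‖ ^ 2 <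
      2 * Nat.card (Subgroup.centralizer {v}) := by
  set I := (Finset.range (2 ^ r)).filter Odd with hI
  set X := ∑ i ∈ I, ∑ κ : K, ‖tchar ρ (v ^ i * κ)‖ ^ 2 with hX
  set NN := (Finset.univ.filter fun h : G => h * v * h⁻¹ ∈ Subgroup.zpowers v) with hNN
  let T : Finset (G × ℕ × K) := Finset.univ ×ˢ I ×ˢ Finset.univ
  let f : G × ℕ × K → G := fun t => t.1 * (v ^ t.2.1 * t.2.2) * t.1⁻¹
  have hfE : ∀ t ∈ T, (f t) ^ s.E = t.1 * v ^ t.2.1 * t.1⁻¹ := by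
    intro t _
    simp only [f]
    rw [conj_pow, s.pow_mul_E hv (hK _ t.2.2.2).1 (hK _ t.2.2.2).2]
  have hTI : ∀ t ∈ T, t.2.1 < 2 ^ r ∧ Odd t.2.1 := by
    intro t ht
    have := (Finset.mem_product.mp (Finset.mem_product.mp ht).2).1
    rw [hI, Finset.mem_filter, Finset.mem_range] at this
    exact this
  have hfib : ∀ g, (T.filter fun t => f t = g).card ≤ NN.card := by
    intro g
    rcases Finset.eq_empty_or_nonempty (T.filter fun t => f t = g) with h0 | ⟨t0, ht0⟩
    · rw [h0]; simp
    rw [Finset.mem_filter] at ht0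
    refine Finset.card_le_card_of_injOn (fun t => t0.1⁻¹ * t.1) ?_ ?_
    · intro t ht
      simp only [Finset.coe_filter, Set.mem_setOf_eq] at ht
      simp only [hNN, Finset.coe_filter, Finset.mem_univ, true_and, Set.mem_setOf_eq]
      have h1 : t.1 * v ^ t.2.1 * t.1⁻¹ = t0.1 * v ^ t0.2.1 * t0.1⁻¹ := by
        rw [← hfE t ht.1, ← hfE t0 ht0.1, ht.2, ht0.2]
      have h2 : (t0.1⁻¹ * t.1) * v ^ t.2.1 * (t0.1⁻¹ * t.1)⁻¹ = v ^ t0.2.1 := by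
        have : (t0.1⁻¹ * t.1) * v ^ t.2.1 * (t0.1⁻¹ * t.1)⁻¹ =
          t0.1⁻¹ * (t.1 * v ^ t.2.1 * t.1⁻¹) * t0.1 := by group
        rw [this, h1]; group
      obtain ⟨z, hz⟩ := mem_zpowers_pow hv (hTI t ht.1).2
      simp only at hz
      have h3 : (t0.1⁻¹ * t.1) * v * (t0.1⁻¹ * t.1)⁻¹ = (v ^ t0.2.1) ^ z := by
        rw [← h2, conj_zpow, hz]
      rw [h3]
      exact zpow_mem (pow_mem (Subgroup.mem_zpowers _) _) _
    · intro t ht t' ht' h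
      simp only [Finset.coe_filter, Set.mem_setOf_eq] at ht ht'
      have e1 : t.1 = t'.1 := by simpa using h
      have e2 : f t = f t' := ht.2.trans ht'.2.symm
      simp only [f, e1] at e2
      have e3 : v ^ t.2.1 * (t.2.2 : G) = v ^ t'.2.1 * t'.2.2 := by simpa using e2
      have e4 := congrArg (· ^ s.E) e3
      simp only [s.pow_mul_E hv (hK _ t.2.2.2).1 (hK _ t.2.2.2).2,
        s.pow_mul_E hv (hK _ t'.2.2.2).1 (hK _ t'.2.2.2).2] at e4
      have e5 : t.2.1 = t'.2.1 := by
        apply pow_injOn_Iio_orderOf _ _ e4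
        · simp only [Set.mem_Iio, hv]; exact (hTI t ht.1).1
        · simp only [Set.mem_Iio, hv]; exact (hTI t' ht'.1).1
      rw [e5] at e3
      have e6 : t.2.2 = t'.2.2 := Subtype.ext (by simpa using e3)
      exact Prod.ext e1 (Prod.ext e5 e6)
  have hfib1 : (T.filter fun t => f t = 1).card = 0 := by
    rw [Finset.card_eq_zero, Finset.filter_eq_empty_iff]
    intro t ht h1
    have h2 := hfE t ht
    rw [h1, one_pow] at h2
    have h3 : v ^ t.2.1 = 1 := by
      have h4 := h2.symm
      rw [mul_inv_eq_one] at h4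
      simpa using h4
    rw [← orderOf_dvd_iff_pow_eq_one, hv] at h3
    have h5 : 2 ∣ t.2.1 := (dvd_pow_self 2 (by omega)).trans h3
    exact (Nat.not_even_iff_odd.mpr (hTI t ht).2) (even_iff_two_dvd.mpr h5)
  have hsumT : ∑ t ∈ T, ‖tchar ρ (f t)‖ ^ 2 = Fintype.card G * X := by
    simp only [T, Finset.sum_product]
    have : ∀ h : G, ∑ i ∈ I, ∑ κ : K, ‖tchar ρ (f (h, i, κ))‖ ^ 2 = X := by
      intro h
      simp only [f, tchar_conj, hX]
    simp only [this, Finset.sum_const, Finset.card_univ, nsmul_eq_mul]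
  have hle : ∑ t ∈ T, ‖tchar ρ (f t)‖ ^ 2 ≤
      NN.card * (Fintype.card G - ‖tchar ρ 1‖ ^ 2) := by
    rw [← Finset.sum_fiberwise T f]
    have : ∀ g : G, ∑ t ∈ T with f t = g, ‖tchar ρ (f t)‖ ^ 2 =
        (T.filter fun t => f t = g).card * ‖tchar ρ g‖ ^ 2 := by
      intro g
      rw [Finset.sum_congr rfl (g := fun _ => ‖tchar ρ g‖ ^ 2) (fun t ht => by
        rw [(Finset.mem_filter.mp ht).2])]
      simp
    simp only [this]
    rw [← norm_one_sq ρ hρ, ← Finset.sum_erase_eq_sub (Finset.mem_univ 1), Finset.mul_sum,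
      ← Finset.sum_erase_add _ _ (Finset.mem_univ (1 : G)), hfib1]
    simp only [Nat.cast_zero, zero_mul, add_zero]
    refine Finset.sum_le_sum (fun g _ => ?_)
    have := hfib g
    gcongr
  rw [hsumT] at hle
  have hpos : 0 < ‖tchar ρ 1‖ ^ 2 := by
    have := tchar_one_ne ρ hρ
    positivity
  have hNpos : (0 : ℝ) < NN.card := by
    have : (1 : G) ∈ NN := by simp [hNN]
    exact_mod_cast Finset.card_pos.mpr ⟨1, this⟩
  have hG : (0 : ℝ) < Fintype.card G := by exact_mod_cast Fintype.card_pos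
  have h1 : (Fintype.card G : ℝ) * X < Fintype.card G * NN.card := by nlinarith
  have h2 : X < NN.card := lt_of_mul_lt_mul_left h1 hG.le
  have h3 : (NN.card : ℝ) ≤ 2 * Nat.card (Subgroup.centralizer {v}) := by
    exact_mod_cast s.norm_card hv
  linarith
end Setup
end

section
noncomputable def homOp {U V : Type} [AddCommGroup U] [Module ℂ U] [AddCommGroup V] [Module ℂ V]
    (A : U →ₗ[ℂ] U) (B : V →ₗ[ℂ] V) : (U →ₗ[ℂ] V) →ₗ[ℂ] (U →ₗ[ℂ] V) where
  toFun f := B ∘ₗ f ∘ₗ A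
  map_add' f g := by ext; simp
  map_smul' c f := by ext; simp

lemma homOp_mul {U V : Type} [AddCommGroup U] [Module ℂ U] [AddCommGroup V] [Module ℂ V]
    (A A' : U →ₗ[ℂ] U) (B B' : V →ₗ[ℂ] V) :
    homOp A B * homOp A' B' = homOp (A' * A) (B * B') := by
  ext f u; simp [homOp]

lemma homOp_one {U V : Type} [AddCommGroup U] [Module ℂ U] [AddCommGroup V] [Module ℂ V] :
    homOp (1 : U →ₗ[ℂ] U) (1 : V →ₗ[ℂ] V) = 1 := by
  ext f u; simp [homOp]

lemma homOp_pow {U V : Type} [AddCommGroup U] [Module ℂ U] [AddCommGroup V] [Module ℂ V]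
    (A : U →ₗ[ℂ] U) (B : V →ₗ[ℂ] V) (n : ℕ) :
    homOp A B ^ n = homOp (A ^ n) (B ^ n) := by
  induction n with
  | zero => simp [homOp_one]
  | succ n ih => rw [pow_succ, ih, homOp_mul, pow_succ', pow_succ]

lemma homOp_trace {U V : Type} [AddCommGroup U] [Module ℂ U] [AddCommGroup V] [Module ℂ V]
    [FiniteDimensional ℂ U] [FiniteDimensional ℂ V]
    (A : U →ₗ[ℂ] U) (B : V →ₗ[ℂ] V) :
    LinearMap.trace ℂ _ (homOp A B) = LinearMap.trace ℂ U A * LinearMap.trace ℂ V B := by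
  rw [← LinearMap.trace_transpose' A, ← LinearMap.trace_tensorProduct',
    ← LinearMap.trace_conj' _ (dualTensorHomEquiv ℂ U V)]
  congr 1
  rw [LinearEquiv.conj_apply]
  rw [LinearEquiv.eq_comp_toLinearMap_symm]
  refine TensorProduct.ext' fun φ v => ?_
  ext u
  simp [homOp, Module.Dual.transpose]

/-- `K`-averaged Hom operator -/
noncomputable def homRep {K : Type} [Group K] {U V : Type} [AddCommGroup U] [Module ℂ U]
    [AddCommGroup V] [Module ℂ V] (σ : Representation ℂ K U) (ρ : Representation ℂ K V) :
    Representation ℂ K (U →ₗ[ℂ] V) where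
  toFun g := homOp (σ g⁻¹) (ρ g)
  map_one' := by simp [homOp_one]
  map_mul' g h := by rw [homOp_mul]; simp

/-- traces on `Hom_K(U,V)` -/
lemma spectral_hom {K : Type} [Group K] [Fintype K] {U V : Type} [AddCommGroup U] [Module ℂ U]
    [AddCommGroup V] [Module ℂ V] [FiniteDimensional ℂ U] [FiniteDimensional ℂ V]
    (σ : Representation ℂ K U) (ρ : Representation ℂ K V) (A : U →ₗ[ℂ] U) (B : V →ₗ[ℂ] V)
    (hA : ∀ g, A * σ g = σ g * A) (hB : ∀ g, B * ρ g = ρ g * B) (m : ℕ) (hm : 0 < m)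
    (hAm : A ^ m = 1) (hBm : B ^ m = 1) (ζ : ℂ) (hζ : IsPrimitiveRoot ζ m) :
    ∃ N : ℕ → ℕ,
      (∀ j, (m : ℂ) * N j = ∑ i ∈ Finset.range m, ζ⁻¹ ^ (i * j) * ((Fintype.card K : ℂ)⁻¹ *
        ∑ g, LinearMap.trace ℂ U (A ^ i * σ g⁻¹) * LinearMap.trace ℂ V (B ^ i * ρ g))) ∧
      ∀ i, ((Fintype.card K : ℂ)⁻¹ *
        ∑ g, LinearMap.trace ℂ U (A ^ i * σ g⁻¹) * LinearMap.trace ℂ V (B ^ i * ρ g)) =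
          ∑ j ∈ Finset.range m, (N j : ℂ) * ζ ^ (i * j) := by
  have h1 := idem_group (homRep σ ρ)
  set e := (Fintype.card K : ℂ)⁻¹ • ∑ g, homRep σ ρ g with he
  have h2 : homOp A B * e = e * homOp A B := by
    rw [he, mul_smul_comm, smul_mul_assoc, Finset.mul_sum, Finset.sum_mul]
    congr 1
    refine Finset.sum_congr rfl fun g _ => ?_
    show homOp A B * homOp _ _ = homOp _ _ * homOp A B
    rw [homOp_mul, homOp_mul, hA, hB]
  have h3 : homOp A B ^ m = 1 := by rw [homOp_pow, hAm, hBm, homOp_one]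
  have h4 : ∀ i, LinearMap.trace ℂ _ (homOp A B ^ i * e) = ((Fintype.card K : ℂ)⁻¹ *
        ∑ g, LinearMap.trace ℂ U (A ^ i * σ g⁻¹) * LinearMap.trace ℂ V (B ^ i * ρ g)) := by
    intro i
    rw [he, mul_smul_comm, Finset.mul_sum, map_smul, map_sum, smul_eq_mul]
    congr 1
    refine Finset.sum_congr rfl fun g _ => ?_
    show LinearMap.trace ℂ _ (homOp A B ^ i * homOp _ _) = _
    rw [homOp_pow, homOp_mul, homOp_trace]
    congr 1
    exact LinearMap.trace_mul_comm _ _ _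
  obtain ⟨N, hN1, hN2⟩ := spectral m hm (homOp A B) e h3 h1 h2 ζ hζ
  refine ⟨N, fun j => ?_, fun i => ?_⟩
  · rw [hN1]; simp_rw [h4]
  · rw [← hN2, h4]

open Polynomial in
lemma cyc_eval_zero {n : ℕ} (hn : 0 < n) {ζ ξ : ℂ} (hζ : IsPrimitiveRoot ζ n) (hξ : IsPrimitiveRoot ξ n)
    (p : ℤ[X]) (h : aeval ζ p = 0) : aeval ξ p = 0 := by
  have h1 : cyclotomic n ℤ ∣ p := by
    rw [cyclotomic_eq_minpoly hζ hn]
    exact minpoly.isIntegrallyClosed_dvd (hζ.isIntegral hn) h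
  have h2 : aeval ξ (cyclotomic n ℤ) = 0 := by
    rw [cyclotomic_eq_minpoly hξ hn]; exact minpoly.aeval _ _
  obtain ⟨q, rfl⟩ := h1
  rw [map_mul, h2, zero_mul]

open Polynomial in
lemma cyc_prod_int (n : ℕ) [NeZero (n : ℂ)] (p : ℤ[X]) : ∃ k : ℤ, ∏ ξ ∈ primitiveRoots n ℂ, aeval ξ p = k := by
  refine ⟨resultant (cyclotomic n ℤ) p (cyclotomic n ℤ).natDegree p.natDegree, ?_⟩
  have h := resultant_eq_prod_eval (cyclotomic n ℂ) (p.map (Int.castRingHom ℂ)) p.natDegree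
    natDegree_map_le (IsAlgClosed.splits _)
  rw [(cyclotomic.monic n ℂ).leadingCoeff, one_pow, one_mul, cyclotomic.roots_eq_primitiveRoots_val] at h
  have h2 := resultant_map_map (cyclotomic n ℤ) p (cyclotomic n ℤ).natDegree p.natDegree (Int.castRingHom ℂ)
  rw [map_cyclotomic] at h2
  rw [natDegree_cyclotomic] at h h2 ⊢
  rw [h] at h2
  simp only [eq_intCast] at h2
  rw [← h2]
  show _ = ∏ ξ ∈ primitiveRoots n ℂ, _
  refine Finset.prod_congr rfl fun ξ _ => ?_
  rw [aeval_def, eval_map]; rfl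

lemma cyc_bound (r t : ℕ) (hr : 1 ≤ r) (ζ : ℂ) (hζ : IsPrimitiveRoot ζ (2 ^ r)) (N : ℕ → ℕ)
    (S : ℕ → ℝ) (hS : ∀ i, Odd i → 0 ≤ S i)
    (hN : ∀ i, Odd i → (S i : ℂ) = ∑ j ∈ Finset.range (2 ^ r), (N j : ℂ) * ζ ^ (i * j))
    (hR : ∀ i, Odd i → (S i : ℂ) / 2 ^ t ∈ RR) (h1 : S 1 ≠ 0) :
    (2 : ℝ) ^ t * 2 ^ (r - 1) ≤ ∑ i ∈ (Finset.range (2 ^ r)).filter Odd, S i := by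
  set p : Polynomial ℤ := ∑ j ∈ Finset.range (2 ^ r), Polynomial.C (N j : ℤ) * Polynomial.X ^ j with hp
  have hev : ∀ i, Odd i → Polynomial.aeval (ζ ^ i) p = (S i : ℂ) := by
    intro i hi
    rw [hN i hi, hp]
    simp [pow_mul]
  have hprim : ∀ i, Odd i → IsPrimitiveRoot (ζ ^ i) (2 ^ r) := by
    intro i hi
    exact hζ.pow_of_coprime i ((Nat.coprime_two_right.mpr hi).pow_right _)
  have hne : ∀ i, Odd i → S i ≠ 0 := by
    intro i hi h0
    apply h1
    have := cyc_eval_zero (by positivity) (hprim i hi) (hprim 1 odd_one) p (by rw [hev i hi, h0]; simp)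
    rw [hev 1 odd_one] at this
    exact_mod_cast this
  set I := (Finset.range (2 ^ r)).filter Odd with hI
  have hroots : primitiveRoots (2 ^ r) ℂ = I.image (fun i => ζ ^ i) := by
    ext ξ
    rw [mem_primitiveRoots (by positivity), Finset.mem_image]
    constructor
    · intro h
      have : NeZero (2 ^ r) := ⟨by positivity⟩
      obtain ⟨i, hi, hc, he⟩ := hζ.isPrimitiveRoot_iff.mp h
      refine ⟨i, ?_, he⟩
      rw [hI, Finset.mem_filter, Finset.mem_range]
      refine ⟨hi, Nat.coprime_two_right.mp ?_⟩
      exact Nat.Coprime.coprime_dvd_right (dvd_pow_self 2 (by omega)) hc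
    · rintro ⟨i, hi, rfl⟩
      rw [hI, Finset.mem_filter] at hi
      exact hprim i hi.2
  have hinj : Set.InjOn (fun i => ζ ^ i) I := by
    intro i hi j hj hij
    have hi' := Finset.mem_range.mp (Finset.mem_filter.mp (Finset.mem_coe.mp hi)).1
    have hj' := Finset.mem_range.mp (Finset.mem_filter.mp (Finset.mem_coe.mp hj)).1
    exact hζ.pow_inj hi' hj' hij
  have hcard : I.card = 2 ^ (r - 1) := by
    have h2 := hζ.card_primitiveRoots
    rw [hroots, Finset.card_image_of_injOn hinj, Nat.totient_prime_pow Nat.prime_two (by omega)] at h2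
    simpa using h2
  have : NeZero ((2 ^ r : ℕ) : ℂ) := ⟨by push_cast; exact pow_ne_zero _ two_ne_zero⟩
  obtain ⟨k, hk⟩ := cyc_prod_int (2 ^ r) p
  rw [hroots, Finset.prod_image hinj] at hk
  have hk2 : ∏ i ∈ I, (S i : ℂ) = k := by
    rw [← hk]
    exact Finset.prod_congr rfl fun i hi => (hev i (Finset.mem_filter.mp hi).2).symm
  have hdiv : (2 : ℤ) ^ (t * I.card) ∣ k := by
    apply RR_div
    rw [← hk2, pow_mul, ← Finset.prod_const, ← Finset.prod_div_distrib]
    exact Subring.prod_mem _ fun i hi => hR i (Finset.mem_filter.mp hi).2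
  have hk3 : ∏ i ∈ I, S i = k := by exact_mod_cast hk2
  have hpos : ∀ i ∈ I, 0 < S i := fun i hi =>
    lt_of_le_of_ne (hS i (Finset.mem_filter.mp hi).2) (hne i (Finset.mem_filter.mp hi).2).symm
  have hkpos : (0 : ℝ) < k := by rw [← hk3]; exact Finset.prod_pos hpos
  have hkpos' : 0 < k := by exact_mod_cast hkpos
  have hle : (2 : ℤ) ^ (t * I.card) ≤ k := Int.le_of_dvd hkpos' hdiv
  have hle' : (2 : ℝ) ^ (t * I.card) ≤ k := by exact_mod_cast hle
  have hprod : 1 ≤ ∏ i ∈ I, (S i / 2 ^ t) := by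
    rw [Finset.prod_div_distrib, Finset.prod_const, ← pow_mul, hk3, le_div_iff₀ (by positivity), one_mul]
    exact hle'
  have hlog : 0 ≤ ∑ i ∈ I, (S i / 2 ^ t - 1) := by
    calc (0 : ℝ) ≤ Real.log (∏ i ∈ I, (S i / 2 ^ t)) := Real.log_nonneg hprod
      _ = ∑ i ∈ I, Real.log (S i / 2 ^ t) :=
          Real.log_prod (fun i hi => (div_pos (hpos i hi) (by positivity)).ne')
      _ ≤ _ := Finset.sum_le_sum fun i hi =>
          Real.log_le_sub_one_of_pos (div_pos (hpos i hi) (by positivity))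
  rw [Finset.sum_sub_distrib, ← Finset.sum_div, Finset.sum_const, hcard] at hlog
  have h5 : (2 : ℝ) ^ (r - 1) ≤ (∑ i ∈ I, S i) / 2 ^ t := by
    simpa using hlog
  rw [le_div_iff₀ (by positivity)] at h5
  linarith
end

section
namespace Setup
variable {G : Type} [Group G] [Fintype G]

lemma lemmaI' {V : Type} [AddCommGroup V] [Module ℂ V] [FiniteDimensional ℂ V]
    (ρ : Representation ℂ G V) (hρ : SchurIrr ρ) (Q : Subgroup G) (f : G → ℂ)
    (hb : ∀ g, f g ∈ RR) (hinv : ∀ q ∈ Q, ∀ g, f (q * g * q⁻¹) = f g) {a b w : ℕ}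
    (ha : 2 ^ a ∣ Module.finrank ℂ V) (hQ : Q.index = 2 ^ b * w) (hw : Odd w) :
    (∑ g, f g * tchar ρ g) * 2 ^ b / 2 ^ a ∈ RR := by
  have h := lemmaI ρ hρ Q f hb hinv
  have hne := tchar_one_ne ρ hρ
  obtain ⟨d, hd⟩ := ha
  rw [tchar_one, hd, hQ] at h
  rw [tchar_one, hd] at hne
  push_cast at h hne
  have hd0 : (d : ℂ) ≠ 0 := right_ne_zero_of_mul hne
  have hw0 : (w : ℂ) ≠ 0 := by have := hw.pos; exact_mod_cast this.ne'
  have h2 := RR.mul_mem (RR.mul_mem h (RR_of_int (nat_integral d))) (RR_oddinv hw)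
  convert h2 using 1
  field_simp

lemma index_of_card (s : Setup G) (Q : Subgroup G) {c b : ℕ} (hQ : Nat.card Q = 2 ^ b * c) (hc : Odd c) (hb : b ≤ s.k + 2) :
    ∃ w, Odd w ∧ Q.index = 2 ^ (s.k + 2 - b) * w := by
  have h1 := Q.card_mul_index
  rw [Nat.card_eq_fintype_card (α := G), s.card] at h1
  have hco : c ∣ s.o := by
    have h2 : c ∣ 2 ^ (s.k + 2) * s.o := by
      rw [← h1]
      exact Dvd.dvd.mul_right (by rw [hQ]; exact Dvd.intro_left _ rfl) _
    exact (Nat.Coprime.pow_right _ (Nat.coprime_two_right.mpr hc)).dvd_of_dvd_mul_left h2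
  obtain ⟨w, hw⟩ := hco
  refine ⟨w, ?_, ?_⟩
  · have := s.ho; rw [hw] at this; exact (Nat.odd_mul.mp this).2
  · rw [hQ, hw] at h1
    have h3 : 2 ^ (s.k + 2) = 2 ^ b * 2 ^ (s.k + 2 - b) := by rw [← pow_add]; congr 1; omega
    rw [h3] at h1
    have h4 : 0 < 2 ^ b * c := Nat.mul_pos (by positivity) hc.pos
    apply Nat.eq_of_mul_eq_mul_left h4
    rw [h1]; ring

lemma L4 (s : Setup G) {V : Type} [AddCommGroup V] [Module ℂ V] [FiniteDimensional ℂ V]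
    (ρ : Representation ℂ G V) (hρ : SchurIrr ρ) {v : G} {r a : ℕ} (hr : 2 ≤ r)
    (hv : orderOf v = 2 ^ r) (ha : 2 ^ a ∣ Module.finrank ℂ V) (hra : s.k + 3 ≤ r + a)
    (κ₀ : G) (hκ : κ₀ * v = v * κ₀) (hκo : κ₀ ^ s.o = 1) : tchar ρ (v * κ₀) = 0 := by
  obtain ⟨K, q, hK, hcard, hq1, hq2, hKodd⟩ := s.exists_K hr hv
  have hbound := s.L2bound ρ hρ (by omega : 1 ≤ r) hv K (fun g hg => (hK g).mp hg)
  have hKpos : 0 < Nat.card K := hKodd.pos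
  have hKne : (Nat.card K : ℂ) ≠ 0 := by exact_mod_cast hKpos.ne'
  have hKne' : (0 : ℝ) < Nat.card K := by exact_mod_cast hKpos
  set S : ℕ → ℝ := fun i => (Nat.card K : ℝ)⁻¹ * ∑ κ : K, ‖tchar ρ (v ^ i * κ)‖ ^ 2 with hS
  have hSsum : ∑ i ∈ (Finset.range (2 ^ r)).filter Odd, S i < 2 ^ (q + 1) := by
    rw [hS, ← Finset.mul_sum, inv_mul_lt_iff₀ hKne']
    refine hbound.trans_le ?_
    rw [hcard]; push_cast; rw [pow_succ]; apply le_of_eq; ring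
  have hSc : ∀ i, (S i : ℂ) = (Nat.card K : ℂ)⁻¹ * ∑ κ : K, tchar ρ ((v ^ i * κ)⁻¹) * tchar ρ (v ^ i * κ) := by
    intro i
    rw [hS]; push_cast
    congr 1
    refine Finset.sum_congr rfl fun κ _ => ?_
    rw [tchar_inv]
    exact (Complex.conj_mul' _).symm
  obtain ⟨ζ, hζ⟩ : ∃ ζ : ℂ, IsPrimitiveRoot ζ (2 ^ r) := ⟨_, Complex.isPrimitiveRoot_exp _ (by positivity)⟩
  have hv1 : v ^ (2 ^ r) = 1 := by rw [← hv]; exact pow_orderOf_eq_one v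
  have hcomm : ∀ κ : K, (κ : G) * v = v * κ := fun κ => ((hK κ).mp κ.2).1
  obtain ⟨N, -, hN⟩ := spectral_hom (ρ.comp K.subtype) (ρ.comp K.subtype) (ρ v⁻¹) (ρ v)
    (by intro g; show ρ v⁻¹ * ρ g = ρ g * ρ v⁻¹
        rw [← map_mul, ← map_mul]; congr 1
        rw [inv_mul_eq_iff_eq_mul, ← mul_assoc, ← hcomm, mul_inv_cancel_right])
    (by intro g; show ρ v * ρ g = ρ g * ρ v
        rw [← map_mul, ← map_mul, hcomm]) (2 ^ r) (by positivity)
    (by rw [← map_pow, inv_pow, hv1, inv_one, map_one]) (by rw [← map_pow, hv1, map_one]) ζ hζ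
  have hN' : ∀ i, Odd i → (S i : ℂ) = ∑ j ∈ Finset.range (2 ^ r), (N j : ℂ) * ζ ^ (i * j) := by
    intro i _
    rw [hSc, ← hN, Nat.card_eq_fintype_card]
    congr 1
    refine Finset.sum_congr rfl fun κ _ => ?_
    show _ = LinearMap.trace ℂ V (ρ v⁻¹ ^ i * ρ ((κ⁻¹ : K) : G)) * LinearMap.trace ℂ V (ρ v ^ i * ρ κ)
    rw [← map_pow, ← map_pow, ← map_mul ρ, ← map_mul ρ]
    have : ((v ^ i * (κ : G))⁻¹) = v⁻¹ ^ i * ((κ⁻¹ : K) : G) := by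
      have h1 : Commute (κ : G) (v ^ i) := (show Commute (κ : G) v from hcomm κ).pow_right i
      rw [← h1.eq, mul_inv_rev]; simp
    rw [this]; rfl
  have hCcard : Nat.card (Subgroup.centralizer {v}) = 2 ^ q * Nat.card K := by rw [hcard]; ring
  obtain ⟨w, hw, hwi⟩ := s.index_of_card _ hCcard hKodd (by omega)
  obtain ⟨w', hw', hwi'⟩ := s.index_of_card (Subgroup.zpowers v) (b := r) (c := 1) (by rw [Nat.card_zpowers, hv, mul_one]) odd_one (by omega)
  -- first integrality
  have hc1 : ∀ g : G, g * v = v * g → tchar ρ g * 2 ^ (s.k + 2 - r) / 2 ^ a ∈ RR := by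
    intro g hg
    have := lemmaI' ρ hρ (Subgroup.zpowers v) (fun h => if h = g then 1 else 0)
      (by intro h; beta_reduce; split_ifs; exacts [RR.one_mem, RR.zero_mem])
      (by
        rintro x hx h
        have hgx : g * x = x * g := by
          obtain ⟨j, rfl⟩ := Subgroup.mem_zpowers_iff.mp hx
          exact ((show Commute g v from hg).zpow_right j).eq
        congr 1
        rw [mul_inv_eq_iff_eq_mul, hgx, mul_right_inj]) ha hwi' hw'
    simpa using this
  set c : G → ℂ := fun g => tchar ρ g * 2 ^ (s.k + 2 - r) / 2 ^ a with hc
  have hR : ∀ i, Odd i → (S i : ℂ) / 2 ^ (q + r + 2 * a - 2 * (s.k + 2)) ∈ RR := by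
    intro i _
    have := lemmaI' ρ hρ (Subgroup.centralizer {v}) (fun h => if (v ^ i)⁻¹ * h ∈ K then c h⁻¹ else 0)
      (by
        intro h; beta_reduce; split_ifs with hh
        · apply hc1
          have h1 := ((hK _).mp hh).1
          have h2 : h * v = v * h := by
            rw [mul_assoc, inv_mul_eq_iff_eq_mul] at h1
            rw [h1, ← mul_assoc, ← mul_assoc, ← pow_succ, pow_succ', mul_inv_cancel_right]
          rw [inv_mul_eq_iff_eq_mul, ← mul_assoc, h2, mul_inv_cancel_right]
        · exact RR.zero_mem)
      (by
        intro x hx h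
        have hxv : x * v = v * x := (Subgroup.mem_centralizer_singleton_iff.mp hx)
        have hxi : Commute x (v ^ i) := (show Commute x v from hxv).pow_right i
        have e1 : (v ^ i)⁻¹ * (x * h * x⁻¹) = x * ((v ^ i)⁻¹ * h) * x⁻¹ := by
          have := hxi.inv_right.eq
          rw [← mul_assoc x, this]; group
        have e2 : (x * ((v ^ i)⁻¹ * h) * x⁻¹ ∈ K) ↔ (v ^ i)⁻¹ * h ∈ K := by
          have key : ∀ y g : G, y * v = v * y → g ∈ K → y * g * y⁻¹ ∈ K := by
            intro y g hy hg
            rw [hK] at hg ⊢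
            refine ⟨?_, by rw [conj_pow, hg.2]; simp⟩
            have a1 : Commute y v := hy
            have a2 : Commute g v := hg.1
            exact ((a1.mul_left a2).mul_left a1.inv_left).eq
          refine ⟨fun h1 => ?_, key x _ hxv⟩
          have := key x⁻¹ _ ((show Commute x v from hxv).inv_left.eq) h1
          simpa [mul_assoc] using this
        have e3 : c (x * h * x⁻¹)⁻¹ = c h⁻¹ := by
          have : (x * h * x⁻¹)⁻¹ = x * h⁻¹ * x⁻¹ := by group
          rw [this]; simp only [hc]; rw [tchar_conj]
        simp only [e1, e2, e3]) ha hwi hw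
    have hsum : ∑ g, (if (v ^ i)⁻¹ * g ∈ K then c g⁻¹ else 0) * tchar ρ g =
        ∑ κ : K, c ((v ^ i * κ)⁻¹) * tchar ρ (v ^ i * κ) := by
      rw [← Equiv.sum_comp (Equiv.mulLeft (v ^ i))]
      simp only [Equiv.coe_mulLeft, inv_mul_cancel_left, ite_mul, zero_mul]
      rw [← Finset.sum_filter]
      exact (Finset.sum_subtype _ (by simp) _)
    rw [hsum] at this
    have h2 : ∑ κ : K, c ((v ^ i * κ)⁻¹) * tchar ρ (v ^ i * κ) = Nat.card K * S i * 2 ^ (s.k + 2 - r) / 2 ^ a := by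
      rw [hSc, mul_inv_cancel_left₀ hKne, Finset.sum_mul, Finset.sum_div]
      refine Finset.sum_congr rfl fun κ _ => ?_
      simp only [hc]; ring
    rw [h2] at this
    have h3 := RR.mul_mem this (RR_oddinv hKodd)
    convert h3 using 1
    have e : (2 : ℂ) ^ (s.k + 2 - r) * 2 ^ (s.k + 2 - q) * 2 ^ (q + r + 2 * a - 2 * (s.k + 2)) = 2 ^ a * 2 ^ a := by
      rw [← pow_add, ← pow_add, ← pow_add]; congr 1; omega
    field_simp
    rw [sq, ← e]; ring
  have hS0 : S 1 = 0 := by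
    by_contra hne
    have := cyc_bound r _ (by omega) ζ hζ N S (fun i _ => by simp only [hS]; positivity) hN' hR hne
    have h3 : (2 : ℝ) ^ (q + 1) ≤ 2 ^ (q + r + 2 * a - 2 * (s.k + 2)) * 2 ^ (r - 1) := by
      rw [← pow_add]
      exact pow_le_pow_right₀ (by norm_num) (by omega)
    linarith
  have hS1 : ∑ κ : K, ‖tchar ρ (v ^ 1 * κ)‖ ^ 2 = 0 := by
    rcases mul_eq_zero.mp hS0 with h | h
    · exact absurd h (inv_ne_zero hKne'.ne')
    · exact h
  have := (Finset.sum_eq_zero_iff_of_nonneg (fun κ _ => by positivity)).mp hS1 ⟨κ₀, (hK _).mpr ⟨hκ, hκo⟩⟩ (Finset.mem_univ _)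
  simpa using this

lemma L4' (s : Setup G) {V : Type} [AddCommGroup V] [Module ℂ V] [FiniteDimensional ℂ V]
    (ρ : Representation ℂ G V) (hρ : SchurIrr ρ) {g : G} {r a : ℕ} (hr : 2 ≤ r)
    (hv : 2 ^ r ∣ orderOf g) (ha : 2 ^ a ∣ Module.finrank ℂ V) (hra : s.k + 3 ≤ r + a) :
    tchar ρ g = 0 := by
  obtain ⟨r', hr'1, hr'⟩ := (Nat.dvd_prime_pow Nat.prime_two).mp (orderOf_dvd_of_pow_eq_one (s.E_two g))
  have h1 : 2 ^ r ∣ 2 ^ r' := by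
    have h2 : g ^ (s.o * 2 ^ r') = 1 := by
      have h3 : (g ^ s.E) ^ 2 ^ r' = 1 := by rw [← hr']; exact pow_orderOf_eq_one _
      have h4 : (g ^ s.F) ^ s.o = 1 := s.F_odd g
      have hc : Commute (g ^ s.E) (g ^ s.F) := (Commute.refl g).pow_pow _ _
      conv_lhs => rw [← s.split g]
      rw [hc.mul_pow, mul_comm s.o, pow_mul, h3, one_pow, mul_comm, pow_mul, h4]; simp
    have h5 := hv.trans (orderOf_dvd_of_pow_eq_one h2)
    exact ((Nat.coprime_two_left.mpr s.ho).pow_left r).dvd_of_dvd_mul_left h5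
  have h2 : r ≤ r' := (Nat.pow_dvd_pow_iff_le_right (by norm_num)).mp h1
  have := s.L4 ρ hρ (by omega) hr' ha (by omega) (g ^ s.F) ((Commute.refl g).pow_pow _ _).eq (s.F_odd g)
  rwa [s.split] at this
end Setup
end

section
lemma conv_char {G : Type} [Group G] [Fintype G] {V : Type} [AddCommGroup V] [Module ℂ V]
    [FiniteDimensional ℂ V] (ρ : Representation ℂ G V) (hρ : SchurIrr ρ) :
    (∑ h, tchar ρ h⁻¹ • ρ h) = ((Fintype.card G : ℂ) / tchar ρ 1) • 1 := by
  obtain ⟨σ, h1, h2⟩ := central_scalar ρ hρ (fun g => tchar ρ g⁻¹) (by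
    intro g h
    have : (h * g * h⁻¹)⁻¹ = h * g⁻¹ * h⁻¹ := by group
    rw [this, tchar_conj])
  have h3 := norm_one ρ hρ
  have h4 : ∑ g, tchar ρ g⁻¹ * tchar ρ g = Fintype.card G := by
    rw [← h3]; exact Finset.sum_congr rfl fun g _ => mul_comm _ _
  rw [h4] at h2
  rw [h1, ← h2, mul_div_cancel_right₀ _ (tchar_one_ne ρ hρ)]

lemma conv_char' {G : Type} [Group G] [Fintype G] {V : Type} [AddCommGroup V] [Module ℂ V]
    [FiniteDimensional ℂ V] (ρ : Representation ℂ G V) (hρ : SchurIrr ρ) (g : G) :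
    (∑ h, tchar ρ h⁻¹ * tchar ρ (h * g)) = ((Fintype.card G : ℂ) / tchar ρ 1) * tchar ρ g := by
  have h := congrArg (fun T => LinearMap.trace ℂ V (T * ρ g)) (conv_char ρ hρ)
  simp only [Finset.sum_mul, smul_mul_assoc, one_mul, map_sum, map_smul, smul_eq_mul, ← map_mul ρ] at h
  exact h

lemma RR_two_ne (w : RR) : (1 : RR) + 2 * w ≠ 0 := by
  intro h
  have h1 : (1 : ℂ) + 2 * (w : ℂ) = 0 := congrArg Subtype.val h
  have h2 : ((1 : ℤ) : ℂ) / 2 ^ 1 ∈ RR := by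
    have : ((1 : ℤ) : ℂ) / 2 ^ 1 = -w := by push_cast; linear_combination (1/2) * h1
    rw [this]; exact RR.neg_mem w.2
  have := RR_div h2
  omega

/-- core matrix computation -/
lemma mat_core {G : Type} [Group G] [Fintype G] (z : G) (hz : z * z = 1) (hz1 : z ≠ 1) (e : G → RR)
    (hconv : ∀ g l : G, ∑ h, e (g * h⁻¹) * e (h * l⁻¹) = e (g * l⁻¹)) :
    ∑ g : G, e (g * z * g⁻¹) = 0 := by
  set s : G → RR := fun g => if g = (QuotientGroup.mk (s := Subgroup.zpowers z) g).out then 1 else -1 with hs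
  have hzi : z⁻¹ = z := inv_eq_of_mul_eq_one_right hz
  have hss : ∀ g, s g * s g = 1 := by intro g; simp only [hs]; split_ifs <;> ring
  have hsz : ∀ g, s (g * z) = - s g := by
    intro g
    have h1 : (QuotientGroup.mk (s := Subgroup.zpowers z) (g * z)) = QuotientGroup.mk g := by
      rw [QuotientGroup.eq]; simp
    obtain ⟨⟨w, hw⟩, hw'⟩ := QuotientGroup.mk_out_eq_mul (Subgroup.zpowers z) g
    simp only at hw'
    have hw2 : w = 1 ∨ w = z := by
      obtain ⟨j, rfl⟩ := Subgroup.mem_zpowers_iff.mp hw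
      rcases Int.even_or_odd' j with ⟨i, rfl | rfl⟩
      · left; rw [zpow_mul, zpow_ofNat, sq, hz, one_zpow]
      · right; rw [zpow_add, zpow_mul, zpow_ofNat, sq, hz, one_zpow, one_mul, zpow_one]
    simp only [hs, h1, hw']
    rcases hw2 with rfl | rfl
    · simp [hz1]
    · simp [hz1]
  have hpar : ∀ g h, ∃ d, s g * s h = 1 + 2 * d := by
    intro g h
    simp only [hs]
    split_ifs
    exacts [⟨0, by ring⟩, ⟨-1, by ring⟩, ⟨-1, by ring⟩, ⟨0, by ring⟩]
  choose dd hdd using hpar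
  set E : Matrix G G RR := fun g h => e (g * h⁻¹) with hE
  set E' : Matrix G G RR := fun g h => s g * e (g * h⁻¹) * s h with hE'
  set D : Matrix G G RR := fun g h => dd g h * e (g * h⁻¹) with hD
  set Z : Matrix G G RR := fun g h => if h = g * z then 1 else 0 with hZ
  have hEE : E * E = E := by
    ext g l; rw [Matrix.mul_apply]; exact congrArg _ (hconv g l)
  have hEE' : E' * E' = E' := by
    ext g l
    rw [Matrix.mul_apply]
    congr 1
    simp only [hE']
    rw [← hconv g l, Finset.mul_sum, Finset.sum_mul]
    refine Finset.sum_congr rfl fun h _ => ?_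
    linear_combination (s g * e (g * h⁻¹) * e (h * l⁻¹) * s l) * hss h
  have hED : E' = E + (2 : RR) • D := by
    ext g l
    rw [Matrix.add_apply, Matrix.smul_apply]
    congr 1
    simp only [hE', hE, hD, smul_eq_mul]
    linear_combination e (g * l⁻¹) * hdd g l
  have hZr : ∀ (A : Matrix G G RR) g h, (A * Z) g h = A g (h * z) := by
    intro A g h
    rw [Matrix.mul_apply]
    simp only [hZ]
    rw [Finset.sum_eq_single (h * z)]
    · simp [mul_assoc, hz]
    · intro b _ hb
      have : h ≠ b * z := by rintro rfl; apply hb; rw [mul_assoc, hz, mul_one]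
      simp [this]
    · simp
  have hZl : ∀ (A : Matrix G G RR) g h, (Z * A) g h = A (g * z) h := by
    intro A g h
    rw [Matrix.mul_apply]
    simp [hZ]
  have hcE : E * Z = Z * E := by
    ext g h
    rw [hZr, hZl]; simp only [hE, mul_inv_rev, hzi, mul_assoc]
  have hcE' : E' * Z = Z * E' := by
    ext g h
    rw [hZr, hZl]; simp only [hE', mul_inv_rev, hzi, mul_assoc, hsz]; push_cast; ring
  set U := E * E' + (1 - E) * (1 - E') with hU
  have hEU : E * U = U * E' := by
    have h1 : E * U = E * E * E' + (E - E * E) * (1 - E') := by rw [hU]; noncomm_ring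
    have h2 : U * E' = E * (E' * E') + (1 - E) * (E' - E' * E') := by rw [hU]; noncomm_ring
    rw [h1, h2, hEE, hEE']; simp
  have hUZ : U * Z = Z * U := by
    have h1 : Commute E Z := hcE
    have h2 : Commute E' Z := hcE'
    exact ((h1.mul_left h2).add_left (((Commute.one_left Z).sub_left h1).mul_left
      ((Commute.one_left Z).sub_left h2))).eq
  have hU1 : ∃ Mx, U = 1 + (2 : RR) • Mx := by
    refine ⟨E * D - (1 - E) * D, ?_⟩
    have h1 : U = 1 + 2 * (E * E - E) + ((2 : RR) • (E * D - (1 - E) * D)) := by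
      rw [hU, hED, smul_sub, ← mul_smul_comm, ← mul_smul_comm]; noncomm_ring
    rw [h1, hEE]; simp
  obtain ⟨Mx, hM⟩ := hU1
  have hdet : U.det ≠ 0 := by
    rw [hM, Matrix.det_one_add_smul]
    intro h0
    rw [show ∀ p q : RR, 1 + p * 2 + q * 2 ^ 2 = 1 + 2 * (p + 2 * q) from fun p q => by ring] at h0
    exact RR_two_ne _ h0
  have ht : U.det * Matrix.trace (E' * Z) = U.det * Matrix.trace (E * Z) := by
    have h1 : U.det * Matrix.trace (E' * Z) = Matrix.trace (U.adjugate * (U * E' * Z)) := by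
      rw [← mul_assoc, ← mul_assoc, Matrix.adjugate_mul]; simp
    have h2 : U.det * Matrix.trace (E * Z) = Matrix.trace (E * Z * (U * U.adjugate)) := by
      rw [Matrix.mul_adjugate]; simp
    rw [h1, h2, ← hEU, Matrix.trace_mul_comm, mul_assoc E, hUZ, mul_assoc, mul_assoc, mul_assoc]
  have ht2 := mul_left_cancel₀ hdet ht
  have t1 : Matrix.trace (E * Z) = ∑ g, e (g * z * g⁻¹) := by
    refine Finset.sum_congr rfl fun g _ => ?_
    rw [Matrix.diag_apply, hZr]; simp only [hE, mul_inv_rev, hzi, mul_assoc]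
  have t2 : Matrix.trace (E' * Z) = - ∑ g, e (g * z * g⁻¹) := by
    rw [← Finset.sum_neg_distrib]
    refine Finset.sum_congr rfl fun g _ => ?_
    rw [Matrix.diag_apply, hZr]; simp only [hE', mul_inv_rev, hzi, mul_assoc, hsz]
    linear_combination (- e (g * (z * g⁻¹))) * hss g
  rw [t1, t2] at ht2
  have h2 : (2 : RR) * ∑ g, e (g * z * g⁻¹) = 0 := by linear_combination -ht2
  exact (mul_eq_zero.mp h2).resolve_left two_ne_zero

lemma Setup.full_zero {G : Type} [Group G] [Fintype G] (s : Setup G) {V : Type} [AddCommGroup V]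
    [Module ℂ V] [FiniteDimensional ℂ V] (ρ : Representation ℂ G V) (hρ : SchurIrr ρ)
    (ha : 2 ^ (s.k + 2) ∣ Module.finrank ℂ V) (z : G) (hz : z * z = 1) (hz1 : z ≠ 1) :
    tchar ρ z = 0 := by
  have hne := tchar_one_ne ρ hρ
  have ho : (s.o : ℂ) ≠ 0 := by have := s.ho.pos; exact_mod_cast this.ne'
  have hG : (Fintype.card G : ℂ) ≠ 0 := by exact_mod_cast Fintype.card_ne_zero
  have he : ∀ g, tchar ρ 1 * tchar ρ g⁻¹ / Fintype.card G ∈ RR := by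
    intro g
    obtain ⟨d, hd⟩ := ha
    have h1 := RR.mul_mem (RR.mul_mem (RR_of_int (nat_integral d)) (RR_of_int (tchar_int ρ g⁻¹))) (RR_oddinv s.ho)
    convert h1 using 1
    rw [tchar_one, hd, s.card]; push_cast
    field_simp
  have h := mat_core z hz hz1 (fun g => ⟨_, he g⟩) (by
    intro g l
    apply Subtype.ext
    push_cast
    have h1 := conv_char' ρ hρ (l * g⁻¹)
    have h2 : ∑ h, tchar ρ (h * g⁻¹) * tchar ρ (l * h⁻¹) = ∑ h, tchar ρ h⁻¹ * tchar ρ (h * (l * g⁻¹)) := by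
      refine Fintype.sum_equiv (Equiv.mulRight l⁻¹) _ _ fun h => ?_
      simp only [Equiv.coe_mulRight, mul_inv_rev, inv_inv, inv_mul_cancel_right, mul_assoc, inv_mul_cancel_left]
      rw [mul_comm]
    simp only [mul_inv_rev, inv_inv]
    rw [h1] at h2
    have h5 : ∀ h, tchar ρ 1 * tchar ρ (h * g⁻¹) / Fintype.card G * (tchar ρ 1 * tchar ρ (l * h⁻¹) / Fintype.card G) =
        (tchar ρ 1 / Fintype.card G) ^ 2 * (tchar ρ (h * g⁻¹) * tchar ρ (l * h⁻¹)) := by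
      intro h; ring
    rw [Finset.sum_congr rfl fun h _ => h5 h, ← Finset.mul_sum, h2]
    field_simp)
  have h3 := congrArg Subtype.val h
  push_cast at h3
  have h4 : ∀ g, tchar ρ (g * z * g⁻¹)⁻¹ = tchar ρ z := by
    intro g
    have : (g * z * g⁻¹)⁻¹ = g * z * g⁻¹ := by
      rw [mul_inv_rev, mul_inv_rev, inv_inv, inv_eq_of_mul_eq_one_right hz, mul_assoc]
    rw [this, tchar_conj]
  simp only [h4] at h3
  rw [Finset.sum_const, Finset.card_univ, nsmul_eq_mul, mul_div_cancel₀ _ hG] at h3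
  exact (mul_eq_zero.mp h3).resolve_left hne
end

section
/-- cone of sums of induced irreducible characters -/
noncomputable def Cone (P : Type) [Group P] [Fintype P] (d : ℕ) : AddSubmonoid (P → ℂ) :=
  AddSubmonoid.closure {f | ∃ (Q : Subgroup P) (lam : Q → ℂ), IsIrreducibleCharacter lam ∧
    d = Q.index ∧ f = inducedChar Q lam}

lemma cone_out {P : Type} [Group P] [Fintype P] {d : ℕ} {f : P → ℂ} (hf : f ∈ Cone P d) :
    ∃ (n : ℕ) (Q : Fin n → Subgroup P) (lam : (i : Fin n) → ↥(Q i) → ℂ),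
    (∀ i, IsIrreducibleCharacter (lam i)) ∧ (∀ i, d = (Q i).index) ∧
    (∀ x : P, f x = ∑ i, inducedChar (Q i) (lam i) x) := by
  obtain ⟨l, hl, rfl⟩ := AddSubmonoid.exists_list_of_mem_closure hf
  have : ∀ i : Fin l.length, ∃ (Q : Subgroup P) (lam : Q → ℂ), IsIrreducibleCharacter lam ∧
    d = Q.index ∧ l[i] = inducedChar Q lam := fun i => hl _ (List.getElem_mem _)
  choose Q lam h1 h2 h3 using this
  refine ⟨l.length, Q, lam, h1, h2, fun x => ?_⟩
  have h4 : l.sum = ∑ i : Fin l.length, l[i] := by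
    rw [← List.sum_ofFn]; simp
  rw [h4, Finset.sum_apply]
  exact Finset.sum_congr rfl fun i _ => by rw [h3]

lemma schur_comp {G H : Type} [Group G] [Group H] {V : Type} [AddCommGroup V] [Module ℂ V]
    (ρ : Representation ℂ G V) (h : SchurIrr ρ) (φ : H →* G) (hφ : Function.Surjective φ) :
    SchurIrr (ρ.comp φ : Representation ℂ H V) := by
  refine ⟨h.1, fun T hT => h.2 T fun g => ?_⟩
  obtain ⟨x, rfl⟩ := hφ g
  exact hT x

lemma irrchar_comp {G H : Type} [Group G] [Group H] [Finite H] {χ : G → ℂ}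
    (h : IsIrreducibleCharacter χ) (φ : H →* G) (hφ : Function.Surjective φ) :
    IsIrreducibleCharacter (fun x => χ (φ x)) := by
  obtain ⟨V, h1, rfl⟩ := irrchar_exists h
  exact irrchar_of_schur (V.ρ.comp φ : Representation ℂ H V) (schur_comp _ h1 φ hφ)

lemma cone_transport {P H : Type} [Group P] [Fintype P] [Group H] [Fintype H] (φ : P ≃* H) {d : ℕ}
    {f : H → ℂ} (hf : f ∈ Cone H d) : (fun x => f (φ x)) ∈ Cone P d := by
  induction hf using AddSubmonoid.closure_induction with
  | mem f hf =>
    obtain ⟨Q, lam, h1, h2, rfl⟩ := hf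
    apply AddSubmonoid.subset_closure
    refine ⟨Q.comap φ.toMonoidHom, fun x => lam ⟨φ x, x.2⟩, ?_, ?_, ?_⟩
    · refine irrchar_comp h1 ((φ.toMonoidHom.comp (Q.comap φ.toMonoidHom).subtype).codRestrict Q (fun x => x.2)) ?_
      rintro ⟨y, hy⟩
      refine ⟨⟨φ.symm y, ?_⟩, ?_⟩
      · show φ (φ.symm y) ∈ Q
        simpa using hy
      · apply Subtype.ext; exact φ.apply_symm_apply y
    · rw [h2, Subgroup.index_comap_of_surjective _ φ.surjective]
    · funext g
      simp only [inducedChar]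
      congr 1
      · congr 2
        refine Fintype.card_congr (Equiv.symm ((φ.toEquiv.subtypeEquiv fun x => ?_)))
        rfl
      · refine (Fintype.sum_equiv φ.toEquiv _ _ fun x => ?_).symm
        have : (φ x * φ g * (φ x)⁻¹) = φ (x * g * x⁻¹) := by simp
        simp only [MulEquiv.toEquiv_eq_coe, EquivLike.coe_coe, this]
        rfl
  | zero => exact (Cone P d).zero_mem
  | add x y _ _ hx hy => exact (Cone P d).add_mem hx hy

lemma irrchar_linear {Q : Type} [Group Q] [Finite Q] (lam : Q → ℂ) (h1 : lam 1 = 1)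
    (hm : ∀ x y, lam (x * y) = lam x * lam y) : IsIrreducibleCharacter lam := by
  let ρ : Representation ℂ Q ℂ :=
    { toFun := fun g => lam g • 1
      map_one' := by simp [h1]
      map_mul' := fun x y => by ext; simp [hm, mul_comm] }
  have h2 : SchurIrr ρ := by
    refine ⟨inferInstance, fun T _ => ⟨T 1, ?_⟩⟩
    ext; simp
  have h3 : tchar ρ = lam := by
    funext g
    show LinearMap.trace ℂ ℂ (lam g • 1) = _
    rw [map_smul, LinearMap.trace_one]; simp
  rw [← h3]; exact irrchar_of_schur ρ h2

section quat
open QuaternionGroup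
variable {m : ℕ} [NeZero m]

lemma sum_quat (F : QuaternionGroup m → ℂ) : ∑ x, F x = ∑ j, F (a j) + ∑ j, F (xa j) := by
  let e : ZMod (2 * m) ⊕ ZMod (2 * m) ≃ QuaternionGroup m :=
    { toFun := Sum.elim a xa
      invFun := fun x => match x with | a j => Sum.inl j | xa j => Sum.inr j
      left_inv := by rintro (j | j) <;> rfl
      right_inv := by rintro (j | j) <;> rfl }
  rw [← Equiv.sum_comp e, Fintype.sum_sum_type]; rfl

lemma conj_aa (i j : ZMod (2 * m)) : (a j : QuaternionGroup m) * a i * (a j)⁻¹ = a i := by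
  rw [qa_inv, a_mul_a, a_mul_a]; congr 1; ring
lemma conj_xaa (i j : ZMod (2 * m)) : (xa j : QuaternionGroup m) * a i * (xa j)⁻¹ = a (-i) := by
  rw [qxa_inv, xa_mul_a, xa_mul_xa]; congr 1
  have : (2 : ZMod (2 * m)) * m = 0 := by exact_mod_cast ZMod.natCast_self (2 * m)
  linear_combination this
lemma conj_axa (i j : ZMod (2 * m)) : (a j : QuaternionGroup m) * xa i * (a j)⁻¹ = xa (i - 2 * j) := by
  rw [qa_inv, a_mul_xa, xa_mul_a]; congr 1; ring
lemma conj_xaxa (i j : ZMod (2 * m)) : (xa j : QuaternionGroup m) * xa i * (xa j)⁻¹ = xa (2 * j - i) := by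
  rw [qxa_inv, xa_mul_xa, a_mul_xa]; congr 1; ring

lemma fiber_card {M D : ℕ} [NeZero M] [NeZero D] (hD : D ∣ M) (c : ZMod D) :
    ((Finset.univ.filter fun j : ZMod M => ZMod.castHom hD (ZMod D) j = c).card : ℂ) = M / D := by
  set π := (ZMod.castHom hD (ZMod D)).toAddMonoidHom with hπ
  have hsurj : Function.Surjective π := ZMod.castHom_surjective hD
  have h1 : ∀ c', (Finset.univ.filter fun j : ZMod M => π j = c').card = (Finset.univ.filter fun j : ZMod M => π j = c).card := by
    intro c'
    exact AddMonoidHom.card_fiber_eq_of_mem_range π (hsurj c') (hsurj c)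
  have h2 := Finset.card_eq_sum_card_fiberwise (s := (Finset.univ : Finset (ZMod M))) (t := (Finset.univ : Finset (ZMod D))) (f := π) (by intro x _; simp)
  rw [Finset.sum_congr rfl (fun c' _ => h1 c')] at h2
  simp only [Finset.sum_const, Finset.card_univ, ZMod.card, smul_eq_mul] at h2
  have hD0 : (D : ℂ) ≠ 0 := by exact_mod_cast NeZero.ne D
  rw [eq_div_iff hD0]
  have h3 : ((M : ℕ) : ℂ) = D * (Finset.univ.filter fun j : ZMod M => π j = c).card := by exact_mod_cast h2
  rw [h3, mul_comm]; rfl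

def Esub (D : ℕ) (hD : D ∣ 2 * m) : Subgroup (QuaternionGroup m) where
  carrier := {g | ∃ j, g = a j ∧ ZMod.castHom hD (ZMod D) j = 0}
  one_mem' := ⟨0, rfl, by simp⟩
  mul_mem' := by
    rintro _ _ ⟨i, rfl, hi⟩ ⟨j, rfl, hj⟩
    exact ⟨i + j, a_mul_a _ _, by rw [map_add, hi, hj, add_zero]⟩
  inv_mem' := by
    rintro _ ⟨i, rfl, hi⟩
    exact ⟨-i, qa_inv _, by rw [map_neg, hi, neg_zero]⟩

lemma mem_Esub_a {D : ℕ} {hD : D ∣ 2 * m} {j : ZMod (2 * m)} :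
    a j ∈ Esub D hD ↔ ZMod.castHom hD (ZMod D) j = 0 := by
  constructor
  · rintro ⟨i, h, hi⟩
    cases h; exact hi
  · intro h; exact ⟨j, rfl, h⟩

lemma not_mem_Esub_xa {D : ℕ} {hD : D ∣ 2 * m} {j : ZMod (2 * m)} :
    xa j ∉ Esub D hD := by
  rintro ⟨i, h, hi⟩
  cases h

lemma card_as_sum (Q : Subgroup (QuaternionGroup m)) :
    (Fintype.card Q : ℂ) = (Finset.univ.filter fun j => a j ∈ Q).card + (Finset.univ.filter fun j => xa j ∈ Q).card := by
  have h1 : (Fintype.card Q : ℂ) = ∑ x, if x ∈ Q then (1 : ℂ) else 0 := by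
    rw [Finset.sum_boole]
    congr 1
    rw [Fintype.card_subtype]
  rw [h1, sum_quat, Finset.sum_boole, Finset.sum_boole]

lemma index_of_cardC (Q : Subgroup (QuaternionGroup m)) (d : ℕ) (h : (Fintype.card Q : ℂ) * d = 4 * m) :
    d = Q.index := by
  have h1 := Q.card_mul_index
  have h2 : Nat.card (QuaternionGroup m) = 4 * m := by
    rw [Nat.card_eq_fintype_card, QuaternionGroup.card]
  rw [h2, Nat.card_eq_fintype_card] at h1
  have h3 : Fintype.card Q * d = 4 * m := by exact_mod_cast h
  exact Nat.eq_of_mul_eq_mul_left Fintype.card_pos (h3.trans h1.symm)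

lemma card_Esub {D : ℕ} [NeZero D] {hD : D ∣ 2 * m} : (Fintype.card (Esub D hD) : ℂ) = 2 * m / D := by
  rw [card_as_sum]
  simp only [mem_Esub_a, not_mem_Esub_xa]
  have := fiber_card hD (0 : ZMod D)
  rw [this]; simp

noncomputable def lamE (ζ : ℂ) (t : ℕ) : QuaternionGroup m → ℂ
  | a j => ζ ^ (j.val * t)
  | xa _ => 0

lemma cone_I (D : ℕ) [NeZero D] (hD : D ∣ 2 * m) (ζ : ℂ) (hζ : ζ ^ (2 * m) = 1) (t : ℕ) :
    ∃ I ∈ Cone (QuaternionGroup m) (2 * D),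
      (∀ i : ℕ, I (a i) = if D ∣ i then D * (ζ ^ (i * t) + ζ⁻¹ ^ (i * t)) else 0) ∧
      ∀ i, I (xa i) = 0 := by
  have hm0 : (m : ℂ) ≠ 0 := by exact_mod_cast NeZero.ne m
  have hD0 : (D : ℂ) ≠ 0 := by exact_mod_cast NeZero.ne D
  have hζ0 : ζ ≠ 0 := by
    rintro rfl
    rw [zero_pow (by have := NeZero.ne m; omega)] at hζ
    exact zero_ne_one hζ
  have hmod : ∀ n n' : ℕ, (n : ZMod (2 * m)) = n' → ζ ^ (n * t) = ζ ^ (n' * t) := by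
    intro n n' h
    rw [ZMod.natCast_eq_natCast_iff] at h
    rw [pow_mul, pow_mul]
    congr 1
    rw [pow_eq_pow_mod n hζ, pow_eq_pow_mod n' hζ, h]
  have hdvd : ∀ i : ℕ, ZMod.castHom hD (ZMod D) (i : ZMod (2 * m)) = 0 ↔ D ∣ i := by
    intro i; rw [map_natCast, ZMod.natCast_eq_zero_iff]
  have hneg : ∀ i : ℕ, ζ ^ ((-(i : ZMod (2 * m))).val * t) = ζ⁻¹ ^ (i * t) := by
    intro i
    have h1 : ζ ^ (((-(i : ZMod (2 * m))).val + i) * t) = ζ ^ (0 * t) := by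
      apply hmod; push_cast; rw [ZMod.natCast_zmod_val]; ring
    rw [add_mul, pow_add, zero_mul, pow_zero] at h1
    rw [inv_pow]; exact eq_inv_of_mul_eq_one_left h1
  have hpos : ∀ i : ℕ, ζ ^ ((i : ZMod (2 * m)).val * t) = ζ ^ (i * t) := by
    intro i
    apply hmod; rw [ZMod.natCast_zmod_val]
  refine ⟨inducedChar (Esub D hD) (fun x => lamE ζ t x.1), AddSubmonoid.subset_closure
    ⟨_, _, irrchar_linear _ ?_ ?_, ?_, rfl⟩, ?_, ?_⟩
  · show lamE ζ t (a 0) = 1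
    simp [lamE]
  · rintro ⟨_, ⟨i, rfl, hi⟩⟩ ⟨_, ⟨j, rfl, hj⟩⟩
    show lamE ζ t (a i * a j) = lamE ζ t (a i) * lamE ζ t (a j)
    rw [a_mul_a]
    simp only [lamE]
    rw [← pow_add, ← add_mul]
    apply hmod; push_cast; simp only [ZMod.natCast_zmod_val]
  · apply index_of_cardC
    rw [card_Esub]; push_cast; field_simp; ring
  · intro i
    simp only [inducedChar]
    rw [sum_quat, card_Esub]
    simp only [conj_aa, conj_xaa, mem_Esub_a, map_neg, neg_eq_zero, hdvd]
    simp only [lamE]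
    rw [hneg, hpos]
    split_ifs with h
    · rw [Finset.sum_const, Finset.sum_const, Finset.card_univ, ZMod.card]
      rw [nsmul_eq_mul, nsmul_eq_mul]; push_cast
      field_simp
    · simp
  · intro i
    simp only [inducedChar]
    rw [sum_quat]
    simp only [conj_axa, conj_xaxa, not_mem_Esub_xa]
    simp
end quat
end

section
section quat
open QuaternionGroup
variable {m : ℕ} [NeZero m]

lemma castHom_m {D : ℕ} (hD : 2 * D ∣ m) (hD' : 2 * D ∣ 2 * m) :
    ZMod.castHom hD' (ZMod (2 * D)) (m : ZMod (2 * m)) = 0 := by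
  rw [map_natCast, ZMod.natCast_eq_zero_iff]; exact hD

def Qsub (D : ℕ) (hD : 2 * D ∣ m) (ε : ℕ) : Subgroup (QuaternionGroup m) where
  carrier := {g | (∃ j, g = a j ∧ ZMod.castHom (hD.mul_left 2) (ZMod (2 * D)) j = 0) ∨
    (∃ j, g = xa j ∧ ZMod.castHom (hD.mul_left 2) (ZMod (2 * D)) j = ε)}
  one_mem' := Or.inl ⟨0, rfl, by simp⟩
  mul_mem' := by
    have hm := castHom_m hD (hD.mul_left 2)
    rintro _ _ (⟨i, rfl, hi⟩ | ⟨i, rfl, hi⟩) (⟨j, rfl, hj⟩ | ⟨j, rfl, hj⟩)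
    · exact Or.inl ⟨_, a_mul_a _ _, by rw [map_add, hi, hj, add_zero]⟩
    · exact Or.inr ⟨_, a_mul_xa _ _, by rw [map_sub, hi, hj, sub_zero]⟩
    · exact Or.inr ⟨_, xa_mul_a _ _, by rw [map_add, hi, hj, add_zero]⟩
    · exact Or.inl ⟨_, xa_mul_xa _ _, by rw [map_sub, map_add, hm, hi, hj]; ring⟩
  inv_mem' := by
    have hm := castHom_m hD (hD.mul_left 2)
    rintro _ (⟨i, rfl, hi⟩ | ⟨i, rfl, hi⟩)
    · exact Or.inl ⟨_, qa_inv _, by rw [map_neg, hi, neg_zero]⟩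
    · exact Or.inr ⟨_, qxa_inv _, by rw [map_add, hm, hi, zero_add]⟩

lemma mem_Qsub_a {D : ℕ} {hD : 2 * D ∣ m} {ε : ℕ} {j : ZMod (2 * m)} :
    a j ∈ Qsub D hD ε ↔ ZMod.castHom (hD.mul_left 2) (ZMod (2 * D)) j = 0 := by
  constructor
  · rintro (⟨i, h, hi⟩ | ⟨i, h, hi⟩)
    · cases h; exact hi
    · cases h
  · intro h; exact Or.inl ⟨j, rfl, h⟩

lemma mem_Qsub_xa {D : ℕ} {hD : 2 * D ∣ m} {ε : ℕ} {j : ZMod (2 * m)} :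
    xa j ∈ Qsub D hD ε ↔ ZMod.castHom (hD.mul_left 2) (ZMod (2 * D)) j = ε := by
  constructor
  · rintro (⟨i, h, hi⟩ | ⟨i, h, hi⟩)
    · cases h
    · cases h; exact hi
  · intro h; exact Or.inr ⟨j, rfl, h⟩

lemma card_Qsub {D : ℕ} [NeZero D] {hD : 2 * D ∣ m} {ε : ℕ} : (Fintype.card (Qsub D hD ε) : ℂ) = 2 * m / D := by
  have hD0 : (D : ℂ) ≠ 0 := by exact_mod_cast NeZero.ne D
  rw [card_as_sum]
  simp only [mem_Qsub_a, mem_Qsub_xa]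
  haveI : NeZero (2 * D) := ⟨by have := NeZero.ne D; omega⟩
  rw [fiber_card (hD.mul_left 2) 0, fiber_card (hD.mul_left 2) (ε : ZMod (2 * D))]
  push_cast; field_simp; ring

lemma two_card {D : ℕ} [NeZero D] (hD : 2 * D ∣ 2 * m) (i : ℕ) :
    ((Finset.univ.filter fun j : ZMod (2 * m) => 2 * ZMod.castHom hD (ZMod (2 * D)) j = (i : ZMod (2 * D))).card : ℂ) =
      if 2 ∣ i then (2 * m / D : ℂ) else 0 := by
  have hD' : D ∣ 2 * m := (Dvd.intro_left 2 rfl).trans hD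
  have hval : ∀ j : ZMod (2 * m), 2 * ZMod.castHom hD (ZMod (2 * D)) j = ((2 * j.val : ℕ) : ZMod (2 * D)) := by
    intro j
    conv_lhs => rw [← ZMod.natCast_zmod_val j]
    rw [map_natCast]; push_cast; rfl
  split_ifs with h
  · obtain ⟨c, rfl⟩ := h
    have := fiber_card hD' (c : ZMod D)
    push_cast at this
    rw [← this]
    congr 2
    ext j
    simp only [Finset.mem_filter, Finset.mem_univ, true_and]
    rw [hval, ZMod.natCast_eq_natCast_iff]
    conv_rhs => rw [← ZMod.natCast_zmod_val j, map_natCast, ZMod.natCast_eq_natCast_iff]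
    exact Nat.ModEq.mul_left_cancel_iff' (by norm_num)
  · rw [Finset.filter_false_of_mem]
    · simp
    · intro j _ hj
      rw [hval, ZMod.natCast_eq_natCast_iff] at hj
      apply h
      have h2 := (hj.of_dvd (Dvd.intro D rfl : 2 ∣ 2 * D))
      exact (h2.dvd_iff dvd_rfl).mp (Dvd.intro _ rfl)

noncomputable def lamQ (σ : ℂ) : QuaternionGroup m → ℂ
  | a _ => 1
  | xa _ => σ

lemma cone_J (D : ℕ) [NeZero D] (hD : 2 * D ∣ m) (ε : ℕ) (σ : ℂ) (hσ : σ * σ = 1) :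
    ∃ I ∈ Cone (QuaternionGroup m) (2 * D),
      (∀ i : ℕ, I (a i) = if 2 * D ∣ i then (2 * D : ℂ) else 0) ∧
      ∀ i : ℕ, I (xa i) = if 2 ∣ i + ε then 2 * σ else 0 := by
  have hm0 : (m : ℂ) ≠ 0 := by exact_mod_cast NeZero.ne m
  have hD0 : (D : ℂ) ≠ 0 := by exact_mod_cast NeZero.ne D
  have hdvd : ∀ i : ℕ, ZMod.castHom (hD.mul_left 2) (ZMod (2 * D)) (i : ZMod (2 * m)) = 0 ↔ 2 * D ∣ i := by
    intro i; rw [map_natCast, ZMod.natCast_eq_zero_iff]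
  refine ⟨inducedChar (Qsub D hD ε) (fun x => lamQ σ x.1), AddSubmonoid.subset_closure
    ⟨_, _, irrchar_linear _ ?_ ?_, ?_, rfl⟩, ?_, ?_⟩
  · rfl
  · rintro ⟨i | i, hi⟩ ⟨j | j, hj⟩
    · show lamQ σ (a i * a j) = lamQ σ (a i) * lamQ σ (a j)
      rw [a_mul_a]; simp [lamQ]
    · show lamQ σ (a i * xa j) = lamQ σ (a i) * lamQ σ (xa j)
      rw [a_mul_xa]; simp [lamQ]
    · show lamQ σ (xa i * a j) = lamQ σ (xa i) * lamQ σ (a j)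
      rw [xa_mul_a]; simp [lamQ]
    · show lamQ σ (xa i * xa j) = lamQ σ (xa i) * lamQ σ (xa j)
      rw [xa_mul_xa]; simp [lamQ, hσ]
  · apply index_of_cardC
    rw [card_Qsub]; push_cast; field_simp; ring
  · intro i
    simp only [inducedChar]
    rw [sum_quat, card_Qsub]
    simp only [conj_aa, conj_xaa, mem_Qsub_a, map_neg, neg_eq_zero, hdvd]
    simp only [lamQ]
    split_ifs with h
    · rw [Finset.sum_const, Finset.card_univ, ZMod.card]
      rw [nsmul_eq_mul]; push_cast
      field_simp; ring
    · simp
  · intro i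
    simp only [inducedChar]
    rw [sum_quat, card_Qsub]
    simp only [conj_axa, conj_xaxa, mem_Qsub_xa]
    simp only [lamQ, dite_eq_ite]
    rw [← Finset.sum_filter, ← Finset.sum_filter, Finset.sum_const, Finset.sum_const, nsmul_eq_mul, nsmul_eq_mul]
    have h1 := two_card (m := m) (hD.mul_left 2) (i + ε)
    have h2 : ∀ (p : ℕ), ((Finset.univ.filter fun j : ZMod (2 * m) => ZMod.castHom (hD.mul_left 2) (ZMod (2 * D)) (2 * j - i) = (ε : ZMod (2 * D))).card : ℂ) =
      if 2 ∣ i + ε then (2 * m / D : ℂ) else 0 := by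
      intro _
      rw [← h1]
      congr 2
      ext j
      simp only [Finset.mem_filter, Finset.mem_univ, true_and]
      rw [map_sub, map_mul, map_natCast, map_ofNat, sub_eq_iff_eq_add]
      push_cast; rw [add_comm (ε : ZMod (2 * D))]
    have h3 : ((Finset.univ.filter fun j : ZMod (2 * m) => ZMod.castHom (hD.mul_left 2) (ZMod (2 * D)) (i - 2 * j) = (ε : ZMod (2 * D))).card : ℂ) =
      if 2 ∣ i + ε then (2 * m / D : ℂ) else 0 := by
      rw [← h2 0]
      congr 1
      refine Finset.card_bij (fun j _ => (i : ZMod (2 * m)) - j) ?_ (fun _ _ _ _ h => sub_right_injective h) ?_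
      · intro j hj
        simp only [Finset.mem_filter, Finset.mem_univ, true_and] at hj ⊢
        rw [← hj]; congr 1; ring
      · intro j hj
        simp only [Finset.mem_filter, Finset.mem_univ, true_and] at hj
        refine ⟨i - j, ?_, by ring⟩
        simp only [Finset.mem_filter, Finset.mem_univ, true_and]
        rw [← hj]; congr 1; ring
    rw [h2 0, h3]
    split_ifs
    · field_simp; ring
    · simp

lemma pair_sum (h : ℕ) (hh : 0 < h) (c : ℕ → ℕ) (hc : ∀ t, 0 < t → t < 2 * h → c (2 * h - t) = c t)
    (w : ℂ) (hw : w ^ (2 * h) = 1) :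
    ∑ t ∈ Finset.range (2 * h), (c t : ℂ) * w ^ t = c 0 + c h * w ^ h +
      ∑ t ∈ Finset.Ioo 0 h, (c t : ℂ) * (w ^ t + w⁻¹ ^ t) := by
  have hw0 : w ≠ 0 := by
    rintro rfl; rw [zero_pow (by omega)] at hw; exact zero_ne_one hw
  have h1 : Finset.range (2 * h) = insert 0 (insert h (Finset.Ioo 0 h ∪ Finset.Ioo h (2 * h))) := by
    ext t; simp only [Finset.mem_range, Finset.mem_insert, Finset.mem_union, Finset.mem_Ioo]; omega
  rw [h1, Finset.sum_insert (by simp; omega), Finset.sum_insert (by simp), Finset.sum_union (by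
    rw [Finset.disjoint_left]; intro t; simp only [Finset.mem_Ioo]; omega)]
  have h2 : ∑ t ∈ Finset.Ioo h (2 * h), (c t : ℂ) * w ^ t = ∑ t ∈ Finset.Ioo 0 h, (c t : ℂ) * w⁻¹ ^ t := by
    refine Finset.sum_bij' (fun t _ => 2 * h - t) (fun t _ => 2 * h - t) ?_ ?_ ?_ ?_ ?_
    · intro t; simp only [Finset.mem_Ioo]; omega
    · intro t; simp only [Finset.mem_Ioo]; omega
    · intro t; simp only [Finset.mem_Ioo]; omega
    · intro t; simp only [Finset.mem_Ioo]; omega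
    · intro t ht
      simp only [Finset.mem_Ioo] at ht
      rw [hc t (by omega) (by omega)]
      congr 1
      rw [inv_pow]
      apply eq_inv_of_mul_eq_one_left
      rw [← pow_add, ← hw]; congr 1; omega
  rw [h2]
  simp only [mul_add, Finset.sum_add_distrib]
  simp; ring

lemma quat_ext {f g : QuaternionGroup m → ℂ} (h1 : ∀ i : ℕ, f (a i) = g (a i)) (h2 : ∀ i : ℕ, f (xa i) = g (xa i)) :
    f = g := by
  funext x
  rcases x with j | j
  · have := h1 j.val; rwa [ZMod.natCast_zmod_val] at this
  · have := h2 j.val; rwa [ZMod.natCast_zmod_val] at this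

lemma lemF4 (D h : ℕ) [NeZero D] (hDh : D * h = m) (ζ : ℂ) (hζ : IsPrimitiveRoot ζ (2 * m)) (f : QuaternionGroup m → ℂ)
    (c : ℕ → ℕ) (hc : ∀ t, 0 < t → t < 2 * h → c (2 * h - t) = c t)
    (hf : ∀ i : ℕ, f (a i) = if D ∣ i then D * ∑ t ∈ Finset.range (2 * h), (c t : ℂ) * ζ ^ (i * t) else 0)
    (hfx : ∀ i : ℕ, f (xa i) = 0) (h0 : Even (c 0)) (hh : Even (c h)) :
    f ∈ Cone (QuaternionGroup m) (2 * D) := by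
  have hhpos : 0 < h := by
    rcases Nat.eq_zero_or_pos h with rfl | h'
    · have := NeZero.ne m; omega
    · exact h'
  have hD : D ∣ 2 * m := ⟨2 * h, by rw [← hDh]; ring⟩
  choose I hI hIa hIx using fun t => cone_I D hD ζ hζ.pow_eq_one t
  obtain ⟨b0, hb0⟩ := h0
  obtain ⟨bh, hbh⟩ := hh
  have : f = b0 • I 0 + bh • I h + ∑ t ∈ Finset.Ioo 0 h, c t • I t := by
    refine quat_ext (fun i => ?_) (fun i => ?_)
    · rw [hf, Pi.add_apply, Pi.add_apply, Finset.sum_apply]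
      simp only [Pi.smul_apply, hIa]
      split_ifs with hd
      · obtain ⟨i', rfl⟩ := hd
        have hw : (ζ ^ (D * i')) ^ (2 * h) = 1 := by
          rw [← pow_mul, show D * i' * (2 * h) = (2 * m) * i' by rw [← hDh]; ring, pow_mul, hζ.pow_eq_one, one_pow]
        have := pair_sum h hhpos c hc _ hw
        simp only [pow_mul ζ (D * i')] 
        rw [this, hb0, hbh]
        have hinv : (ζ ^ (D * i'))⁻¹ ^ h = (ζ ^ (D * i')) ^ h := by
          rw [inv_pow]; apply inv_eq_of_mul_eq_one_left; rw [← pow_add, ← two_mul, hw]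
        simp only [pow_mul ζ⁻¹ (D * i'), nsmul_eq_mul, inv_pow ζ (D * i'), hinv, mul_zero, pow_zero]
        push_cast
        rw [mul_add, Finset.mul_sum]
        congr 1
        · ring
        · exact Finset.sum_congr rfl fun t _ => by ring
      · simp
    · rw [hfx, Pi.add_apply, Pi.add_apply, Finset.sum_apply]
      simp [hIx]
  rw [this]
  exact AddSubmonoid.add_mem _ (AddSubmonoid.add_mem _ (AddSubmonoid.nsmul_mem _ (hI _) _)
    (AddSubmonoid.nsmul_mem _ (hI _) _)) (AddSubmonoid.sum_mem _ fun t _ => AddSubmonoid.nsmul_mem _ (hI _) _)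

lemma lemF3 (D h : ℕ) [NeZero D] (hDh : D * h = m) (hev : Even h) (ζ : ℂ) (hζ : IsPrimitiveRoot ζ (2 * m)) (f : QuaternionGroup m → ℂ)
    (c : ℕ → ℕ) (hc : ∀ t, 0 < t → t < 2 * h → c (2 * h - t) = c t)
    (hf : ∀ i : ℕ, f (a i) = if D ∣ i then D * ∑ t ∈ Finset.range (2 * h), (c t : ℂ) * ζ ^ (i * t) else 0)
    (α β : ℂ) (hfx : ∀ i : ℕ, f (xa i) = if 2 ∣ i then α + β else α - β) (h0 : c 0 = c h)
    (p1 p2 q1 q2 : ℕ) (hp1 : c 0 + α = 2 * p1) (hp2 : c 0 - α = 2 * p2) (hq1 : c 0 + β = 2 * q1) (hq2 : c 0 - β = 2 * q2) :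
    f ∈ Cone (QuaternionGroup m) (2 * D) := by
  have hhpos : 0 < h := by
    rcases Nat.eq_zero_or_pos h with rfl | h'
    · have := NeZero.ne m; omega
    · exact h'
  have hD : D ∣ 2 * m := ⟨2 * h, by rw [← hDh]; ring⟩
  have hDpos : 0 < D := Nat.pos_of_ne_zero (NeZero.ne D)
  have h2D : 2 * D ∣ m := by
    obtain ⟨h', rfl⟩ := hev
    exact ⟨h', by rw [← hDh]; ring⟩
  choose I hI hIa hIx using fun t => cone_I D hD ζ hζ.pow_eq_one t
  choose J hJ hJa hJx using fun ε σ hσ => cone_J D h2D ε σ hσ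
  have hs1 : (1 : ℂ) * 1 = 1 := by norm_num
  have hs2 : (-1 : ℂ) * (-1) = 1 := by norm_num
  have e1 : p1 + p2 = c 0 := by
    have : ((p1 + p2 : ℕ) : ℂ) = c 0 := by push_cast; linear_combination (-1/2) * hp1 - (1/2) * hp2
    exact_mod_cast this
  have e2 : q1 + q2 = c 0 := by
    have : ((q1 + q2 : ℕ) : ℂ) = c 0 := by push_cast; linear_combination (-1/2) * hq1 - (1/2) * hq2
    exact_mod_cast this
  have hα : α = p1 - p2 := by linear_combination (1/2) * hp1 - (1/2) * hp2
  have hβ : β = q1 - q2 := by linear_combination (1/2) * hq1 - (1/2) * hq2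
  obtain ⟨n1, n2, n3, n4, g1, g2, g3⟩ : ∃ n1 n2 n3 n4 : ℕ, n1 + n2 + n3 + n4 = c 0 ∧
      n1 + c 0 = n2 + p1 + q1 ∧ n3 + q1 = n4 + p1 := by
    rcases le_total p1 q1 with hpq | hpq
    · rcases le_total (c 0) (p1 + q1) with hh | hh
      · exact ⟨p1, q2, 0, q1 - p1, by omega, by omega, by omega⟩
      · exact ⟨p1, q2, 0, q1 - p1, by omega, by omega, by omega⟩
    · exact ⟨q1, p2, p1 - q1, 0, by omega, by omega, by omega⟩
  have g1' : (n1 : ℂ) + n2 + n3 + n4 = c 0 := by exact_mod_cast g1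
  have g2' : (n1 : ℂ) + c 0 = n2 + p1 + q1 := by exact_mod_cast g2
  have g3' : (n3 : ℂ) + q1 = n4 + p1 := by exact_mod_cast g3
  have e1' : (p1 : ℂ) + p2 = c 0 := by exact_mod_cast e1
  have e2' : (q1 : ℂ) + q2 = c 0 := by exact_mod_cast e2
  have : f = n1 • J 0 1 hs1 + n2 • J 0 (-1) hs2 + n3 • J 1 1 hs1 + n4 • J 1 (-1) hs2
      + ∑ t ∈ Finset.Ioo 0 h, c t • I t := by
    refine quat_ext (fun i => ?_) (fun i => ?_)
    · rw [hf, Pi.add_apply, Pi.add_apply, Pi.add_apply, Pi.add_apply, Finset.sum_apply]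
      simp only [Pi.smul_apply, hIa, hJa, nsmul_eq_mul]
      split_ifs with hd hd2 hd2
      · obtain ⟨i', rfl⟩ := hd
        have hw : (ζ ^ (D * i')) ^ (2 * h) = 1 := by
          rw [← pow_mul, show D * i' * (2 * h) = (2 * m) * i' by rw [← hDh]; ring, pow_mul, hζ.pow_eq_one, one_pow]
        have := pair_sum h hhpos c hc _ hw
        simp only [pow_mul ζ (D * i')]
        obtain ⟨i'', hi''⟩ := hd2
        have hwh : (ζ ^ (D * i')) ^ h = 1 := by
          rw [hi'', ← pow_mul, show 2 * D * i'' * h = (2 * m) * i'' by rw [← hDh]; ring, pow_mul, hζ.pow_eq_one, one_pow]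
        rw [this, hwh, ← h0]
        simp only [pow_mul ζ⁻¹ (D * i'), inv_pow ζ (D * i')]
        rw [mul_add, Finset.mul_sum]
        congr 1
        · linear_combination (-2 * (D : ℂ)) * g1'
        · exact Finset.sum_congr rfl fun t _ => by ring
      · obtain ⟨i', rfl⟩ := hd
        have hw : (ζ ^ (D * i')) ^ (2 * h) = 1 := by
          rw [← pow_mul, show D * i' * (2 * h) = (2 * m) * i' by rw [← hDh]; ring, pow_mul, hζ.pow_eq_one, one_pow]
        have := pair_sum h hhpos c hc _ hw
        simp only [pow_mul ζ (D * i')]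
        have hodd : i' % 2 = 1 := by
          by_contra hne
          apply hd2
          obtain ⟨i'', rfl⟩ : 2 ∣ i' := by omega
          exact ⟨i'', by ring⟩
        have hwh : (ζ ^ (D * i')) ^ h = -1 := by
          rw [← pow_mul, show D * i' * h = m * i' by rw [← hDh]; ring, pow_mul]
          have : ζ ^ m = -1 := by
            have h5 : (ζ ^ m - 1) * (ζ ^ m + 1) = 0 := by
              have := hζ.pow_eq_one
              rw [mul_comm, pow_mul] at this
              linear_combination this
            rcases mul_eq_zero.mp h5 with h6 | h6
            · exfalso
              have h7 := hζ.dvd_of_pow_eq_one m (sub_eq_zero.mp h6)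
              have := Nat.le_of_dvd (Nat.pos_of_ne_zero (NeZero.ne m)) h7
              have := NeZero.ne m
              omega
            · exact eq_neg_of_add_eq_zero_left h6
          rw [this, Odd.neg_one_pow (Nat.odd_iff.mpr hodd)]
        rw [this, hwh, ← h0]
        simp only [pow_mul ζ⁻¹ (D * i'), inv_pow ζ (D * i')]
        rw [mul_add, Finset.mul_sum]
        congr 1
        · ring
        · exact Finset.sum_congr rfl fun t _ => by ring
      · exact absurd ((Dvd.intro_left 2 rfl).trans hd2) hd
      · simp
    · rw [hfx, Pi.add_apply, Pi.add_apply, Pi.add_apply, Pi.add_apply, Finset.sum_apply]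
      simp only [Pi.smul_apply, hIx, hJx, nsmul_eq_mul]
      by_cases hi : 2 ∣ i
      · have h1 : 2 ∣ i + 0 := hi
        have h2 : ¬ 2 ∣ i + 1 := by omega
        simp only [hi, h1, h2, if_true, if_false]
        simp only [mul_zero, Finset.sum_const_zero]
        rw [hα, hβ]; linear_combination -2 * g2' - e1' - e2'
      · have h1 : ¬ 2 ∣ i + 0 := hi
        have h2 : 2 ∣ i + 1 := by omega
        simp only [hi, h1, h2, if_true, if_false]
        simp only [mul_zero, Finset.sum_const_zero]
        rw [hα, hβ]; linear_combination -2 * g3' - e1' + e2'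
  rw [this]
  refine AddSubmonoid.add_mem _ (AddSubmonoid.add_mem _ (AddSubmonoid.add_mem _ (AddSubmonoid.add_mem _ ?_ ?_) ?_) ?_) 
    (AddSubmonoid.sum_mem _ fun t _ => AddSubmonoid.nsmul_mem _ (hI _) _)
  all_goals exact AddSubmonoid.nsmul_mem _ (hJ _ _ _) _
end quat
end

section
section irr
variable {K : Type} [Group K] [Fintype K]

def IrrT (K : Type) [Group K] : Type := {φ : K → ℂ // IsIrreducibleCharacter φ}

lemma irr_li : LinearIndependent ℂ (fun φ : IrrT K => φ.1) := by
  rw [linearIndependent_iff']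
  intro s c hc φ hφ
  have h1 : ∑ g, (∑ ψ ∈ s, c ψ • ψ.1) g * φ.1 g⁻¹ = 0 := by rw [hc]; simp
  simp only [Finset.sum_apply, Pi.smul_apply, smul_eq_mul, Finset.sum_mul] at h1
  rw [Finset.sum_comm] at h1
  simp only [mul_assoc, ← Finset.mul_sum] at h1
  rw [Finset.sum_eq_single φ] at h1
  · rw [irrchar_orth φ.2 φ.2, if_pos rfl] at h1
    rcases mul_eq_zero.mp h1 with h | h
    · exact h
    · exact absurd h (by exact_mod_cast Fintype.card_ne_zero)
  · intro ψ _ hne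
    rw [irrchar_orth ψ.2 φ.2, if_neg (fun h => hne (Subtype.ext h)), mul_zero]
  · intro h; exact absurd hφ h

instance : Finite (IrrT K) := irr_li.finite

noncomputable instance : Fintype (IrrT K) := Fintype.ofFinite _

lemma irr_class (φ : IrrT K) (g h : K) : φ.1 (h * g * h⁻¹) = φ.1 g := by
  obtain ⟨V, hV, e⟩ := irrchar_exists φ.2
  rw [e]; exact tchar_conj _ _ _

lemma irr_int (φ : IrrT K) (g : K) : IsIntegral ℤ (φ.1 g) := by
  obtain ⟨V, hV, e⟩ := irrchar_exists φ.2
  rw [e]; exact tchar_int _ _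

lemma irr_inv (φ : IrrT K) (g : K) : φ.1 g⁻¹ = star (φ.1 g) := by
  obtain ⟨V, hV, e⟩ := irrchar_exists φ.2
  rw [e]; exact tchar_inv _ _

lemma irr_deg (φ : IrrT K) : ∃ d : ℕ, φ.1 1 = d ∧ d ≠ 0 := by
  obtain ⟨V, hV, e⟩ := irrchar_exists φ.2
  refine ⟨Module.finrank ℂ V, ?_, ?_⟩
  · rw [e]; exact tchar_one _
  · have := tchar_one_ne _ hV
    rw [tchar_one] at this
    exact_mod_cast this

lemma irr_deg_odd (hK : Odd (Fintype.card K)) (φ : IrrT K) {d : ℕ} (hd : φ.1 1 = d) : Odd d := by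
  obtain ⟨V, hV, e⟩ := irrchar_exists φ.2
  have h1 := card_div_deg _ hV
  have h2 : ((Module.finrank ℂ V : ℕ) : ℂ) = d := by rw [← hd, e, tchar_one]
  rw [h2] at h1
  by_contra hne
  rw [Nat.not_odd_iff_even] at hne
  obtain ⟨d', rfl⟩ := hne
  obtain ⟨d0, h3, h4⟩ := irr_deg φ
  have hd' : d' ≠ 0 := by
    rintro rfl
    rw [hd] at h3; apply h4
    have : ((0 + 0 : ℕ) : ℂ) = (d0 : ℂ) := h3
    exact (by exact_mod_cast this.symm : d0 = 0 + 0)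
  have h5 : ((Fintype.card K : ℤ) : ℂ) / 2 ^ 1 ∈ RR := by
    have := RR.mul_mem h1 (RR_of_int (nat_integral d'))
    convert this using 1
    have : (d' : ℂ) ≠ 0 := by exact_mod_cast hd'
    push_cast; field_simp; ring
  have h6 := RR_div h5
  obtain ⟨c, hc⟩ := hK
  rw [hc] at h6
  push_cast at h6
  omega

lemma irr_conv (φ ψ : IrrT K) (g : K) : ∑ h, φ.1 h⁻¹ * ψ.1 (h * g) =
    if φ = ψ then (Fintype.card K : ℂ) / ψ.1 1 * ψ.1 g else 0 := by
  obtain ⟨V, hV, e⟩ := irrchar_exists ψ.2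
  obtain ⟨s, h1, h2⟩ := central_scalar V.ρ hV (fun h => φ.1 h⁻¹) (by
    intro g h
    simp only [mul_inv_rev, inv_inv]
    rw [← mul_assoc, irr_class])
  have h3 := tchar_one_ne _ hV
  have h4 : ∑ g, φ.1 g⁻¹ * tchar V.ρ g = if φ = ψ then (Fintype.card K : ℂ) else 0 := by
    rw [← e]
    simp only [mul_comm (φ.1 _)]
    rw [irrchar_orth ψ.2 φ.2]
    by_cases h : φ = ψ
    · subst h; simp
    · rw [if_neg h, if_neg (fun h' => h (Subtype.ext h').symm)]
  rw [h4] at h2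
  have h5 := congrArg (fun T => LinearMap.trace ℂ V (T * V.ρ g)) h1
  simp only [Finset.sum_mul, map_sum, smul_mul_assoc, map_smul, ← map_mul, one_mul, smul_eq_mul] at h5
  rw [e]
  refine Eq.trans h5 ?_
  change s * tchar V.ρ g = _
  split_ifs with h
  · rw [if_pos h] at h2
    rw [← h2]; field_simp
  · rw [if_neg h] at h2
    rcases mul_eq_zero.mp h2 with h' | h'
    · rw [h', zero_mul]
    · exact absurd h' h3

lemma irr_sum (k : K) : ∑ φ : IrrT K, φ.1 1 * φ.1 k = if k = 1 then (Fintype.card K : ℂ) else 0 := by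
  let reg : Representation ℂ K (K → ℂ) :=
    { toFun := fun g => LinearMap.funLeft ℂ ℂ (fun x => x * g)
      map_one' := by ext; simp [LinearMap.funLeft]
      map_mul' := by intro g h; apply LinearMap.ext; intro f; funext x; simp [LinearMap.funLeft, mul_assoc] }
  have hreg : ∀ k, tchar reg k = if k = 1 then (Fintype.card K : ℂ) else 0 := by
    intro k
    rw [tchar, LinearMap.trace_eq_matrix_trace ℂ (Pi.basisFun ℂ K), Matrix.trace]
    simp only [Matrix.diag, LinearMap.toMatrix_apply]
    have : ∀ i, (Pi.basisFun ℂ K).repr (reg k ((Pi.basisFun ℂ K) i)) i = if k = 1 then 1 else 0 := by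
      intro i
      rw [Pi.basisFun_repr, Pi.basisFun_apply]
      change (Pi.single i (1 : ℂ) : K → ℂ) (i * k) = _
      rw [Pi.single_apply]
      simp
    simp only [this]
    split_ifs with h
    · simp [h]
    · simp [h]
  have hcl : ∀ f ∈ AddSubmonoid.closure {φ : K → ℂ | IsIrreducibleCharacter φ},
      ∃ n : IrrT K → ℂ, f = ∑ φ, n φ • φ.1 := by
    intro f hf
    induction hf using AddSubmonoid.closure_induction with
    | mem x hx => 
      obtain ⟨φ0, hφ0⟩ : ∃ φ0 : IrrT K, φ0.1 = x := ⟨⟨x, hx⟩, rfl⟩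
      refine ⟨fun φ => if φ = φ0 then 1 else 0, ?_⟩
      rw [Finset.sum_eq_single φ0]
      · simp [hφ0]
      · intro b _ hb; simp only [if_neg hb, zero_smul]
      · intro h; exact absurd (Finset.mem_univ _) h
    | zero => exact ⟨0, by simp⟩
    | add x y _ _ hx hy =>
      obtain ⟨n, rfl⟩ := hx
      obtain ⟨n', rfl⟩ := hy
      exact ⟨n + n', by simp [add_smul, Finset.sum_add_distrib]⟩
  obtain ⟨n, hn⟩ := hcl _ (char_mem_closure _ reg rfl)
  have hcoef : ∀ φ, n φ = φ.1 1 := by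
    intro φ
    have h1 : ∑ g, tchar reg g * φ.1 g⁻¹ = Fintype.card K * φ.1 1 := by
      simp [hreg]
    rw [hn] at h1
    simp only [Finset.sum_apply, Pi.smul_apply, smul_eq_mul, Finset.sum_mul] at h1
    rw [Finset.sum_comm] at h1
    simp only [mul_assoc, ← Finset.mul_sum] at h1
    rw [Finset.sum_eq_single φ] at h1
    · rw [irrchar_orth φ.2 φ.2, if_pos rfl, mul_comm] at h1
      exact mul_left_cancel₀ (by exact_mod_cast Fintype.card_ne_zero) h1
    · intro ψ _ hne
      rw [irrchar_orth ψ.2 φ.2, if_neg (fun h => hne (Subtype.ext h)), mul_zero]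
    · intro h; exact absurd (Finset.mem_univ _) h
  rw [← hreg, hn]
  simp [hcoef]

variable {V : Type} [AddCommGroup V] [Module ℂ V]

noncomputable def ecoef (φ : IrrT K) (k : K) : ℂ := (Fintype.card K : ℂ)⁻¹ * φ.1 1 * φ.1 k⁻¹

noncomputable def eop (τ : Representation ℂ K V) (φ : IrrT K) : V →ₗ[ℂ] V := ∑ k, ecoef φ k • τ k

lemma eop_mul (τ : Representation ℂ K V) (φ ψ : IrrT K) :
    eop τ φ * eop τ ψ = if φ = ψ then eop τ φ else 0 := by
  have hK : (Fintype.card K : ℂ) ≠ 0 := by exact_mod_cast Fintype.card_ne_zero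
  obtain ⟨d, hd, hd0⟩ := irr_deg ψ
  have hd0' : (d : ℂ) ≠ 0 := by exact_mod_cast hd0
  have h1 : eop τ φ * eop τ ψ = ∑ g, (∑ k, ecoef φ k * ecoef ψ (k⁻¹ * g)) • τ g := by
    rw [eop, eop, Finset.sum_mul]
    simp only [Finset.sum_smul]
    rw [Finset.sum_comm]
    refine Finset.sum_congr rfl fun k _ => ?_
    rw [Finset.mul_sum]
    refine Fintype.sum_equiv (Equiv.mulLeft k) _ _ (fun l => ?_)
    simp only [Equiv.coe_mulLeft, inv_mul_cancel_left]
    rw [smul_mul_smul_comm, ← map_mul]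
  have h2 : ∀ g, ∑ k, ecoef φ k * ecoef ψ (k⁻¹ * g) = if φ = ψ then ecoef φ g else 0 := by
    intro g
    have h3 := irr_conv φ ψ g⁻¹
    have h4 : ∀ k, ecoef φ k * ecoef ψ (k⁻¹ * g) = ((Fintype.card K : ℂ)⁻¹ * φ.1 1 * (Fintype.card K : ℂ)⁻¹ * ψ.1 1) *
        (φ.1 k⁻¹ * ψ.1 (k * g⁻¹)) := by
      intro k
      simp only [ecoef, mul_inv_rev, inv_inv]
      rw [← irr_class ψ (g⁻¹ * k) g]
      rw [show g * (g⁻¹ * k) * g⁻¹ = k * g⁻¹ by group]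
      ring
    simp only [h4]
    rw [← Finset.mul_sum, h3]
    split_ifs with h
    · subst h
      rw [ecoef, hd]; field_simp
    · simp
  rw [h1]
  simp only [h2]
  split_ifs
  · rfl
  · simp

lemma eop_sum (τ : Representation ℂ K V) : ∑ φ : IrrT K, eop τ φ = 1 := by
  have hK : (Fintype.card K : ℂ) ≠ 0 := by exact_mod_cast Fintype.card_ne_zero
  simp only [eop]
  rw [Finset.sum_comm]
  simp only [← Finset.sum_smul]
  have : ∀ k : K, ∑ φ : IrrT K, ecoef φ k = if k = 1 then 1 else 0 := by
    intro k
    simp only [ecoef, mul_assoc, ← Finset.mul_sum]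
    rw [irr_sum]
    simp only [inv_eq_one]
    split_ifs
    · field_simp
    · simp
  simp [this]

noncomputable def eO (τ : Representation ℂ K V) (O : Finset (IrrT K)) : V →ₗ[ℂ] V := ∑ φ ∈ O, eop τ φ
noncomputable def ecO (O : Finset (IrrT K)) (k : K) : ℂ := ∑ φ ∈ O, ecoef φ k

lemma eO_eq (τ : Representation ℂ K V) (O : Finset (IrrT K)) : eO τ O = ∑ k, ecO O k • τ k := by
  simp only [eO, ecO, eop, Finset.sum_smul]
  rw [Finset.sum_comm]

lemma eO_idem (τ : Representation ℂ K V) (O : Finset (IrrT K)) : eO τ O * eO τ O = eO τ O := by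
  rw [eO, Finset.sum_mul]
  refine Finset.sum_congr rfl fun φ hφ => ?_
  rw [Finset.mul_sum]
  simp [eop_mul, hφ]

lemma ecO_norm (O : Finset (IrrT K)) (d : ℕ) (hd : ∀ φ ∈ O, φ.1 1 = d) :
    ∑ k, ‖ecO O k‖ ^ 2 = O.card * d ^ 2 / Fintype.card K := by
  have hK : (Fintype.card K : ℂ) ≠ 0 := by exact_mod_cast Fintype.card_ne_zero
  have h0 : ∀ k, ((‖ecO O k‖ ^ 2 : ℝ) : ℂ) = ∑ φ ∈ O, ∑ ψ ∈ O, ((Fintype.card K : ℂ)⁻¹ ^ 2 * d ^ 2) * (φ.1 k * ψ.1 k⁻¹) := by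
    intro k
    rw [Complex.ofReal_pow, ← Complex.conj_mul']
    rw [ecO, map_sum, Finset.sum_mul]
    refine Finset.sum_congr rfl fun φ hφ => ?_
    rw [Finset.mul_sum]
    refine Finset.sum_congr rfl fun ψ hψ => ?_
    simp only [ecoef, map_mul, hd φ hφ, hd ψ hψ, map_inv₀, map_natCast]
    have : (starRingEnd ℂ) (φ.1 k⁻¹) = φ.1 k := by
      rw [irr_inv]; simp
    rw [this]; ring
  have h1 : ((∑ k, ‖ecO O k‖ ^ 2 : ℝ) : ℂ) = ((O.card * d ^ 2 / Fintype.card K : ℝ) : ℂ) := by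
    rw [Complex.ofReal_sum]
    simp only [h0]
    rw [Finset.sum_comm]
    have : ∀ φ ∈ O, ∑ k : K, ∑ ψ ∈ O, ((Fintype.card K : ℂ)⁻¹ ^ 2 * d ^ 2) * (φ.1 k * ψ.1 k⁻¹) = d ^ 2 / Fintype.card K := by
      intro φ hφ
      rw [Finset.sum_comm, Finset.sum_eq_single φ]
      · rw [← Finset.mul_sum, irrchar_orth φ.2 φ.2, if_pos rfl]; field_simp
      · intro ψ _ hne
        rw [← Finset.mul_sum, irrchar_orth φ.2 ψ.2, if_neg (fun h => hne (Subtype.ext h).symm), mul_zero]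
      · intro h; exact absurd hφ h
    rw [Finset.sum_congr rfl this]
    simp; ring
  exact_mod_cast h1
end irr
end

section
section twist
variable {G P : Type} [Group G] [Group P]

def cj (ψ : P →* G) (K : Subgroup G) (hN : ∀ p, ∀ k ∈ K, ψ p * k * (ψ p)⁻¹ ∈ K) (p : P) : K →* K where
  toFun k := ⟨ψ p * k * (ψ p)⁻¹, hN p k k.2⟩
  map_one' := by ext; simp
  map_mul' k l := by ext; simp

variable {ψ : P →* G} {K : Subgroup G} (hN : ∀ p, ∀ k ∈ K, ψ p * k * (ψ p)⁻¹ ∈ K)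

lemma cj_mul (p q : P) (k : K) : cj ψ K hN (p * q) k = cj ψ K hN p (cj ψ K hN q k) := by
  ext; simp [cj, mul_assoc]

lemma cj_one (k : K) : cj ψ K hN 1 k = k := by
  ext; simp [cj]

lemma cj_surj (p : P) : Function.Surjective (cj ψ K hN p) := fun k =>
  ⟨cj ψ K hN p⁻¹ k, by rw [← cj_mul, mul_inv_cancel, cj_one]⟩

variable [Fintype G]

noncomputable def tw (p : P) (φ : IrrT K) : IrrT K :=
  ⟨fun k => φ.1 (cj ψ K hN p⁻¹ k), irrchar_comp φ.2 _ (cj_surj hN _)⟩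

lemma tw_mul (p q : P) (φ : IrrT K) : tw hN (p * q) φ = tw hN p (tw hN q φ) := by
  apply Subtype.ext; funext k
  simp only [tw, mul_inv_rev, cj_mul]

lemma tw_one (φ : IrrT K) : tw hN 1 φ = φ := by
  apply Subtype.ext; funext k
  simp only [tw, inv_one, cj_one]

lemma tw_cj (p : P) (φ : IrrT K) (k : K) : (tw hN p φ).1 (cj ψ K hN p k) = φ.1 k := by
  simp only [tw]; rw [← cj_mul, inv_mul_cancel, cj_one]

lemma tw_deg (p : P) (φ : IrrT K) : (tw hN p φ).1 1 = φ.1 1 := by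
  simp [tw]

lemma tw_inj (p : P) : Function.Injective (tw hN p : IrrT K → IrrT K) := by
  intro φ φ' h
  have := congrArg (tw hN p⁻¹) h
  rwa [← tw_mul, ← tw_mul, inv_mul_cancel, tw_one, tw_one] at this

lemma tw_triv (p : P) (hp : ∀ k ∈ K, k * ψ p = ψ p * k) (φ : IrrT K) : tw hN p φ = φ := by
  apply Subtype.ext; funext k
  have : cj ψ K hN p⁻¹ k = k := by
    ext
    simp only [cj, MonoidHom.coe_mk, OneHom.coe_mk, map_inv, inv_inv]
    rw [mul_assoc, hp k k.2, inv_mul_cancel_left]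
  simp only [tw, this]

lemma ecoef_tw (p : P) (φ : IrrT K) (k : K) : ecoef (tw hN p φ) (cj ψ K hN p k) = ecoef φ k := by
  simp only [ecoef, tw_deg, ← map_inv, tw_cj]

noncomputable def cjE (p : P) : K ≃ K where
  toFun := cj ψ K hN p
  invFun := cj ψ K hN p⁻¹
  left_inv k := by rw [← cj_mul, inv_mul_cancel, cj_one]
  right_inv k := by rw [← cj_mul, mul_inv_cancel, cj_one]

variable {V : Type} [AddCommGroup V] [Module ℂ V] (ρ : Representation ℂ G V)

lemma eop_conj (p : P) (φ : IrrT K) : ρ (ψ p) * eop (ρ.comp K.subtype) φ = eop (ρ.comp K.subtype) (tw hN p φ) * ρ (ψ p) := by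
  rw [eop, eop, Finset.mul_sum, Finset.sum_mul]
  refine Fintype.sum_equiv (cjE hN p) _ _ (fun k => ?_)
  change _ = (ecoef (tw hN p φ) (cj ψ K hN p k) • ρ ((cj ψ K hN p k : K) : G)) * ρ (ψ p)
  rw [ecoef_tw, mul_smul_comm, smul_mul_assoc, ← map_mul]
  change _ • (ρ (ψ p) * ρ (k : G)) = _
  rw [← map_mul]
  simp [cj]

def StableO (O : Finset (IrrT K)) : Prop := ∀ p, ∀ φ ∈ O, tw hN p φ ∈ O

lemma stable_sum {M : Type} [AddCommMonoid M] {O : Finset (IrrT K)} (hO : StableO hN O) (p : P) (f : IrrT K → M) :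
    ∑ φ ∈ O, f (tw hN p φ) = ∑ φ ∈ O, f φ := by
  refine Finset.sum_bij' (fun φ _ => tw hN p φ) (fun φ _ => tw hN p⁻¹ φ) (fun φ h => hO _ _ h) (fun φ h => hO _ _ h) ?_ ?_ ?_
  · intro φ _; rw [← tw_mul, inv_mul_cancel, tw_one]
  · intro φ _; rw [← tw_mul, mul_inv_cancel, tw_one]
  · intro φ _; rfl

lemma eO_comm {O : Finset (IrrT K)} (hO : StableO hN O) (p : P) :
    ρ (ψ p) * eO (ρ.comp K.subtype) O = eO (ρ.comp K.subtype) O * ρ (ψ p) := by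
  rw [eO, Finset.mul_sum]
  simp only [eop_conj hN ρ p]
  rw [← Finset.sum_mul, stable_sum hN hO p (fun φ => eop (ρ.comp K.subtype) φ)]

lemma ecO_cj {O : Finset (IrrT K)} (hO : StableO hN O) (p : P) (k : K) :
    ecO O (cj ψ K hN p k) = ecO O k := by
  rw [ecO, ← stable_sum hN hO p (fun φ => ecoef φ (cj ψ K hN p k))]
  simp only [ecoef_tw]; rfl

lemma orbit_decomp : ∃ 𝒪 : Finset (Finset (IrrT K)), (∀ O ∈ 𝒪, StableO hN O ∧ ∃ φ ∈ O, ∀ φ' ∈ O, ∃ p, φ' = tw hN p φ) ∧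
    ∀ {M : Type} [AddCommMonoid M] (f : IrrT K → M), ∑ φ, f φ = ∑ O ∈ 𝒪, ∑ φ ∈ O, f φ := by
  let orb : IrrT K → Finset (IrrT K) := fun φ => Finset.univ.filter fun φ' => ∃ p, φ' = tw hN p φ
  have horb : ∀ φ p, orb (tw hN p φ) = orb φ := by
    intro φ p
    ext φ'
    simp only [orb, Finset.mem_filter, Finset.mem_univ, true_and]
    constructor
    · rintro ⟨q, rfl⟩; exact ⟨q * p, by rw [tw_mul]⟩
    · rintro ⟨q, rfl⟩; exact ⟨q * p⁻¹, by rw [← tw_mul, inv_mul_cancel_right]⟩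
  have hself : ∀ φ, φ ∈ orb φ := fun φ => by
    simp only [orb, Finset.mem_filter, Finset.mem_univ, true_and]
    exact ⟨1, (tw_one hN φ).symm⟩
  refine ⟨Finset.univ.image orb, ?_, ?_⟩
  · intro O hO
    obtain ⟨φ, _, rfl⟩ := Finset.mem_image.mp hO
    refine ⟨?_, φ, hself φ, fun φ' h => (Finset.mem_filter.mp h).2⟩
    intro p φ' h
    obtain ⟨q, rfl⟩ := (Finset.mem_filter.mp h).2
    simp only [orb, Finset.mem_filter, Finset.mem_univ, true_and]
    exact ⟨p * q, by rw [tw_mul]⟩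
  · intro M _ f
    rw [← Finset.sum_fiberwise_of_maps_to (s := Finset.univ) (t := Finset.univ.image orb) (g := orb)
      (fun φ h => Finset.mem_image_of_mem _ h)]
    refine Finset.sum_congr rfl fun O hO => ?_
    obtain ⟨φ, _, rfl⟩ := Finset.mem_image.mp hO
    refine Finset.sum_congr ?_ fun _ _ => rfl
    ext φ'
    simp only [Finset.mem_filter, Finset.mem_univ, true_and]
    constructor
    · intro h; rw [← h]; exact hself φ'
    · intro h
      obtain ⟨q, rfl⟩ := (Finset.mem_filter.mp h).2
      exact horb _ _
end twist
end

section
lemma sum_odd (h : ℕ) (g : ℕ → ℂ) :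
    ∑ i ∈ (Finset.range (2 * h)).filter Odd, g i = ∑ i ∈ Finset.range h, g (2 * i + 1) := by
  symm
  refine Finset.sum_bij (fun i _ => 2 * i + 1) ?_ (fun _ _ _ _ h => by omega) ?_ (fun _ _ => rfl)
  · intro i hi
    simp only [Finset.mem_filter, Finset.mem_range] at hi ⊢
    exact ⟨by omega, ⟨i, rfl⟩⟩
  · intro i hi
    simp only [Finset.mem_filter, Finset.mem_range] at hi
    obtain ⟨h1, j, rfl⟩ := hi
    exact ⟨j, by simp; omega, rfl⟩

lemma prim_half {h : ℕ} (hh : 0 < h) {η : ℂ} (hη : IsPrimitiveRoot η (2 * h)) : η ^ h = -1 := by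
  have h5 : (η ^ h - 1) * (η ^ h + 1) = 0 := by
    have := hη.pow_eq_one
    rw [mul_comm, pow_mul] at this
    linear_combination this
  rcases mul_eq_zero.mp h5 with h6 | h6
  · exfalso
    have h7 := Nat.le_of_dvd hh (hη.dvd_of_pow_eq_one h (sub_eq_zero.mp h6))
    omega
  · exact eq_neg_of_add_eq_zero_left h6

lemma odd_sum {h : ℕ} (hh : 0 < h) {η : ℂ} (hη : IsPrimitiveRoot η (2 * h)) {t : ℕ} (ht : t < 2 * h) :
    ∑ i ∈ (Finset.range (2 * h)).filter Odd, η ^ (i * t) = if t = 0 then (h : ℂ) else if t = h then -(h : ℂ) else 0 := by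
  rw [sum_odd]
  have h1 : ∀ i, η ^ ((2 * i + 1) * t) = η ^ t * (η ^ (2 * t)) ^ i := by
    intro i; rw [← pow_mul, ← pow_add]; congr 1; ring
  simp only [h1]
  rw [← Finset.mul_sum]
  have hη1 := hη.pow_eq_one
  split_ifs with h2 h3
  · simp [h2]
  · rw [h3, prim_half hh hη, hη1]; simp
  · have h4 : η ^ (2 * t) ≠ 1 := by
      intro h4
      obtain ⟨c, hc⟩ := hη.dvd_of_pow_eq_one _ h4
      have h5 : t = h * c := by nlinarith
      rcases c with _ | _ | c
      · simp at h5; exact h2 h5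
      · simp at h5; exact h3 h5
      · nlinarith
    have h5 := geom_sum_mul (η ^ (2 * t)) h
    rw [← pow_mul, show 2 * t * h = 2 * h * t by ring, pow_mul η (2 * h) t, hη1, one_pow, sub_self] at h5
    rcases mul_eq_zero.mp h5 with h6 | h6
    · rw [h6, mul_zero]
    · exact absurd (sub_eq_zero.mp h6) h4

lemma odd_sum' {h : ℕ} (hh : 0 < h) {η : ℂ} (hη : IsPrimitiveRoot η (2 * h)) (c : ℕ → ℂ) :
    ∑ i ∈ (Finset.range (2 * h)).filter Odd, ∑ t ∈ Finset.range (2 * h), c t * η ^ (i * t) = h * (c 0 - c h) := by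
  rw [Finset.sum_comm]
  simp only [← Finset.mul_sum]
  rw [Finset.sum_congr rfl fun t ht => by rw [odd_sum hh hη (Finset.mem_range.mp ht)]]
  have : ∀ t, c t * (if t = 0 then (h : ℂ) else if t = h then -(h : ℂ) else 0) =
      (if t = 0 then c t * h else 0) + (if t = h then -(c t * h) else 0) := by
    intro t
    by_cases h1 : t = 0
    · subst h1; simp [hh.ne]
    · simp [h1]
  simp only [this]
  rw [Finset.sum_add_distrib, Finset.sum_ite_eq', Finset.sum_ite_eq', if_pos (by simp; omega), if_pos (by simp; omega)]
  ring

lemma sum_reflect (n : ℕ) (hn : 0 < n) (g : ℕ → ℂ) :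
    ∑ i ∈ Finset.range n, g ((n - i) % n) = ∑ i ∈ Finset.range n, g i := by
  refine Finset.sum_bij' (fun i _ => (n - i) % n) (fun i _ => (n - i) % n) ?_ ?_ ?_ ?_ (fun _ _ => rfl)
  · intro i _; simp [Nat.mod_lt _ hn]
  · intro i _; simp [Nat.mod_lt _ hn]
  all_goals
    intro i hi
    simp only [Finset.mem_range] at hi
    rcases Nat.eq_zero_or_pos i with rfl | h
    · simp
    · rw [Nat.mod_eq_of_lt (a := n - i) (by omega)]
      rw [show n - (n - i) = i by omega, Nat.mod_eq_of_lt hi]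

section core
open QuaternionGroup
variable {m : ℕ} [NeZero m] {V : Type} [AddCommGroup V] [Module ℂ V] [FiniteDimensional ℂ V]

lemma sum_zmod (F : ZMod (2 * m) → ℂ) : ∑ j, F j = ∑ i ∈ Finset.range (2 * m), F (i : ℕ) := by
  symm
  refine Finset.sum_bij (fun i _ => ((i : ℕ) : ZMod (2 * m))) (fun _ _ => Finset.mem_univ _) ?_ ?_ (fun _ _ => rfl)
  · intro i hi j hj hij
    simp only [Finset.mem_range] at hi hj
    rw [ZMod.natCast_eq_natCast_iff'] at hij
    rwa [Nat.mod_eq_of_lt hi, Nat.mod_eq_of_lt hj] at hij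
  · intro j _
    exact ⟨j.val, Finset.mem_range.mpr (ZMod.val_lt j), ZMod.natCast_zmod_val j⟩

lemma lin_idem (π : Representation ℂ (QuaternionGroup m) V) (e : V →ₗ[ℂ] V) (he : e * e = e)
    (hc : ∀ p, π p * e = e * π p) (lam : QuaternionGroup m →* ℂ) :
    ∃ N : ℕ, ∑ i ∈ Finset.range (2 * m), lam (a (i : ℕ)) * LinearMap.trace ℂ V (π (a (i : ℕ)) * e) +
      ∑ i ∈ Finset.range (2 * m), lam (xa (i : ℕ)) * LinearMap.trace ℂ V (π (xa (i : ℕ)) * e) = 2 * (2 * m) * N := by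
  let π' : Representation ℂ (QuaternionGroup m) V :=
    { toFun := fun p => lam p • π p
      map_one' := by simp
      map_mul' := fun p q => by rw [map_mul, map_mul, smul_mul_smul_comm] }
  have h1 := idem_mul (idem_group π') he (by
    rw [smul_mul_assoc, mul_smul_comm, Finset.sum_mul, Finset.mul_sum]
    congr 1
    refine Finset.sum_congr rfl fun p _ => ?_
    change (lam p • π p) * e = e * (lam p • π p)
    rw [smul_mul_assoc, mul_smul_comm, hc])
  obtain ⟨N, hN⟩ := trace_idem_nat _ h1
  refine ⟨N, ?_⟩
  rw [smul_mul_assoc, map_smul, Finset.sum_mul, map_sum, sum_quat, smul_eq_mul] at hN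
  have h2 : ∀ p, LinearMap.trace ℂ V (π' p * e) = lam p * LinearMap.trace ℂ V (π p * e) := by
    intro p
    change LinearMap.trace ℂ V ((lam p • π p) * e) = _
    rw [smul_mul_assoc, map_smul, smul_eq_mul]
  simp only [h2] at hN
  rw [sum_zmod, sum_zmod, QuaternionGroup.card] at hN
  rw [← hN]
  have : (m : ℂ) ≠ 0 := by exact_mod_cast NeZero.ne m
  push_cast
  field_simp
  ring


lemma lin_char (s ε : ℂ) (hm : Even m) (hs : s * s = 1) (hε : ε * ε = 1) :
    ∃ lam : QuaternionGroup m →* ℂ, (∀ i : ℕ, lam (a i) = s ^ i) ∧ ∀ i : ℕ, lam (xa i) = ε * s ^ i := by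
  let sg : ZMod (2 * m) → ℂ := fun j => s ^ j.val
  have hmod : ∀ i : ℕ, s ^ (i % (2 * m)) = s ^ i := by
    intro i
    conv_rhs => rw [← Nat.mod_add_div i (2 * m), pow_add, mul_assoc, pow_mul, pow_two, hs, one_pow, mul_one]
  have hnat : ∀ i : ℕ, sg i = s ^ i := by
    intro i; simp only [sg, ZMod.val_natCast, hmod]
  have hadd : ∀ i j, sg (i + j) = sg i * sg j := by
    intro i j; simp only [sg, ZMod.val_add, hmod, pow_add]
  have h0 : sg 0 = 1 := by simp [sg]
  have hsq : ∀ i, sg i * sg i = 1 := by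
    intro i; simp only [sg]; rw [← mul_pow, hs, one_pow]
  have hneg : ∀ j, sg (-j) = sg j := by
    intro j
    have h1 := hadd (-j) j
    rw [neg_add_cancel, h0] at h1
    calc sg (-j) = sg (-j) * (sg j * sg j) := by rw [hsq, mul_one]
      _ = sg j := by rw [← mul_assoc, ← h1, one_mul]
  have hsub : ∀ i j, sg (i - j) = sg i * sg j := by
    intro i j; rw [sub_eq_add_neg, hadd, hneg]
  have hsm : sg m = 1 := by
    rw [hnat]; obtain ⟨c, hc⟩ := hm; rw [hc, pow_add, ← mul_pow, hs, one_pow]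
  let l : QuaternionGroup m → ℂ := fun x => match x with | a j => sg j | xa j => ε * sg j
  refine ⟨{ toFun := l, map_one' := ?_, map_mul' := ?_ }, fun i => hnat i, fun i => ?_⟩
  · exact h0
  · rintro (i | i) (j | j)
    · rw [a_mul_a]; exact hadd _ _
    · rw [a_mul_xa]; change ε * sg (j - i) = sg i * (ε * sg j); rw [hsub]; ring
    · rw [xa_mul_a]; change ε * sg (i + j) = ε * sg i * sg j; rw [hadd]; ring
    · rw [xa_mul_xa]; change sg (m + j - i) = ε * sg i * (ε * sg j); rw [hsub, hadd, hsm]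
      linear_combination (-(sg i * sg j)) * hε
  · change ε * sg i = _; rw [hnat]
end core
end

section
section core
open QuaternionGroup
variable {m : ℕ} [NeZero m] {V : Type} [AddCommGroup V] [Module ℂ V] [FiniteDimensional ℂ V]

lemma sum_mult {D : ℕ} (hD : 0 < D) (n : ℕ) (g : ℕ → ℂ) (hg : ∀ i, ¬ D ∣ i → g i = 0) :
    ∑ i ∈ Finset.range (D * n), g i = ∑ i ∈ Finset.range n, g (D * i) := by
  rw [← Finset.sum_filter_add_sum_filter_not (Finset.range (D * n)) (fun i => D ∣ i)]
  rw [Finset.sum_eq_zero (s := Finset.filter (fun i => ¬ D ∣ i) _) (fun i hi => hg i (Finset.mem_filter.mp hi).2), add_zero]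
  symm
  refine Finset.sum_bij (fun i _ => D * i) ?_ (fun _ _ _ _ h => Nat.eq_of_mul_eq_mul_left hD h) ?_ (fun _ _ => rfl)
  · intro i hi
    simp only [Finset.mem_filter, Finset.mem_range] at hi ⊢
    exact ⟨Nat.mul_lt_mul_of_pos_left hi hD, Dvd.intro _ rfl⟩
  · intro i hi
    simp only [Finset.mem_filter, Finset.mem_range] at hi
    obtain ⟨h1, j, rfl⟩ := hi
    exact ⟨j, Finset.mem_range.mpr (Nat.lt_of_mul_lt_mul_left h1), rfl⟩

lemma orbCore (D h : ℕ) [NeZero D] (hDh : D * h = m) (hev : Even h)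
    (π : Representation ℂ (QuaternionGroup m) V) (e : V →ₗ[ℂ] V) (he : e * e = e)
    (hcomm : ∀ p, π p * e = e * π p) (f : QuaternionGroup m → ℂ)
    (hf : ∀ p, f p = LinearMap.trace ℂ V (π p * e))
    (h1 : ∀ i : ℕ, ¬ D ∣ i → f (a i) = 0) (N1 : ℕ) (h2 : f 1 = 2 * D * N1) :
    ∃ c0 ch : ℕ, Even (c0 + ch) ∧
      ∑ i ∈ (Finset.range (2 * h)).filter Odd, f (a ((D * i : ℕ))) = D * h * (c0 - ch) ∧
      (c0 = ch → f ∈ Cone (QuaternionGroup m) (2 * D)) ∧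
      ((∀ i, f (xa i) = 0) → f ∈ Cone (QuaternionGroup m) (2 * D)) := by
  have hmpos : 0 < m := Nat.pos_of_ne_zero (NeZero.ne m)
  have hDpos : 0 < D := Nat.pos_of_ne_zero (NeZero.ne D)
  have hhpos : 0 < h := by
    rcases Nat.eq_zero_or_pos h with rfl | h'
    · omega
    · exact h'
  have hD0 : (D : ℂ) ≠ 0 := by exact_mod_cast hDpos.ne'
  have hm0 : (m : ℂ) ≠ 0 := by exact_mod_cast hmpos.ne'
  have hmev : Even m := by rw [← hDh]; exact hev.mul_left D
  have hcl : ∀ p q, f (q * p * q⁻¹) = f p := by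
    intro p q
    rw [hf, hf, map_mul π, map_mul π, mul_assoc, hcomm, ← mul_assoc, LinearMap.trace_mul_comm, ← mul_assoc, ← mul_assoc,
      ← map_mul π, inv_mul_cancel, map_one, one_mul]
  let ζ : ℂ := Complex.exp (2 * Real.pi * Complex.I / ((2 * m : ℕ) : ℂ))
  have hζ : IsPrimitiveRoot ζ (2 * m) := Complex.isPrimitiveRoot_exp _ (by omega)
  have hpow : ∀ i : ℕ, π (a 1) ^ i = π (a i) := by
    intro i; rw [← map_pow, a_one_pow]
  obtain ⟨c, hc1, hc2⟩ := spectral (2 * m) (by omega) (π (a 1)) e (by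
    rw [hpow, ZMod.natCast_self, a_zero, map_one]) he (hcomm _) ζ hζ
  simp only [hpow, ← hf] at hc1 hc2
  have hη : IsPrimitiveRoot (ζ ^ D) (2 * h) := hζ.pow (by omega) (by rw [← hDh]; ring)
  set η := ζ ^ D with hηdef
  let F : ℕ → ℂ := fun i => f (a ((D * i : ℕ)))
  have hFmod : ∀ i, F (i % (2 * h)) = F i := by
    intro i
    simp only [F]
    congr 2
    rw [ZMod.natCast_eq_natCast_iff', ← hDh, show 2 * (D * h) = D * (2 * h) by ring,
      Nat.mul_mod_mul_left, Nat.mul_mod_mul_left, Nat.mod_mod]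
  have hcF : ∀ j, (2 * h * (D * c j) : ℂ) = ∑ i ∈ Finset.range (2 * h), η⁻¹ ^ (i * j) * F i := by
    intro j
    have := hc1 j
    have hrange : Finset.range (2 * m) = Finset.range (D * (2 * h)) := by congr 1; rw [← hDh]; ring
    have hcast : (m : ℂ) = D * h := by rw [← hDh]; push_cast; rfl
    rw [hrange, sum_mult hDpos] at this
    · push_cast at this
      rw [show (2 * h * (D * c j) : ℂ) = 2 * (D * h) * c j by ring, ← hcast, this]
      refine Finset.sum_congr rfl fun i _ => ?_
      simp only [F]
      rw [mul_assoc, pow_mul, inv_pow ζ D]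
      push_cast; rfl
    · intro i hi; rw [h1 i hi, mul_zero]
  have hinv : ∀ i, F i = ∑ t ∈ Finset.range (2 * h), (D * c t : ℂ) * η ^ (i * t) :=
    fourier_inv (2 * h) (by omega) η hη F hFmod (fun t => D * c t) (fun j _ => by
      push_cast; exact hcF j)
  have hη1 := hη.pow_eq_one
  have hη0 : η ≠ 0 := hη.ne_zero (by omega)
  have hsym : ∀ t, 0 < t → t < 2 * h → c (2 * h - t) = c t := by
    intro t ht ht2
    have e1 := hcF (2 * h - t)
    rw [← sum_reflect (2 * h) (by omega)] at e1
    have e2 : (2 * h * (D * c (2 * h - t)) : ℂ) = 2 * h * (D * c t) := by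
      rw [e1, hcF t]
      refine Finset.sum_congr rfl fun i hi => ?_
      have hi := Finset.mem_range.mp hi
      congr 1
      · have : ∀ x y : ℕ, η ^ x * η ^ y = 1 → True := fun _ _ _ => trivial
        rw [inv_pow, inv_pow, inv_inj, pow_mul, pow_mul]
        have e3 : η ^ ((2 * h - i) % (2 * h)) = (η ^ i)⁻¹ := by
          apply eq_inv_of_mul_eq_one_left; rw [← pow_eq_pow_mod _ hη1, ← pow_add]
          rw [Nat.sub_add_cancel hi.le, hη1]
        rw [e3, inv_pow]; apply inv_eq_of_mul_eq_one_left; rw [← pow_add, add_comm,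
          Nat.sub_add_cancel ht2.le, ← pow_mul, mul_comm, pow_mul, hη1, one_pow]
      · rw [hFmod]
        simp only [F]
        rw [← hcl (a ((D * i : ℕ) : ZMod (2 * m))) (xa 0), conj_xaa]
        congr 2
        rw [Nat.mul_sub, Nat.cast_sub (Nat.mul_le_mul_left _ hi.le), show D * (2 * h) = 2 * m by rw [← hDh]; ring,
          ZMod.natCast_self, zero_sub]
    have e3 : (h : ℂ) ≠ 0 := by exact_mod_cast hhpos.ne'
    have e4 : (2 * h * D : ℂ) ≠ 0 := mul_ne_zero (mul_ne_zero two_ne_zero e3) hD0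
    have e5 : (c (2 * h - t) : ℂ) = c t := by
      apply mul_left_cancel₀ e4; linear_combination e2
    exact_mod_cast e5
  have hfa : ∀ i : ℕ, f (a i) = if D ∣ i then D * ∑ t ∈ Finset.range (2 * h), (c t : ℂ) * ζ ^ (i * t) else 0 := by
    intro i
    split_ifs with hd
    · obtain ⟨i', rfl⟩ := hd
      have := hinv i'
      simp only [F] at this
      rw [this, Finset.mul_sum]
      refine Finset.sum_congr rfl fun t _ => ?_
      rw [hηdef, ← pow_mul]; ring_nf
    · exact h1 i hd
  have hpar : Even (c 0 + c h) := by
    have e1 := hinv 0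
    simp only [F, mul_zero, Nat.cast_zero, a_zero, h2, mul_assoc, ← Finset.mul_sum] at e1
    have e2 := pair_sum h hhpos c hsym 1 (one_pow _)
    simp only [one_pow, mul_one, inv_one] at e2
    have e3 : (2 * N1 : ℂ) = c 0 + c h + ∑ t ∈ Finset.Ioo 0 h, (c t : ℂ) * (1 + 1) := by
      rw [← e2]
      apply mul_left_cancel₀ hD0
      rw [← mul_assoc, mul_comm (D : ℂ) 2, mul_assoc, e1]
      simp
    have e4 : 2 * N1 = c 0 + c h + ∑ t ∈ Finset.Ioo 0 h, c t * (1 + 1) := by exact_mod_cast e3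
    rw [← Finset.sum_mul] at e4
    rw [Nat.even_iff]; omega
  have hxpar : ∀ i : ℕ, f (xa i) = if 2 ∣ i then f (xa 0) else f (xa 1) := by
    intro i
    have key : ∀ j i' : ℕ, f (xa ((2 * j + i' : ℕ) : ZMod (2 * m))) = f (xa (i' : ZMod (2 * m))) := by
      intro j i'
      rw [← hcl (xa ((2 * j + i' : ℕ) : ZMod (2 * m))) (a (j : ZMod (2 * m))), conj_axa]
      congr 2; push_cast; ring
    split_ifs with hd
    · obtain ⟨j, rfl⟩ := hd; simpa using key j 0
    · have := key (i / 2) 1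
      rw [show 2 * (i / 2) + 1 = i by omega] at this
      simpa using this
  set α := (f (xa 0) + f (xa 1)) / 2 with hα
  set β := (f (xa 0) - f (xa 1)) / 2 with hβ
  have hfx : ∀ i : ℕ, f (xa i) = if 2 ∣ i then α + β else α - β := by
    intro i; rw [hxpar]; split_ifs <;> (rw [hα, hβ]; ring)
  have hsum : ∀ g : ℕ → ℂ, ∑ i ∈ Finset.range (2 * m), g i = ∑ i ∈ Finset.range m, (g (2 * i) + g (2 * i + 1)) := by
    intro g
    clear * -
    induction m with
    | zero => simp
    | succ n ih => rw [show 2 * (n + 1) = 2 * n + 1 + 1 by ring, Finset.sum_range_succ, Finset.sum_range_succ, Finset.sum_range_succ, ih]; ring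
  have hlin : ∀ ε : ℂ, ε * ε = 1 → ∃ p : ℕ, (c 0 + ε * α : ℂ) = 2 * p := by
    intro ε hε
    obtain ⟨lam, l1, l2⟩ := lin_char (m := m) 1 ε hmev (by norm_num) hε
    obtain ⟨p, hp⟩ := lin_idem π e he hcomm lam
    refine ⟨p, ?_⟩
    simp only [← hf, l1, l2, one_pow, one_mul, mul_one] at hp
    have e1 := hc1 0
    simp only [mul_zero, pow_zero, one_mul] at e1
    rw [← e1, hsum] at hp
    have e2 : ∀ i : ℕ, ε * f (xa ((2 * i : ℕ))) + ε * f (xa ((2 * i + 1 : ℕ))) = 2 * ε * α := by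
      intro i; rw [hfx, hfx, if_pos (by omega), if_neg (by omega)]; ring
    simp only [e2] at hp
    rw [Finset.sum_const, Finset.card_range, nsmul_eq_mul] at hp
    push_cast at hp
    apply mul_left_cancel₀ (mul_ne_zero two_ne_zero hm0)
    linear_combination hp
  have hlin2 : c 0 = c h → ∀ ε : ℂ, ε * ε = 1 → ∃ p : ℕ, (c 0 + ε * β : ℂ) = 2 * p := by
    intro hch ε hε
    obtain ⟨lam, l1, l2⟩ := lin_char (m := m) (-1) ε hmev (by norm_num) hε
    obtain ⟨p, hp⟩ := lin_idem π e he hcomm lam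
    refine ⟨p, ?_⟩
    simp only [← hf, l1, l2] at hp
    have e1 := hc1 m
    have hζm : ζ ^ m = -1 := prim_half hmpos hζ
    have e0 : ∀ i, ζ⁻¹ ^ (i * m) = (-1) ^ i := by
      intro i; rw [mul_comm, pow_mul, inv_pow, hζm]; norm_num
    simp only [e0] at e1
    rw [← e1, hsum] at hp
    have e2 : ∀ i : ℕ, ε * (-1) ^ (2 * i) * f (xa ((2 * i : ℕ))) + ε * (-1) ^ (2 * i + 1) * f (xa ((2 * i + 1 : ℕ))) = 2 * ε * β := by
      intro i; rw [hfx, hfx, if_pos (by omega), if_neg (by omega), pow_succ, pow_mul]; norm_num; ring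
    simp only [e2] at hp
    rw [Finset.sum_const, Finset.card_range, nsmul_eq_mul] at hp
    push_cast at hp
    have e3 : c m = c 0 := by
      have e4 : (2 * h * (D * c m) : ℂ) = 2 * h * (D * c 0) := by
        rcases Nat.even_or_odd' D with ⟨D', hD' | hD'⟩
        · rw [hcF, hcF]
          refine Finset.sum_congr rfl fun i _ => ?_
          congr 1
          rw [show i * m = 2 * h * (i * D') by rw [← hDh, hD']; ring, pow_mul, inv_pow, hη1]
          simp
        · rw [hch, hcF, hcF]
          refine Finset.sum_congr rfl fun i _ => ?_
          congr 1
          rw [show i * m = 2 * h * (i * D') + i * h by rw [← hDh, hD']; ring, pow_add, pow_mul, inv_pow, hη1]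
          simp
      have e5 : (h : ℂ) ≠ 0 := by exact_mod_cast hhpos.ne'
      have e6 : (2 * h * D : ℂ) ≠ 0 := mul_ne_zero (mul_ne_zero two_ne_zero e5) hD0
      have e7 : (c m : ℂ) = c 0 := by
        apply mul_left_cancel₀ e6; linear_combination e4
      exact_mod_cast e7
    rw [e3] at hp
    apply mul_left_cancel₀ (mul_ne_zero two_ne_zero hm0)
    linear_combination hp
  refine ⟨c 0, c h, hpar, ?_, ?_, ?_⟩
  · have e1 := odd_sum' hhpos hη (fun t => (D * c t : ℂ))
    simp only [← hinv] at e1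
    simp only [F] at e1
    rw [e1]; ring
  · intro hch
    obtain ⟨p1, hp1⟩ := hlin 1 (by norm_num)
    obtain ⟨p2, hp2⟩ := hlin (-1) (by norm_num)
    obtain ⟨q1, hq1⟩ := hlin2 hch 1 (by norm_num)
    obtain ⟨q2, hq2⟩ := hlin2 hch (-1) (by norm_num)
    exact lemF3 D h hDh hev ζ hζ f c hsym hfa α β hfx hch p1 p2 q1 q2 (by rw [← hp1]; ring) (by rw [← hp2]; ring)
      (by rw [← hq1]; ring) (by rw [← hq2]; ring)
  · intro hx
    obtain ⟨p1, hp1⟩ := hlin 1 (by norm_num)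
    have hα0 : α = 0 := by rw [hα, hx, hx]; norm_num
    rw [hα0, mul_zero, add_zero] at hp1
    have hp1' : c 0 = 2 * p1 := by exact_mod_cast hp1
    have e0 : Even (c 0) := ⟨p1, by omega⟩
    exact lemF4 D h hDh ζ hζ f c hsym hfa (fun i => hx i) e0 ((Nat.even_add.mp hpar).mp e0)
end core
end

section
open QuaternionGroup in
lemma orderOf_a_two {k b j : ℕ} (hk : k = b + 1 + j) :
    orderOf (a ((2 ^ b : ℕ) : ZMod (2 * 2 ^ k)) : QuaternionGroup (2 ^ k)) = 2 ^ (j + 2) := by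
  rw [← a_one_pow, orderOf_pow_of_dvd (by positivity)]
  · rw [orderOf_a_one]
    apply Nat.div_eq_of_eq_mul_left (by positivity)
    rw [hk]; ring
  · rw [orderOf_a_one]
    exact ⟨2 ^ (j + 2), by rw [hk]; ring⟩

namespace Setup
open QuaternionGroup
variable {G : Type} [Group G] [Fintype G]

lemma dvd_aux {k b j i N : ℕ} (hk : k = b + 1 + j) (h : 2 ^ (k + 1) ∣ i * N) (hi : ¬ 2 ^ b ∣ i) : 2 ^ (j + 3) ∣ N := by
  rcases Nat.eq_zero_or_pos N with rfl | hN
  · exact dvd_zero _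
  have hi0 : i ≠ 0 := by rintro rfl; exact hi (dvd_zero _)
  rw [Nat.prime_two.pow_dvd_iff_le_factorization (mul_ne_zero hi0 hN.ne'), Nat.factorization_mul hi0 hN.ne'] at h
  rw [Nat.prime_two.pow_dvd_iff_le_factorization hi0] at hi
  rw [Nat.prime_two.pow_dvd_iff_le_factorization hN.ne']
  simp only [Finsupp.add_apply] at h
  omega

lemma psi_two (s : Setup G) (p : QuaternionGroup (2 ^ s.k)) : s.ψ p ^ (2 ^ (s.k + 2)) = 1 := by
  rw [← map_pow, pow_succ, pow_mul, quat_exp s.hk, one_pow, map_one]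

lemma ord_dvd (s : Setup G) {b j : ℕ} (hk : s.k = b + 1 + j) (K : Subgroup G) (hKo : ∀ g ∈ K, g ^ s.o = 1)
    (hN : ∀ p, ∀ k ∈ K, s.ψ p * k * (s.ψ p)⁻¹ ∈ K) (i : ℕ) (hi : ¬ 2 ^ b ∣ i) (κ : G) (hκ : κ ∈ K) :
    2 ^ (j + 3) ∣ orderOf (s.ψ (a i) * κ) := by
  have h1 : ∀ t : ℕ, (s.ψ ((a i) ^ t))⁻¹ * (s.ψ (a i) * κ) ^ t ∈ K := by
    intro t
    induction t with
    | zero => simp [K.one_mem]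
    | succ t ih =>
      rw [pow_succ (s.ψ (a i) * κ)]
      have h2 : (s.ψ ((a i) ^ (t + 1)))⁻¹ * ((s.ψ (a i) * κ) ^ t * (s.ψ (a i) * κ)) =
          (s.ψ (a i)⁻¹ * ((s.ψ ((a i) ^ t))⁻¹ * (s.ψ (a i) * κ) ^ t) * (s.ψ (a i)⁻¹)⁻¹) * κ := by
        rw [pow_succ, map_mul, map_inv]; group
      rw [h2]
      exact K.mul_mem (hN _ _ ih) hκ
  have h2 := h1 (orderOf (s.ψ (a i) * κ))
  rw [pow_orderOf_eq_one, mul_one] at h2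
  have h3 := K.inv_mem h2
  rw [inv_inv] at h3
  have h4 := s.odd_two (hKo _ h3) (s.psi_two _)
  have h5 : (a (i : ZMod (2 * 2 ^ s.k)) : QuaternionGroup (2 ^ s.k)) ^ orderOf (s.ψ (a i) * κ) = 1 :=
    s.ψinj (by rw [h4, map_one])
  rw [← a_one_pow, ← pow_mul, ← orderOf_dvd_iff_pow_eq_one, orderOf_a_one, a_one_pow] at h5
  exact dvd_aux hk (by rw [pow_succ']; exact h5) hi

lemma exists_KN (s : Setup G) {b j : ℕ} (hk : s.k = b + 1 + j) (u : G) (hu : u = s.ψ (a ((2 ^ b : ℕ)))) :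
    orderOf u = 2 ^ (j + 2) ∧ ∃ (K : Subgroup G) (q : ℕ), (∀ g, g ∈ K ↔ g * u = u * g ∧ g ^ s.o = 1) ∧
      Nat.card (Subgroup.centralizer {u}) = Nat.card K * 2 ^ q ∧ q ≤ s.k + 1 ∧ Odd (Nat.card K) ∧
      ∀ p, ∀ k ∈ K, s.ψ p * k * (s.ψ p)⁻¹ ∈ K := by
  have hou : orderOf u = 2 ^ (j + 2) := by
    rw [hu, orderOf_injective s.ψ s.ψinj, orderOf_a_two hk]
  obtain ⟨K, q, h1, h2, h3, _, h4⟩ := s.exists_K (by omega) hou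
  refine ⟨hou, K, q, h1, h2, h3, h4, ?_⟩
  intro p κ hκ
  have hκ' := (h1 κ).mp hκ
  rw [h1]
  constructor
  · rw [hu] at hκ' ⊢
    rcases p with i | i
    · have e := conj_aa ((2 ^ b : ℕ) : ZMod (2 * 2 ^ s.k)) i
      have e' := congrArg s.ψ e
      simp only [map_mul, map_inv] at e'
      set U := s.ψ (a ((2 ^ b : ℕ) : ZMod (2 * 2 ^ s.k)))
      set p := s.ψ (a i)
      calc p * κ * p⁻¹ * U = p * κ * p⁻¹ * (p * U * p⁻¹) := by rw [e']
        _ = p * (κ * U) * p⁻¹ := by group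
        _ = (p * U * p⁻¹) * (p * κ * p⁻¹) := by rw [hκ'.1]; group
        _ = _ := by rw [e']
    · have e := conj_xaa ((2 ^ b : ℕ) : ZMod (2 * 2 ^ s.k)) i
      rw [← qa_inv] at e
      have e' := congrArg s.ψ e
      simp only [map_mul, map_inv] at e'
      set U := s.ψ (a ((2 ^ b : ℕ) : ZMod (2 * 2 ^ s.k)))
      set p := s.ψ (xa i)
      have e'' : p * U⁻¹ * p⁻¹ = U := by
        have := congrArg (·⁻¹) e'
        simp only [mul_inv_rev, inv_inv] at this
        rw [mul_assoc]; exact this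
      have hc : κ * U⁻¹ = U⁻¹ * κ := by
        rw [eq_inv_mul_iff_mul_eq, ← mul_assoc, ← hκ'.1, mul_inv_cancel_right]
      calc p * κ * p⁻¹ * U = p * κ * p⁻¹ * (p * U⁻¹ * p⁻¹) := by rw [e'']
        _ = p * (κ * U⁻¹) * p⁻¹ := by group
        _ = (p * U⁻¹ * p⁻¹) * (p * κ * p⁻¹) := by rw [hc]; group
        _ = _ := by rw [e'']
  · rw [conj_pow, hκ'.2]; simp

variable {V : Type} [AddCommGroup V] [Module ℂ V] [FiniteDimensional ℂ V]

lemma trace_eO (ρ : Representation ℂ G V) {K : Subgroup G} (O : Finset (IrrT K)) (g : G) :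
    LinearMap.trace ℂ V (ρ g * eO (ρ.comp K.subtype) O) = ∑ κ : K, ecO O κ * tchar ρ (g * κ) := by
  rw [eO_eq, Finset.mul_sum, map_sum]
  refine Finset.sum_congr rfl fun κ _ => ?_
  rw [mul_smul_comm, map_smul, smul_eq_mul]
  congr 1
  change LinearMap.trace ℂ V (ρ g * ρ (κ : G)) = _
  rw [← map_mul ρ]; rfl

lemma orb_div (s : Setup G) (ρ : Representation ℂ G V) (hρ : SchurIrr ρ) {c : ℕ} (ha : 2 ^ c ∣ Module.finrank ℂ V)
    {K : Subgroup G} (hKodd : Odd (Nat.card K)) (hN : ∀ p, ∀ k ∈ K, s.ψ p * k * (s.ψ p)⁻¹ ∈ K)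
    (O : Finset (IrrT K)) (hO : StableO hN O) :
    ∃ N : ℕ, LinearMap.trace ℂ V (eO (ρ.comp K.subtype) O) = 2 ^ c * N := by
  obtain ⟨N0, hN0⟩ := trace_idem_nat _ (eO_idem (ρ.comp K.subtype) O)
  have h1 : Nat.card s.ψ.range = 2 ^ (s.k + 2) * 1 := by
    rw [Nat.card_congr (MonoidHom.ofInjective s.ψinj).toEquiv.symm, Nat.card_eq_fintype_card, QuaternionGroup.card]; ring
  obtain ⟨w, hw, hidx⟩ := s.index_of_card s.ψ.range h1 odd_one le_rfl
  have h2 := lemmaI' ρ hρ s.ψ.range (fun g => if hg : g ∈ K then ecO O ⟨g, hg⟩ else 0) (by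
    intro g
    beta_reduce
    split_ifs with hg
    · refine RR.sum_mem fun φ _ => RR.mul_mem (RR.mul_mem ?_ (RR_of_int (irr_int _ _))) (RR_of_int (irr_int _ _))
      rw [← Nat.card_eq_fintype_card]
      exact RR_oddinv hKodd
    · exact RR.zero_mem) (by
    rintro _ ⟨p, rfl⟩ g
    beta_reduce
    by_cases hg : g ∈ K
    · rw [dif_pos hg, dif_pos (hN p g hg)]
      exact ecO_cj hN hO p ⟨g, hg⟩
    · rw [dif_neg hg, dif_neg]
      intro h
      have := hN p⁻¹ _ h
      apply hg
      convert this using 1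
      rw [map_inv]; group) ha hidx hw
  have h3 : ∑ g, (if hg : g ∈ K then ecO O ⟨g, hg⟩ else 0) * tchar ρ g = N0 := by
    rw [← hN0]
    have := trace_eO ρ O 1
    rw [map_one, one_mul] at this
    rw [this]
    simp only [one_mul]
    rw [← Finset.sum_subset (Finset.subset_univ (Finset.univ.filter fun g => g ∈ K))]
    · refine Finset.sum_bij' (fun g hg => (⟨g, (Finset.mem_filter.mp hg).2⟩ : K)) (fun κ _ => (κ : G)) ?_ ?_ ?_ ?_ ?_
      · intro g _; exact Finset.mem_univ _
      · intro κ _; simp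
      · intro g _; rfl
      · intro κ _; rfl
      · intro g hg
        rw [dif_pos (Finset.mem_filter.mp hg).2]
    · intro g _ hg
      rw [dif_neg (fun h => hg (by simp [h])), zero_mul]
  rw [h3] at h2
  simp only [Nat.sub_self, pow_zero, mul_one] at h2
  obtain ⟨N, rfl⟩ := RR_div_nat h2
  exact ⟨N, by rw [hN0]; push_cast; rfl⟩

lemma orb_free (s : Setup G) (ρ : Representation ℂ G V)
    {K : Subgroup G} (hN : ∀ p, ∀ k ∈ K, s.ψ p * k * (s.ψ p)⁻¹ ∈ K)
    (O : Finset (IrrT K)) (p : QuaternionGroup (2 ^ s.k)) (hp : ∀ φ ∈ O, tw hN p φ ≠ φ) :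
    LinearMap.trace ℂ V (ρ (s.ψ p) * eO (ρ.comp K.subtype) O) = 0 := by
  rw [eO, Finset.mul_sum, map_sum]
  refine Finset.sum_eq_zero fun φ hφ => ?_
  have h1 := eop_mul (ρ.comp K.subtype) φ φ
  rw [if_pos rfl] at h1
  rw [← h1, ← mul_assoc, eop_conj hN, mul_assoc, LinearMap.trace_mul_comm, mul_assoc, eop_mul,
    if_neg (fun h => hp φ hφ h.symm), mul_zero, map_zero]

lemma orb_card (s : Setup G) {b j : ℕ} (hk : s.k = b + 1 + j)
    {K : Subgroup G} (hKu : ∀ g ∈ K, g * s.ψ (a ((2 ^ b : ℕ))) = s.ψ (a ((2 ^ b : ℕ))) * g)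
    (hN : ∀ p, ∀ k ∈ K, s.ψ p * k * (s.ψ p)⁻¹ ∈ K)
    (O : Finset (IrrT K)) (φ0 : IrrT K) (htr : ∀ φ ∈ O, ∃ p, φ = tw hN p φ0) (i : ZMod (2 * 2 ^ s.k))
    (φ : IrrT K) (hφ : φ ∈ O) (hfix : tw hN (xa i) φ = φ) : O.card ≤ 2 ^ b := by
  have h1 : O ⊆ (Finset.range (2 ^ b)).image fun t : ℕ => tw hN (a t) φ := by
    intro φ' hφ'
    obtain ⟨p, hp⟩ := htr φ hφ
    obtain ⟨p', hp'⟩ := htr φ' hφ'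
    have h2 : φ' = tw hN (p' * p⁻¹) φ := by
      rw [hp, ← tw_mul, inv_mul_cancel_right, hp']
    have h3 : ∃ l : ZMod (2 * 2 ^ s.k), φ' = tw hN (a l) φ := by
      rcases hpp : p' * p⁻¹ with l | l
      · exact ⟨l, by rw [h2, hpp]⟩
      · refine ⟨i - l, ?_⟩
        rw [h2, hpp]
        conv_rhs => rw [← hfix]
        rw [← tw_mul, a_mul_xa]
        congr 2; ring
    obtain ⟨l, hl⟩ := h3
    refine Finset.mem_image.mpr ⟨l.val % 2 ^ b, Finset.mem_range.mpr (Nat.mod_lt _ (by positivity)), ?_⟩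
    rw [hl]
    have h4 : (a l : QuaternionGroup (2 ^ s.k)) = a ((l.val % 2 ^ b : ℕ)) * a ((2 ^ b : ℕ)) ^ (l.val / 2 ^ b) := by
      conv_lhs => rw [← ZMod.natCast_zmod_val l, ← Nat.mod_add_div l.val (2 ^ b)]
      rw [← a_one_pow, pow_add, pow_mul, a_one_pow, a_one_pow]
    rw [h4, tw_mul]
    congr 1
    symm
    apply tw_triv
    intro κ hκ
    rw [map_pow]
    exact (Commute.pow_right (hKu κ hκ) _)
  calc O.card ≤ _ := Finset.card_le_card h1
    _ ≤ _ := Finset.card_image_le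
    _ = _ := Finset.card_range _
end Setup
end

section
namespace Setup
open QuaternionGroup
variable {G : Type} [Group G] [Fintype G]
variable {V : Type} [AddCommGroup V] [Module ℂ V] [FiniteDimensional ℂ V]

lemma T_div (ρ : Representation ℂ G V) {u : G} {h : ℕ} (hh : 0 < h) (hou : orderOf u = 2 * h) {K : Subgroup G}
    (hKu : ∀ g ∈ K, g * u = u * g) (O : Finset (IrrT K)) (d : ℕ) (hd : ∀ φ ∈ O, φ.1 1 = d) :
    ∃ Z : ℤ, ∑ i ∈ (Finset.range (2 * h)).filter Odd, LinearMap.trace ℂ V (ρ (u ^ i) * eO (ρ.comp K.subtype) O) =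
      d * h * Z := by
  let ζ : ℂ := Complex.exp (2 * Real.pi * Complex.I / ((2 * h : ℕ) : ℂ))
  have hζ : IsPrimitiveRoot ζ (2 * h) := Complex.isPrimitiveRoot_exp _ (by omega)
  have key : ∀ φ ∈ O, ∃ Z : ℤ, ∑ i ∈ (Finset.range (2 * h)).filter Odd,
      LinearMap.trace ℂ V (ρ (u ^ i) * eop (ρ.comp K.subtype) φ) = d * h * Z := by
    intro φ hφ
    obtain ⟨U, hU, e⟩ := irrchar_exists φ.2
    obtain ⟨N, _, hN⟩ := spectral_hom U.ρ (ρ.comp K.subtype : Representation ℂ K V) 1 (ρ u) (fun g => by rw [one_mul, mul_one])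
      (fun g => by
        change ρ u * ρ (g : G) = ρ (g : G) * ρ u
        rw [← map_mul, ← map_mul, hKu g g.2]) (2 * h) (by omega) (one_pow _)
      (by rw [← map_pow, ← hou, pow_orderOf_eq_one, map_one]) ζ hζ
    refine ⟨N 0 - N h, ?_⟩
    have h1 := odd_sum' hh hζ (fun t => (N t : ℂ))
    simp only [← hN] at h1
    push_cast
    rw [mul_assoc, ← h1, Finset.mul_sum]
    refine Finset.sum_congr rfl fun i _ => ?_
    rw [eop, Finset.mul_sum, map_sum, Finset.mul_sum, Finset.mul_sum]
    refine Finset.sum_congr rfl fun κ _ => ?_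
    rw [mul_smul_comm, map_smul, smul_eq_mul, ecoef, hd φ hφ, one_pow, one_mul, map_pow]
    have h2 : LinearMap.trace ℂ U (U.ρ κ⁻¹) = φ.1 κ⁻¹ := by rw [e]; rfl
    rw [h2]
    ring
  choose! Z hZ using key
  refine ⟨∑ φ ∈ O, Z φ, ?_⟩
  simp only [eO, Finset.mul_sum, map_sum]
  rw [Finset.sum_comm]
  push_cast
  rw [Finset.mul_sum]
  exact Finset.sum_congr rfl hZ

lemma T_bound (s : Setup G) (ρ : Representation ℂ G V) (hρ : SchurIrr ρ) {u : G} {r h : ℕ} (hr : 1 ≤ r) (hh : 2 ^ r = 2 * h)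
    (hou : orderOf u = 2 ^ r) {K : Subgroup G}
    (hKu : ∀ g ∈ K, g * u = u * g ∧ g ^ s.o = 1) (O : Finset (IrrT K)) (hO : O.Nonempty) (d : ℕ) (hd0 : d ≠ 0)
    (hd : ∀ φ ∈ O, φ.1 1 = d) :
    ‖∑ i ∈ (Finset.range (2 * h)).filter Odd, LinearMap.trace ℂ V (ρ (u ^ i) * eO (ρ.comp K.subtype) O)‖ ^ 2 <
      (h * (O.card * d ^ 2 / Nat.card K)) * (2 * Nat.card (Subgroup.centralizer {u})) := by
  have hb := s.L2bound ρ hρ hr hou K hKu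
  rw [hh] at hb
  set S := (Finset.range (2 * h)).filter Odd with hS
  have hcard : S.card = h := by
    have := sum_odd h (fun _ => 1)
    simp only [Finset.sum_const, nsmul_eq_mul, mul_one, Finset.card_range] at this
    exact_mod_cast this
  have hhpos : 0 < h := by
    have : 0 < 2 ^ r := by positivity
    omega
  have h1 : ‖∑ i ∈ S, LinearMap.trace ℂ V (ρ (u ^ i) * eO (ρ.comp K.subtype) O)‖ ≤
      ∑ x ∈ S ×ˢ (Finset.univ : Finset K), ‖ecO O x.2‖ * ‖tchar ρ (u ^ x.1 * x.2)‖ := by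
    rw [Finset.sum_product]
    refine (norm_sum_le _ _).trans (Finset.sum_le_sum fun i _ => ?_)
    rw [trace_eO]
    refine (norm_sum_le _ _).trans (Finset.sum_le_sum fun κ _ => ?_)
    rw [norm_mul]
  have h2 := Finset.sum_mul_sq_le_sq_mul_sq (S ×ˢ (Finset.univ : Finset K)) (fun x => ‖ecO O x.2‖)
    (fun x => ‖tchar ρ (u ^ x.1 * x.2)‖)
  have h3 : ∑ x ∈ S ×ˢ (Finset.univ : Finset K), ‖ecO O x.2‖ ^ 2 = h * (O.card * d ^ 2 / Nat.card K) := by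
    rw [Finset.sum_product]
    simp only [ecO_norm O d hd]
    rw [Finset.sum_const, hcard, nsmul_eq_mul, Nat.card_eq_fintype_card]
  have h4 : ∑ x ∈ S ×ˢ (Finset.univ : Finset K), ‖tchar ρ (u ^ x.1 * x.2)‖ ^ 2 < 2 * Nat.card (Subgroup.centralizer {u}) := by
    rw [Finset.sum_product]; exact hb
  have h5 : (0 : ℝ) < h * (O.card * d ^ 2 / Nat.card K) := by
    have := hO.card_pos
    have := Nat.card_pos (α := K)
    have := Nat.pos_of_ne_zero hd0
    positivity
  calc _ ≤ (∑ x ∈ S ×ˢ (Finset.univ : Finset K), ‖ecO O x.2‖ * ‖tchar ρ (u ^ x.1 * x.2)‖) ^ 2 :=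
        pow_le_pow_left₀ (norm_nonneg _) h1 2
    _ ≤ _ := h2
    _ < _ := by rw [h3]; exact mul_lt_mul_of_pos_left h4 h5

lemma orbit_cone (s : Setup G) (ρ : Representation ℂ G V) (hρ : SchurIrr ρ) {b j : ℕ} (hk : s.k = b + 1 + j)
    (ha : 2 ^ (b + 1) ∣ Module.finrank ℂ V) (u : G) (hu : u = s.ψ (a ((2 ^ b : ℕ)))) (hou : orderOf u = 2 ^ (j + 2))
    (K : Subgroup G) (q : ℕ) (hK : ∀ g, g ∈ K ↔ g * u = u * g ∧ g ^ s.o = 1)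
    (hC : Nat.card (Subgroup.centralizer {u}) = Nat.card K * 2 ^ q) (hq : q ≤ s.k + 1) (hKodd : Odd (Nat.card K))
    (hN : ∀ p, ∀ k ∈ K, s.ψ p * k * (s.ψ p)⁻¹ ∈ K)
    (O : Finset (IrrT K)) (hO : StableO hN O) (φ0 : IrrT K) (hφ0 : φ0 ∈ O) (htr : ∀ φ ∈ O, ∃ p, φ = tw hN p φ0) :
    (fun p => LinearMap.trace ℂ V (ρ (s.ψ p) * eO (ρ.comp K.subtype) O)) ∈ Cone (QuaternionGroup (2 ^ s.k)) (2 ^ (b + 1)) := by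
  obtain ⟨d, hd, hd0⟩ := irr_deg φ0
  have hdodd : Odd d := irr_deg_odd (by rw [← Nat.card_eq_fintype_card]; exact hKodd) φ0 hd
  have hdO : ∀ φ ∈ O, φ.1 1 = d := by
    intro φ hφ
    obtain ⟨p, rfl⟩ := htr φ hφ
    rw [tw_deg, hd]
  obtain ⟨N1, hN1⟩ := s.orb_div ρ hρ ha hKodd hN O hO
  have hDh : 2 ^ b * 2 ^ (j + 1) = 2 ^ s.k := by rw [hk]; ring
  obtain ⟨c0, ch, hev, hT, hcase1, hcase2⟩ := orbCore (2 ^ b) (2 ^ (j + 1)) hDh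
    (by rw [pow_succ]; exact even_two.mul_left _)
    (ρ.comp s.ψ : Representation ℂ (QuaternionGroup (2 ^ s.k)) V) (eO (ρ.comp K.subtype) O) (eO_idem _ _)
    (fun p => eO_comm hN ρ hO p) (fun p => LinearMap.trace ℂ V (ρ (s.ψ p) * eO (ρ.comp K.subtype) O)) (fun p => rfl)
    (by
      intro i hi
      rw [trace_eO]
      refine Finset.sum_eq_zero fun κ _ => ?_
      rw [s.L4' ρ hρ (by omega : 2 ≤ j + 3) (s.ord_dvd hk K (fun g hg => ((hK g).mp hg).2) hN i hi κ κ.2) ha (by omega),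
        mul_zero]) N1 (by
      beta_reduce
      rw [map_one, map_one, one_mul, hN1]; push_cast; ring)
  rw [pow_succ']
  by_cases hfix : ∃ i, ∃ φ ∈ O, tw hN (xa i) φ = φ
  · apply hcase1
    obtain ⟨i, φ, hφ, hfix⟩ := hfix
    have hcard := s.orb_card hk (fun g hg => by rw [← hu]; exact ((hK g).mp hg).1) hN O φ0 htr i φ hφ hfix
    have hTu : ∀ i : ℕ, s.ψ (a ((2 ^ b * i : ℕ))) = u ^ i := by
      intro i; rw [hu, ← map_pow, ← a_one_pow, pow_mul, a_one_pow]
    simp only [hTu] at hT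
    obtain ⟨Z, hZ⟩ := T_div ρ (h := 2 ^ (j + 1)) (by positivity) (by rw [hou]; ring) (fun g hg => ((hK g).mp hg).1) O d hdO
    have hB := s.T_bound ρ hρ (r := j + 2) (h := 2 ^ (j + 1)) (by omega) (by ring) hou (fun g hg => (hK g).mp hg) O ⟨φ0, hφ0⟩ d hd0 hdO
    rw [hT] at hB hZ
    set c : ℤ := (c0 : ℤ) - ch with hc
    have hcC : (c0 : ℂ) - ch = ((c : ℤ) : ℂ) := by rw [hc]; push_cast; rfl
    rw [hcC] at hB hZ
    have e1 : (2 ^ b : ℤ) * c = d * Z := by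
      have : (2 ^ b : ℂ) * c = d * Z := by
        have h0 : (2 ^ (j + 1) : ℂ) ≠ 0 := pow_ne_zero _ two_ne_zero
        apply mul_left_cancel₀ h0
        push_cast at hZ
        linear_combination hZ
      exact_mod_cast this
    have e2 : (d : ℤ) ∣ c := by
      have hcop : IsCoprime (d : ℤ) (2 ^ b) := by
        apply IsCoprime.pow_right
        rw [Int.isCoprime_iff_gcd_eq_one]
        have := Nat.coprime_two_right.mpr hdodd
        exact_mod_cast this
      exact hcop.dvd_of_dvd_mul_left ⟨Z, e1⟩
    have e3 : (2 : ℤ) ∣ c := by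
      obtain ⟨x, hx⟩ := hev; omega
    have e4 : (2 * d : ℤ) ∣ c := by
      apply IsCoprime.mul_dvd _ e3 e2
      rw [Int.isCoprime_iff_gcd_eq_one]
      have := Nat.coprime_two_left.mpr hdodd
      exact_mod_cast this
    have e5 : (c : ℝ) ^ 2 < (2 * d) ^ 2 := by
      rw [hC] at hB
      have hKpos : (0 : ℝ) < Nat.card K := by exact_mod_cast Nat.card_pos
      have hn : ‖((2 ^ b : ℕ) : ℂ) * ((2 ^ (j + 1) : ℕ) : ℂ) * (c : ℂ)‖ ^ 2 = (2 ^ b * 2 ^ (j + 1)) ^ 2 * (c : ℝ) ^ 2 := by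
        rw [norm_mul, norm_mul, Complex.norm_natCast, Complex.norm_natCast, Complex.norm_intCast, mul_pow, sq_abs]
        push_cast; rfl
      rw [hn] at hB
      have hr : ((2 ^ (j + 1) : ℕ) * (O.card * d ^ 2 / Nat.card K) : ℝ) * (2 * (Nat.card K * 2 ^ q : ℕ)) =
          2 ^ (j + 1) * O.card * d ^ 2 * 2 * 2 ^ q := by
        push_cast; field_simp
      rw [hr] at hB
      have h6 : (O.card : ℝ) ≤ 2 ^ b := by exact_mod_cast hcard
      have h7 : (2 : ℝ) ^ q ≤ 2 * (2 ^ b * 2 ^ (j + 1)) := by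
        calc (2 : ℝ) ^ q ≤ 2 ^ (s.k + 1) := pow_le_pow_right₀ (by norm_num) hq
          _ = _ := by rw [hk]; ring
      have h8 : (2 ^ (j + 1) * O.card * d ^ 2 * 2 * 2 ^ q : ℝ) ≤ 2 ^ (j + 1) * 2 ^ b * d ^ 2 * 2 * (2 * (2 ^ b * 2 ^ (j + 1))) := by
        gcongr
      have h9 := hB.trans_le h8
      have h10 : (0 : ℝ) < (2 ^ b * 2 ^ (j + 1)) ^ 2 := by positivity
      apply lt_of_mul_lt_mul_left _ h10.le
      calc _ < _ := h9
        _ = _ := by ring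
    have e6 : |c| < |(2 * d : ℤ)| := by
      have : c ^ 2 < (2 * d : ℤ) ^ 2 := by exact_mod_cast e5
      exact sq_lt_sq.mp this
    have e7 := Int.eq_zero_of_abs_lt_dvd e4 (by rwa [abs_of_nonneg (by positivity : (0 : ℤ) ≤ 2 * d)] at e6)
    omega
  · apply hcase2
    intro i
    apply s.orb_free ρ hN O (xa i)
    intro φ hφ h
    exact hfix ⟨i, φ, hφ, h⟩

lemma mid_cone (s : Setup G) (ρ : Representation ℂ G V) (hρ : SchurIrr ρ) {b j : ℕ} (hk : s.k = b + 1 + j)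
    (ha : 2 ^ (b + 1) ∣ Module.finrank ℂ V) :
    (fun p => tchar ρ (s.ψ p)) ∈ Cone (QuaternionGroup (2 ^ s.k)) (2 ^ (b + 1)) := by
  obtain ⟨hou, K, q, hK, hC, hq, hKodd, hN⟩ := s.exists_KN hk _ rfl
  obtain ⟨𝒪, h1, h2⟩ := orbit_decomp hN
  have h3 : (fun p => tchar ρ (s.ψ p)) = ∑ O ∈ 𝒪, (fun p => LinearMap.trace ℂ V (ρ (s.ψ p) * eO (ρ.comp K.subtype) O)) := by
    funext p
    rw [Finset.sum_apply, ← map_sum, ← Finset.mul_sum]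
    have := h2 (fun φ => eop (ρ.comp K.subtype) φ)
    rw [eop_sum] at this
    simp only [eO]
    rw [← this, mul_one]; rfl
  rw [h3]
  refine AddSubmonoid.sum_mem _ fun O hO => ?_
  obtain ⟨hst, φ0, hφ0, htr⟩ := h1 O hO
  exact s.orbit_cone ρ hρ hk ha _ rfl hou K q hK hC hq hKodd hN O hst φ0 hφ0 htr
end Setup
end

section
lemma cone_top {P : Type} [Group P] [Fintype P] {V : Type} [AddCommGroup V] [Module ℂ V] [FiniteDimensional ℂ V]
    (ρ : Representation ℂ P V) : tchar ρ ∈ Cone P 1 := by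
  have h := char_mem_closure _ ρ rfl
  refine AddSubmonoid.closure_mono (fun φ hφ => ?_) h
  refine ⟨⊤, fun x => φ x.1, irrchar_comp hφ (⊤ : Subgroup P).subtype (fun x => ⟨⟨x, trivial⟩, rfl⟩), Subgroup.index_top.symm, ?_⟩
  obtain ⟨W, _, rfl⟩ := irrchar_exists hφ
  funext g
  have hc : (Fintype.card (⊤ : Subgroup P) : ℂ) = Fintype.card P := by
    congr 1
    rw [← Nat.card_eq_fintype_card, ← Nat.card_eq_fintype_card, Subgroup.card_top]
  rw [inducedChar, hc]
  simp only [Subgroup.mem_top, dite_true, tchar_conj, Finset.sum_const, Finset.card_univ, nsmul_eq_mul]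
  rw [inv_mul_cancel_left₀]
  exact_mod_cast Fintype.card_ne_zero

namespace Setup
open QuaternionGroup
variable {G : Type} [Group G] [Fintype G]
variable {V : Type} [AddCommGroup V] [Module ℂ V] [FiniteDimensional ℂ V]

lemma a_le (s : Setup G) (ρ : Representation ℂ G V) (hρ : SchurIrr ρ) {c : ℕ} (hc : 2 ^ c ∣ Module.finrank ℂ V) :
    c ≤ s.k + 2 := by
  have h1 := card_div_deg ρ hρ
  have h0 := tchar_one_ne ρ hρ
  rw [tchar_one] at h0
  obtain ⟨w, hw⟩ := hc
  have h2 := RR.mul_mem (RR_of_int (nat_integral w)) h1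
  have h3 : (Fintype.card G : ℂ) / 2 ^ c ∈ RR := by
    convert h2 using 1
    rw [hw] at h0 ⊢
    push_cast at h0 ⊢
    have := right_ne_zero_of_mul h0
    field_simp
  have h4 := RR_div_nat h3
  rw [s.card] at h4
  have h5 : (2 ^ c).Coprime s.o := Nat.Coprime.pow_left _ (Nat.coprime_two_left.mpr s.ho)
  exact (Nat.pow_dvd_pow_iff_le_right (by norm_num)).mp (h5.dvd_of_dvd_mul_right h4)

lemma top_zero (s : Setup G) (ρ : Representation ℂ G V) (hρ : SchurIrr ρ) (ha : 2 ^ (s.k + 1) ∣ Module.finrank ℂ V) :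
    (∀ i : ℕ, ¬ 2 ^ s.k ∣ i → tchar ρ (s.ψ (a i)) = 0) ∧ ∀ i, tchar ρ (s.ψ (xa i)) = 0 := by
  constructor
  · intro i hi
    refine s.L4' ρ hρ le_rfl ?_ ha (by omega)
    rw [orderOf_injective s.ψ s.ψinj]
    have h5 := pow_orderOf_eq_one (a (i : ZMod (2 * 2 ^ s.k)) : QuaternionGroup (2 ^ s.k))
    set N := orderOf (a (i : ZMod (2 * 2 ^ s.k)) : QuaternionGroup (2 ^ s.k))
    rw [← a_one_pow, ← pow_mul, ← orderOf_dvd_iff_pow_eq_one, orderOf_a_one] at h5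
    have hN : 0 < N := orderOf_pos _
    have hi0 : i ≠ 0 := by rintro rfl; exact hi (dvd_zero _)
    rw [← pow_succ', Nat.prime_two.pow_dvd_iff_le_factorization (mul_ne_zero hi0 hN.ne'), Nat.factorization_mul hi0 hN.ne'] at h5
    rw [Nat.prime_two.pow_dvd_iff_le_factorization hi0] at hi
    rw [Nat.prime_two.pow_dvd_iff_le_factorization hN.ne']
    simp only [Finsupp.add_apply] at h5
    omega
  · intro i
    refine s.L4' ρ hρ le_rfl ?_ ha (by omega)
    rw [orderOf_injective s.ψ s.ψinj, orderOf_xa]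
    norm_num

lemma a_mul_k {k : ℕ} (i : ℕ) : (a ((2 ^ k * i : ℕ) : ZMod (2 * 2 ^ k)) : QuaternionGroup (2 ^ k)) =
    a ((2 ^ k : ℕ)) ^ i := by
  rw [← a_one_pow, pow_mul, a_one_pow]

lemma zz {k : ℕ} : (a ((2 ^ k : ℕ) : ZMod (2 * 2 ^ k)) : QuaternionGroup (2 ^ k)) * a ((2 ^ k : ℕ)) = 1 := by
  rw [a_mul_a, ← a_zero]
  congr 1
  rw [← Nat.cast_add, ← two_mul, ZMod.natCast_self]

lemma z_ne {k : ℕ} : (a ((2 ^ k : ℕ) : ZMod (2 * 2 ^ k)) : QuaternionGroup (2 ^ k)) ≠ 1 := by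
  rw [← a_one_pow, ne_eq, ← orderOf_dvd_iff_pow_eq_one, orderOf_a_one]
  intro h
  have := Nat.le_of_dvd (by positivity) h
  have : 0 < 2 ^ k := by positivity
  omega

lemma full_cone (s : Setup G) (ρ : Representation ℂ G V) (hρ : SchurIrr ρ) (ha : 2 ^ (s.k + 2) ∣ Module.finrank ℂ V) :
    (fun p => tchar ρ (s.ψ p)) ∈ Cone (QuaternionGroup (2 ^ s.k)) (2 ^ (s.k + 2)) := by
  obtain ⟨h1, h2⟩ := s.top_zero ρ hρ ((pow_dvd_pow 2 (by omega)).trans ha)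
  obtain ⟨w, hw⟩ := ha
  obtain ⟨I, hI, hIa, hIx⟩ := cone_I (m := 2 ^ s.k) (2 * 2 ^ s.k) dvd_rfl 1 (one_pow _) 0
  have h3 : (fun p => tchar ρ (s.ψ p)) = w • I := by
    apply quat_ext
    · intro i
      simp only [Pi.smul_apply, hIa]
      split_ifs with hi
      · have : (i : ZMod (2 * 2 ^ s.k)) = 0 := (ZMod.natCast_eq_zero_iff _ _).mpr hi
        rw [this, a_zero, map_one, tchar_one, hw]
        simp only [mul_zero, pow_zero, nsmul_eq_mul]; push_cast; ring
      · rw [smul_zero]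
        by_cases hi2 : 2 ^ s.k ∣ i
        · obtain ⟨i, rfl⟩ := hi2
          rw [a_mul_k, map_pow]
          have hodd : Odd i := by
            rw [← Nat.not_even_iff_odd]; rintro ⟨x, rfl⟩; exact hi ⟨x, by ring⟩
          obtain ⟨x, rfl⟩ := hodd
          have e : s.ψ (a ((2 ^ s.k : ℕ))) * s.ψ (a ((2 ^ s.k : ℕ))) = 1 := by rw [← map_mul, zz, map_one]
          rw [pow_succ, pow_mul, pow_two, e, one_pow, one_mul]
          refine s.full_zero ρ hρ ⟨w, hw⟩ _ e ?_
          intro h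
          exact z_ne (s.ψinj (by rw [h, map_one]))
        · exact h1 i hi2
    · intro i
      simp only [Pi.smul_apply, hIx, smul_zero, h2]
  rw [h3, show 2 ^ (s.k + 2) = 2 * (2 * 2 ^ s.k) by ring]
  exact AddSubmonoid.nsmul_mem _ hI w

lemma pen_cone (s : Setup G) (ρ : Representation ℂ G V) (hρ : SchurIrr ρ) (ha : 2 ^ (s.k + 1) ∣ Module.finrank ℂ V) :
    (fun p => tchar ρ (s.ψ p)) ∈ Cone (QuaternionGroup (2 ^ s.k)) (2 ^ (s.k + 1)) := by
  obtain ⟨h1, h2⟩ := s.top_zero ρ hρ ha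
  obtain ⟨w, hw⟩ := ha
  let m := 2 ^ s.k
  have hm0 : (2 ^ s.k : ℂ) ≠ 0 := pow_ne_zero _ two_ne_zero
  let ζ : ℂ := Complex.exp (2 * Real.pi * Complex.I / ((2 * m : ℕ) : ℂ))
  have hζ : IsPrimitiveRoot ζ (2 * m) := Complex.isPrimitiveRoot_exp _ (by positivity)
  have hζm : ζ ^ (2 ^ s.k) = -1 := prim_half (by positivity) hζ
  set z := s.ψ (a ((2 ^ s.k : ℕ))) with hz
  have e : z * z = 1 := by rw [hz, ← map_mul, zz, map_one]
  have er : ρ z * ρ z = 1 := by rw [← map_mul, e, map_one]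
  obtain ⟨A, hA⟩ := trace_idem_nat ((2 : ℂ)⁻¹ • (1 + ρ z)) (by
    rw [smul_mul_smul_comm, add_mul, mul_add, mul_add, er, mul_one, one_mul, mul_one, add_comm (ρ z) 1, ← two_smul ℂ (1 + ρ z), smul_smul]
    norm_num)
  obtain ⟨B, hB⟩ := trace_idem_nat ((2 : ℂ)⁻¹ • (1 - ρ z)) (by
    rw [smul_mul_smul_comm, sub_mul, mul_sub, mul_sub, er, mul_one, one_mul, mul_one,
      show (1 - ρ z - (ρ z - 1)) = (2 : ℂ) • (1 - ρ z) by rw [two_smul]; abel, smul_smul]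
    norm_num)
  have hd : LinearMap.trace ℂ V 1 = (2 ^ (s.k + 1) * w : ℂ) := by
    have := tchar_one ρ
    rw [hw] at this
    simp only [tchar, map_one] at this
    rw [this]; push_cast; rfl
  rw [map_smul, map_add, smul_eq_mul, hd] at hA
  rw [map_smul, map_sub, smul_eq_mul, hd] at hB
  change (2 : ℂ)⁻¹ * (_ + tchar ρ z) = _ at hA
  change (2 : ℂ)⁻¹ * (_ - tchar ρ z) = _ at hB
  have hAB : A + B = 2 ^ (s.k + 1) * w := by
    have : (A + B : ℂ) = 2 ^ (s.k + 1) * w := by rw [← hA, ← hB]; ring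
    exact_mod_cast this
  have hAz : (A - B : ℂ) = tchar ρ z := by rw [← hA, ← hB]; ring
  obtain ⟨N, hN⟩ := lin_idem (ρ.comp s.ψ : Representation ℂ (QuaternionGroup (2 ^ s.k)) V) 1 (one_mul 1)
    (fun p => by rw [one_mul, mul_one]) 1
  simp only [MonoidHom.one_apply, one_mul, mul_one] at hN
  change ∑ i ∈ Finset.range (2 * 2 ^ s.k), tchar ρ (s.ψ (a i)) + ∑ i ∈ Finset.range (2 * 2 ^ s.k), tchar ρ (s.ψ (xa i)) = _ at hN
  simp only [h2, Finset.sum_const_zero, add_zero] at hN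
  have hpos : 0 < 2 ^ s.k := by positivity
  rw [Finset.sum_eq_add_of_mem 0 (2 ^ s.k) (by simp) (by simp) hpos.ne (by
    intro i hi hne
    apply h1
    rintro ⟨x, rfl⟩
    have hx : x < 2 := by
      have := Finset.mem_range.mp hi
      rw [mul_comm 2] at this
      exact lt_of_mul_lt_mul_left this hpos.le
    interval_cases x <;> simp at hne)] at hN
  rw [← hz, Nat.cast_zero, a_zero, map_one, tchar_one, hw, ← hAz, ← hAB] at hN
  have hA2 : A = 2 ^ s.k * (2 * N) := by
    have : (A : ℂ) = (2 ^ s.k * (2 * N) : ℕ) := by push_cast at hN ⊢; linear_combination hN / 2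
    exact_mod_cast this
  have hB2 : ∃ N', B = 2 ^ s.k * (2 * N') := by
    have : 2 ^ (s.k + 1) ∣ B := by
      have hdA : 2 ^ (s.k + 1) ∣ A := ⟨N, by rw [hA2]; ring⟩
      rw [← Nat.dvd_add_right hdA, hAB]; exact ⟨w, rfl⟩
    obtain ⟨N', h⟩ := this
    exact ⟨N', by rw [h]; ring⟩
  obtain ⟨N', hN'⟩ := hB2
  rw [pow_succ']
  refine lemF4 (2 ^ s.k) 1 (mul_one _) ζ hζ _ (fun t => if t = 0 then 2 * N else 2 * N') ?_ ?_ ?_ ?_ ?_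
  · intro t h1 h2
    obtain rfl : t = 1 := by omega
    rfl
  · intro i
    split_ifs with hi
    · obtain ⟨i, rfl⟩ := hi
      beta_reduce
      rw [a_mul_k, map_pow, ← hz, Finset.sum_range_succ, Finset.sum_range_one, mul_one (2 ^ s.k * i), pow_mul ζ (2 ^ s.k) i, hζm]
      rcases Nat.even_or_odd' i with ⟨x, rfl | rfl⟩
      · rw [pow_mul, pow_two, e, one_pow, tchar_one, hw, ← hAB, hA2, hN', pow_mul (-1 : ℂ)]
        push_cast; simp; ring
      · rw [pow_succ, pow_mul, pow_two, e, one_pow, one_mul, ← hAz, hA2, hN', pow_succ (-1 : ℂ), pow_mul (-1 : ℂ)]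
        push_cast; simp; ring
    · exact h1 i hi
  · intro i; exact h2 i
  · exact ⟨N, by simp; ring⟩
  · exact ⟨N', by simp; ring⟩

lemma main_cone (s : Setup G) (ρ : Representation ℂ G V) (hρ : SchurIrr ρ) {c : ℕ} (ha : 2 ^ c ∣ Module.finrank ℂ V) :
    (fun p => tchar ρ (s.ψ p)) ∈ Cone (QuaternionGroup (2 ^ s.k)) (2 ^ c) := by
  have h := s.a_le ρ hρ ha
  rcases Nat.eq_zero_or_pos c with rfl | hc
  · exact cone_top (ρ.comp s.ψ : Representation ℂ _ V)
  by_cases h1 : c ≤ s.k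
  · obtain ⟨b, rfl⟩ : ∃ b, c = b + 1 := ⟨c - 1, by omega⟩
    exact s.mid_cone ρ hρ (j := s.k - (b + 1)) (by omega) ha
  · obtain rfl | rfl : c = s.k + 1 ∨ c = s.k + 2 := by omega
    · exact s.pen_cone ρ hρ ha
    · exact s.full_cone ρ hρ ha

lemma exists_setup (P : Sylow 2 G) {n : ℕ} (hn : 3 ≤ n) (e : ↥(P : Subgroup G) ≃* QuaternionGroup (2 ^ (n - 2))) :
    ∃ s : Setup G, ∃ h : s.k = n - 2, ∀ x : (P : Subgroup G), s.ψ (h ▸ e x) = x := by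
  have hcP : Nat.card P = 2 ^ (n - 2 + 2) := by
    rw [Nat.card_congr e.toEquiv, Nat.card_eq_fintype_card, QuaternionGroup.card]; ring
  have hodd : Odd (P : Subgroup G).index := by
    rw [← Nat.not_even_iff_odd, even_iff_two_dvd]; exact P.not_dvd_index
  have hcop : (2 ^ (n - 2 + 2)).Coprime (P : Subgroup G).index := Nat.Coprime.pow_left _ (Nat.coprime_two_left.mpr hodd)
  obtain ⟨E, hE1, hE0⟩ := Nat.chineseRemainder hcop 1 0
  obtain ⟨F, hF0, hF1⟩ := Nat.chineseRemainder hcop 0 1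
  refine ⟨{ k := n - 2, hk := by omega, o := (P : Subgroup G).index, ho := hodd
            card := by rw [← hcP, Subgroup.card_mul_index, Nat.card_eq_fintype_card]
            ψ := (P : Subgroup G).subtype.comp e.symm.toMonoidHom
            ψinj := (Subgroup.subtype_injective _).comp e.symm.injective
            emb := ?_, E := E, F := F, E1 := hE1, E0 := (Nat.modEq_zero_iff_dvd).mp hE0
            F0 := (Nat.modEq_zero_iff_dvd).mp hF0, F1 := hF1 }, rfl, ?_⟩
  · intro S hS
    obtain ⟨Q, hQ⟩ := hS.exists_le_sylow
    refine ⟨(e.toMonoidHom.comp (Sylow.equiv Q P).toMonoidHom).comp (Subgroup.inclusion hQ), ?_⟩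
    exact (e.injective.comp (Sylow.equiv Q P).injective).comp (Subgroup.inclusion_injective hQ)
  · intro x
    simp
end Setup
end

theorem strong_form_of_quaternion_sylow
    (G : Type) [Group G] [Fintype G]
    (P : Sylow 2 G)
    (hquaternion : ∃ n : ℕ, 3 ≤ n ∧
      Nonempty (↥(P : Subgroup G) ≃* QuaternionGroup (2 ^ (n - 2)))) :
    ∀ (V : FDRep ℂ G), CategoryTheory.Simple V →
      SumInducedProperty 2 (P : Subgroup G) V.character (Module.finrank ℂ V) := by
  intro V hV
  obtain ⟨n, hn, ⟨e⟩⟩ := hquaternion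
  obtain ⟨s, hk, hs⟩ := Setup.exists_setup P hn e
  have h1 := s.main_cone V.ρ (schur_of_simple V) (Nat.ordProj_dvd (Module.finrank ℂ V) 2)
  have h2 : (fun x : (P : Subgroup G) => tchar V.ρ x) ∈ Cone (P : Subgroup G) (2 ^ ((Module.finrank ℂ V).factorization 2)) := by
    obtain ⟨e', he'⟩ : ∃ e' : ↥(P : Subgroup G) ≃* QuaternionGroup (2 ^ s.k), ∀ x, s.ψ (e' x) = x := by
      clear h1
      generalize n - 2 = t at *
      subst hk
      exact ⟨e, hs⟩
    have := cone_transport e' h1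
    simpa only [he'] using this
  obtain ⟨n, Q, lam, h3, h4, h5⟩ := cone_out h2
  exact ⟨n, Q, lam, h3, h4, h5⟩
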